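/- arXiv:2402.09227 — 2 statements merged into one kernel-verified Lean document; each statement's English description precedes it below -/
import Mathlib

section
/- Let H be a complex Hilbert space with dim H ≥ 3 and let φ : B_s(H) → B_s(H) be a surjective map such that for all A, B, C ∈ B_s(H), A − B ↔_c C if and only if φ(A) − φ(B) ↔_c φ(C). Then there exist a nonzero real scalar c, an operator U on H that is either unitary or antiunitary, and a function g : B_s(H) → ℝ such that φ(A) = c·U A U* + g(A)·I for all A ∈ B_s(H). -/
noncomputable section

variable {H : Type*} [NormedAddCommGroup H] [InnerProductSpace ℂ H] [CompleteSpace H]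

/-- `A ↔_c B`: the self-adjoint operators `A` and `B` commute. -/
def CommC (A B : selfAdjoint (H →L[ℂ] H)) : Prop :=
  (A : H →L[ℂ] H) * (B : H →L[ℂ] H) = (B : H →L[ℂ] H) * (A : H →L[ℂ] H)

/-!
Subtracting `φ 0`, which is scalar, one sees that `φ` preserves commutativity in both directions,
and hence bicommutants. Up to an affine change the operators `x ⊗ x` are characterized by
commutation: those `A` generating a minimal nontrivial bicommutant are, by spectral theory, the
`s • P + r • 1` for a projection `P`, and an exchange property of bicommutants holds exactly when
`P` or `1 - P` has rank one. So `φ (x ⊗ x) = h x • (y x ⊗ y x) + r x • 1` for a map `y` of rays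
preserving orthogonality, and Uhlhorn's theorem (proved in an affine chart, where orthogonality
determines the Gram matrices up to a field automorphism) gives a unitary or antiunitary `U` with
`U x` on the ray of `y x`.

Replacing `φ` by `U⁻¹ φ U`, we may take `y x = x`. For orthogonal `w` and `q`, the operators `w ⊗ w`
and `(w + q) ⊗ (w + q)` have a difference with an eigenvector off the two lines, and comparing
`φ` of the two forces `h (w + q) = h w`; hence `h` is a constant `c`. Finally, given `A` and `x`,
some `w = A x + t x` makes `x` an eigenvector of `A - w ⊗ w`, so `φ A x - c A x` is a
multiple of `x` for every `x`, that is, `φ A - c A` is scalar.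
-/

open scoped InnerProductSpace ComplexConjugate

section Orthogonality

variable {𝕜 E : Type*} [RCLike 𝕜] [NormedAddCommGroup E] [InnerProductSpace 𝕜 E]

lemma exists_ne_zero_orthogonal_pair (h : 3 ≤ Module.rank 𝕜 E) (x z : E) :
    ∃ u : E, u ≠ 0 ∧ ⟪x, u⟫_𝕜 = 0 ∧ ⟪z, u⟫_𝕜 = 0 := by
  let S : Submodule 𝕜 E := Submodule.span 𝕜 {x, z}
  have hS : S ≠ ⊤ := by
    intro hS
    have hrank : Module.rank 𝕜 S ≤ 2 :=
      (rank_span_le _).trans <| Cardinal.mk_insert_le.trans <| by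
        rw [Cardinal.mk_singleton]; norm_num
    rw [hS, rank_top] at hrank
    exact absurd (h.trans hrank) (by norm_num)
  have : FiniteDimensional 𝕜 S := FiniteDimensional.span_of_finite 𝕜 (Set.toFinite _)
  obtain ⟨u, hu, hu0⟩ :=
    Submodule.exists_mem_ne_zero_of_ne_bot fun h => hS (Submodule.orthogonal_eq_bot_iff.1 h)
  exact ⟨u, hu0, hu x (Submodule.subset_span (by simp)), hu z (Submodule.subset_span (by simp))⟩

lemma inner_sub_proj_eq_zero (z w : E) : ⟪z, w - (⟪z, w⟫_𝕜 / ⟪z, z⟫_𝕜) • z⟫_𝕜 = 0 := by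
  rcases eq_or_ne z 0 with rfl | hz
  · exact inner_zero_left _
  rw [inner_sub_right, inner_smul_right, div_mul_cancel₀ _ (inner_self_ne_zero.2 hz), sub_self]

lemma inner_add_add_eq_zero_iff {f a b : E} (hf : ‖f‖ = 1) (ha : ⟪f, a⟫_𝕜 = 0)
    (hb : ⟪f, b⟫_𝕜 = 0) : ⟪f + a, f + b⟫_𝕜 = 0 ↔ ⟪a, b⟫_𝕜 = -1 := by
  rw [inner_add_left, inner_add_right, inner_add_right, hb, inner_eq_zero_symm.1 ha,
    inner_self_eq_one_of_norm_eq_one hf, add_zero, zero_add, add_comm, ← eq_neg_iff_add_eq_zero]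

lemma eq_of_forall_add_orthogonal {α : Type*} {f : E → α}
    (hE : ∀ z : E, ∃ q ≠ 0, ⟪z, q⟫_𝕜 = 0)
    (hf : ∀ z q : E, z ≠ 0 → q ≠ 0 → ⟪z, q⟫_𝕜 = 0 → f (z + q) = f z)
    {z w : E} (hz : z ≠ 0) (hw : w ≠ 0) : f w = f z := by
  have orth {a b : E} (ha : a ≠ 0) (hb : b ≠ 0) (hab : ⟪a, b⟫_𝕜 = 0) : f b = f a := by
    rw [← hf a b ha hb hab, add_comm, hf b a hb ha (inner_eq_zero_symm.1 hab)]
  set q := w - (⟪z, w⟫_𝕜 / ⟪z, z⟫_𝕜) • z with hq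
  have hzq : ⟪z, q⟫_𝕜 = 0 := inner_sub_proj_eq_zero z w
  have hwq : w = q + (⟪z, w⟫_𝕜 / ⟪z, z⟫_𝕜) • z := by rw [hq, sub_add_cancel]
  generalize ⟪z, w⟫_𝕜 / ⟪z, z⟫_𝕜 = a at hwq
  clear_value q
  subst hwq
  by_cases hq0 : q = 0
  · obtain ⟨u, hu, hzu⟩ := hE z
    have hau : ⟪u, q + a • z⟫_𝕜 = 0 := by
      rw [hq0, zero_add, inner_smul_right, inner_eq_zero_symm.1 hzu, mul_zero]
    rw [orth hu hw hau, orth hz hu hzu]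
  · by_cases ha : a • z = 0
    · rw [ha, add_zero, orth hz hq0 hzq]
    · have hqa : ⟪q, a • z⟫_𝕜 = 0 := by
        rw [inner_smul_right, inner_eq_zero_symm.1 hzq, mul_zero]
      rw [hf q _ hq0 ha hqa, orth hz hq0 hzq]

end Orthogonality

section GramRigidity

variable {E F : Type*} [NormedAddCommGroup E] [InnerProductSpace ℂ E]
  [NormedAddCommGroup F] [InnerProductSpace ℂ F]

lemma eq_id_or_eq_starRingEnd_of_map_conj {σ : ℂ →+* ℂ} (hσ : ∀ t, σ (conj t) = conj (σ t)) :
    σ = RingHom.id ℂ ∨ σ = starRingEnd ℂ := by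
  have map_ofReal (r : ℝ) : σ r = r := by
    have him (s : ℝ) : ((σ s).re : ℂ) = σ s := by
      rw [← Complex.conj_eq_iff_re, ← hσ, Complex.conj_ofReal]
    let τ : ℝ →+* ℝ :=
      { toFun s := (σ s).re
        map_one' := by simp
        map_mul' s t := by
          rw [Complex.ofReal_mul, map_mul, ← him s, ← him t, ← Complex.ofReal_mul]
          simp
        map_zero' := by simp
        map_add' s t := by simp }
    rw [← him r]
    exact congrArg Complex.ofReal (RingHom.congr_fun (Subsingleton.elim τ (RingHom.id ℝ)) r)
  rcases Complex.real_algHom_eq_id_or_conj (AlgHom.mk σ map_ofReal) with h | h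
  · exact .inl (RingHom.ext fun t => DFunLike.congr_fun h t)
  · exact .inr (RingHom.ext fun t => DFunLike.congr_fun h t)

section InnerMap

variable {σ : ℂ →+* ℂ} {L : E → F} (hL : ∀ x z, ⟪L x, L z⟫_ℂ = σ ⟪x, z⟫_ℂ)
include hL

lemma map_add_of_inner_map_eq (x z : E) : L (x + z) = L x + L z := by
  rw [← sub_eq_zero, ← inner_self_eq_zero (𝕜 := ℂ)]
  simp only [inner_sub_left, inner_sub_right, inner_add_left, inner_add_right, hL, map_add]
  ring

lemma map_smul_of_inner_map_eq (hσ : ∀ t, σ (conj t) = conj (σ t)) (c : ℂ) (x : E) :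
    L (c • x) = σ c • L x := by
  rw [← sub_eq_zero, ← inner_self_eq_zero (𝕜 := ℂ)]
  simp only [inner_sub_left, inner_sub_right, inner_smul_left, inner_smul_right, hL, map_mul, hσ]
  ring

lemma exists_linearIsometryEquiv_of_inner_map_eq {σ' : ℂ →+* ℂ} [RingHomInvPair σ σ']
    [RingHomInvPair σ' σ] [RingHomIsometric σ] (hσ : ∀ t, σ (conj t) = conj (σ t))
    (hL_surj : Function.Surjective L) : ∃ U : E ≃ₛₗᵢ[σ] F, ⇑U = L := by
  let f : E →ₛₗᵢ[σ] F :=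
    { toFun := L
      map_add' := map_add_of_inner_map_eq hL
      map_smul' := map_smul_of_inner_map_eq hL hσ
      norm_map' x := by
        have h : ‖⟪L x, L x⟫_ℂ‖ = ‖⟪x, x⟫_ℂ‖ := by rw [hL, RingHomIsometric.norm_map]
        rwa [inner_self_eq_norm_sq_to_K, inner_self_eq_norm_sq_to_K, norm_pow, norm_pow,
          RCLike.norm_ofReal, RCLike.norm_ofReal, abs_norm, abs_norm,
          sq_eq_sq₀ (norm_nonneg _) (norm_nonneg _)] at h }
  exact ⟨LinearIsometryEquiv.ofSurjective f hL_surj, rfl⟩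

end InnerMap

/-- The conditions on the Gram matrices of `V : E → F` that hold when `x ↦ f + V x`, for a unit
vector `f` orthogonal to the values of `V`, represents an orthogonality preserving map of rays in
an affine chart. -/
structure IsChartMap (V : E → F) : Prop where
  inner_eq_zero_iff {x z : E} : ⟪V x, V z⟫_ℂ = 0 ↔ ⟪x, z⟫_ℂ = 0
  inner_eq_neg_one_iff {x z : E} : ⟪V x, V z⟫_ℂ = -1 ↔ ⟪x, z⟫_ℂ = -1
  exists_map_smul_eq (c : ℂ) (x : E) : ∃ a : ℂ, V (c • x) = a • V x
  exists_map_add_eq (x z : E) : ∃ a b : ℂ, V (x + z) = a • V x + b • V z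

namespace IsChartMap

variable {V : E → F} (hV : IsChartMap V)
include hV

lemma inner_map_right_congr {x z w : E} (h : ⟪x, z⟫_ℂ = ⟪x, w⟫_ℂ) :
    ⟪V x, V z⟫_ℂ = ⟪V x, V w⟫_ℂ := by
  by_cases h0 : ⟪x, z⟫_ℂ = 0
  · rw [hV.inner_eq_zero_iff.2 h0, hV.inner_eq_zero_iff.2 (h ▸ h0)]
  obtain ⟨a, ha⟩ := hV.exists_map_smul_eq (conj (-(⟪x, z⟫_ℂ)⁻¹)) x
  have inner_eq {v : E} (hv : ⟪x, v⟫_ℂ = ⟪x, z⟫_ℂ) : conj a * ⟪V x, V v⟫_ℂ = -1 := by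
    rw [← inner_smul_left, ← ha, hV.inner_eq_neg_one_iff, inner_smul_left, Complex.conj_conj, hv,
      neg_mul, inv_mul_cancel₀ h0]
  have hz := inner_eq rfl
  have ha0 : conj a ≠ 0 := by
    intro ha0
    rw [ha0, zero_mul] at hz
    exact absurd hz (by norm_num)
  exact mul_left_cancel₀ ha0 (hz.trans (inner_eq h.symm).symm)

lemma inner_map_left_congr {x z w : E} (h : ⟪z, x⟫_ℂ = ⟪w, x⟫_ℂ) :
    ⟪V z, V x⟫_ℂ = ⟪V w, V x⟫_ℂ := by
  rw [← inner_conj_symm, ← inner_conj_symm (V w)]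
  exact congrArg conj (hV.inner_map_right_congr (by rw [← inner_conj_symm, h, inner_conj_symm]))

lemma inner_map_eq (hE : ∀ z : E, ∃ q ≠ 0, ⟪z, q⟫_ℂ = 0) {u : E} (hu : ‖u‖ = 1) (x z : E) :
    ⟪V x, V z⟫_ℂ = ⟪V u, V (⟪x, z⟫_ℂ • u)⟫_ℂ := by
  rcases eq_or_ne x 0 with rfl | hx
  · rw [hV.inner_eq_zero_iff.2 (inner_zero_left z), inner_zero_left, zero_smul,
      hV.inner_eq_zero_iff.2 (inner_zero_right u)]
  have hu0 : u ≠ 0 := norm_ne_zero_iff.1 (hu ▸ one_ne_zero)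
  generalize ht : ⟪x, z⟫_ℂ = t
  let g : E → ℂ := fun w => ⟪V w, V ((t / ⟪w, w⟫_ℂ) • w)⟫_ℂ
  have inner_g {w : E} (hw : w ≠ 0) : ⟪w, (t / ⟪w, w⟫_ℂ) • w⟫_ℂ = t := by
    rw [inner_smul_right, div_mul_cancel₀ _ (inner_self_ne_zero.2 hw)]
  have hg (w q : E) (hw : w ≠ 0) (_ : q ≠ 0) (hwq : ⟪w, q⟫_ℂ = 0) : g (w + q) = g w := by
    have hwq0 : w + q ≠ 0 := by
      intro h
      rw [← neg_eq_of_add_eq_zero_right h, inner_neg_right, neg_eq_zero, inner_self_eq_zero] at hwq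
      exact hw hwq
    have hinner : ⟪w + q, (t / ⟪w, w⟫_ℂ) • w⟫_ℂ = t := by
      rw [inner_add_left, inner_g hw, inner_smul_right, inner_eq_zero_symm.1 hwq, mul_zero,
        add_zero]
    calc g (w + q) = ⟪V (w + q), V ((t / ⟪w, w⟫_ℂ) • w)⟫_ℂ :=
          hV.inner_map_right_congr ((inner_g hwq0).trans hinner.symm)
      _ = g w := hV.inner_map_left_congr (hinner.trans (inner_g hw).symm)
  calc ⟪V x, V z⟫_ℂ = g x := hV.inner_map_right_congr (ht.trans (inner_g hx).symm)
    _ = g u := eq_of_forall_add_orthogonal hE hg hu0 hx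
    _ = ⟪V u, V (t • u)⟫_ℂ := by
      simp only [g, inner_self_eq_one_of_norm_eq_one hu, div_one]

section Gram

variable {G : ℂ → ℂ} (hG : ∀ x z, ⟪V x, V z⟫_ℂ = G ⟪x, z⟫_ℂ) {u v : E}
include hG

omit hV in
lemma gram_conj (hu : ‖u‖ = 1) (t : ℂ) : G (conj t) = conj (G t) := by
  have ht : t = ⟪u, t • u⟫_ℂ := by
    rw [inner_smul_right, inner_self_eq_one_of_norm_eq_one hu, mul_one]
  rw [ht, inner_conj_symm, ← hG, ← hG, inner_conj_symm]

lemma gram_one_mul (hu : ‖u‖ = 1) (s t : ℂ) : G 1 * G (s * t) = G s * G t := by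
  have huu : ⟪u, u⟫_ℂ = 1 := inner_self_eq_one_of_norm_eq_one hu
  obtain ⟨a, ha⟩ := hV.exists_map_smul_eq (conj s) u
  obtain ⟨b, hb⟩ := hV.exists_map_smul_eq t u
  have hs : conj a * G 1 = G s := by
    rw [← huu, ← hG, ← inner_smul_left, ← ha, hG, inner_smul_left, Complex.conj_conj, huu, mul_one]
  have ht : b * G 1 = G t := by
    rw [← huu, ← hG, ← inner_smul_right, ← hb, hG, inner_smul_right, huu, mul_one]
  have hst : conj a * (b * G 1) = G (s * t) := by
    rw [← huu, ← hG, ← inner_smul_right, ← inner_smul_left, ← ha, ← hb, hG, inner_smul_left,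
      inner_smul_right, Complex.conj_conj, huu, mul_one]
  rw [← hs, ← ht, ← hst]
  ring

lemma gram_one (hu : ‖u‖ = 1) : G 1 = 1 := by
  have huu : ⟪u, u⟫_ℂ = 1 := inner_self_eq_one_of_norm_eq_one hu
  have hneg : G (-1) = -1 := by
    have h := hG u (-u)
    rw [hV.inner_eq_neg_one_iff.2 (by rw [inner_neg_right, huu]), inner_neg_right, huu] at h
    exact h.symm
  have hsq : G 1 * G 1 = 1 := by simpa [hneg] using hV.gram_one_mul hG hu (-1) (-1)
  refine (mul_self_eq_one_iff.1 hsq).resolve_right fun h => ?_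
  have h' : ⟪V u, V u⟫_ℂ = -1 := by rw [hG, huu, h]
  rw [hV.inner_eq_neg_one_iff, huu] at h'
  norm_num at h'

lemma gram_add (hu : ‖u‖ = 1) (hv : ‖v‖ = 1) (huv : ⟪u, v⟫_ℂ = 0) (s t : ℂ) :
    G (s + t) = G s + G t := by
  have hvu : ⟪v, u⟫_ℂ = 0 := inner_eq_zero_symm.1 huv
  have huu : ⟪u, u⟫_ℂ = 1 := inner_self_eq_one_of_norm_eq_one hu
  have hvv : ⟪v, v⟫_ℂ = 1 := inner_self_eq_one_of_norm_eq_one hv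
  have hVuu : ⟪V u, V u⟫_ℂ = 1 := by rw [hG, huu, hV.gram_one hG hu]
  have hVvv : ⟪V v, V v⟫_ℂ = 1 := by rw [hG, hvv, hV.gram_one hG hu]
  have hVuv : ⟪V u, V v⟫_ℂ = 0 := hV.inner_eq_zero_iff.2 huv
  have hVvu : ⟪V v, V u⟫_ℂ = 0 := hV.inner_eq_zero_iff.2 hvu
  have map_comb (a b : ℂ) : V (a • u + b • v) = G a • V u + G b • V v := by
    obtain ⟨c, d, hcd⟩ := hV.exists_map_add_eq (a • u) (b • v)
    obtain ⟨a', ha'⟩ := hV.exists_map_smul_eq a u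
    obtain ⟨b', hb'⟩ := hV.exists_map_smul_eq b v
    rw [ha', hb', smul_smul, smul_smul] at hcd
    have ha : c * a' = G a := by
      have h := hG u (a • u + b • v)
      simpa [-inner_self_eq_norm_sq_to_K, hcd, inner_add_right, inner_smul_right, huu, huv, hVuu,
        hVuv] using h
    have hb : d * b' = G b := by
      have h := hG v (a • u + b • v)
      simpa [-inner_self_eq_norm_sq_to_K, hcd, inner_add_right, inner_smul_right, hvv, hvu, hVvv,
        hVvu] using h
    rw [hcd, ha, hb]
  have h := hG ((1 : ℂ) • u + (1 : ℂ) • v) (s • u + t • v)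
  rw [map_comb, map_comb, hV.gram_one hG hu] at h
  simpa [-inner_self_eq_norm_sq_to_K, inner_add_left, inner_add_right, inner_smul_left,
    inner_smul_right, huu, hvv, huv, hvu, hVuu, hVvv, hVuv, hVvu] using h.symm

end Gram

lemma exists_ringHom_inner_map_eq (hE : ∀ z : E, ∃ q ≠ 0, ⟪z, q⟫_ℂ = 0) :
    ∃ σ : ℂ →+* ℂ, (∀ t, σ (conj t) = conj (σ t)) ∧ ∀ x z, ⟪V x, V z⟫_ℂ = σ ⟪x, z⟫_ℂ := by
  have exists_unit (z : E) : ∃ q : E, ‖q‖ = 1 ∧ ⟪z, q⟫_ℂ = 0 := by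
    obtain ⟨q, hq, hzq⟩ := hE z
    exact ⟨(‖q‖⁻¹ : ℂ) • q, norm_smul_inv_norm hq, by rw [inner_smul_right, hzq, mul_zero]⟩
  obtain ⟨u, hu, -⟩ := exists_unit 0
  obtain ⟨v, hv, huv⟩ := exists_unit u
  let G : ℂ → ℂ := fun t => ⟪V u, V (t • u)⟫_ℂ
  have hG (x z : E) : ⟪V x, V z⟫_ℂ = G ⟪x, z⟫_ℂ := hV.inner_map_eq hE hu x z
  have G_one : G 1 = 1 := hV.gram_one hG hu
  let σ : ℂ →+* ℂ :=
    { toFun := G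
      map_one' := G_one
      map_mul' s t := by rw [← hV.gram_one_mul hG hu, G_one, one_mul]
      map_zero' := hV.inner_eq_zero_iff.2 (by rw [zero_smul, inner_zero_right])
      map_add' := hV.gram_add hG hu hv huv }
  exact ⟨σ, gram_conj hG hu, hG⟩

end IsChartMap

end GramRigidity

section OrthoRayMap

variable {E F : Type*} [NormedAddCommGroup E] [InnerProductSpace ℂ E]
  [NormedAddCommGroup F] [InnerProductSpace ℂ F]

lemma mem_span_iff_forall_inner_eq_zero {s : Set E} (hs : s.Finite) {x : E} :
    x ∈ Submodule.span ℂ s ↔ ∀ u, (∀ a ∈ s, ⟪a, u⟫_ℂ = 0) → ⟪u, x⟫_ℂ = 0 := by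
  have : FiniteDimensional ℂ (Submodule.span ℂ s) := FiniteDimensional.span_of_finite ℂ hs
  have mem_orthogonal_span (u : E) : u ∈ (Submodule.span ℂ s)ᗮ ↔ ∀ a ∈ s, ⟪a, u⟫_ℂ = 0 := by
    rw [Submodule.mem_orthogonal]
    refine ⟨fun h a ha => h a (Submodule.subset_span ha), fun h a ha => ?_⟩
    induction ha using Submodule.span_induction with
    | mem a ha => exact h a ha
    | zero => exact inner_zero_left u
    | add a b _ _ ha hb => rw [inner_add_left, ha, hb, add_zero]
    | smul c a _ ha => rw [inner_smul_left, ha, mul_zero]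
  rw [← Submodule.orthogonal_orthogonal (Submodule.span ℂ s), Submodule.mem_orthogonal]
  simp only [mem_orthogonal_span]

/-- A map `y` between inner product spaces that preserves norms and orthogonality in both
directions and hits every ray; phases are left unconstrained, so `y` represents a bijection
between projective spaces as in Uhlhorn's theorem. -/
structure IsOrthoRayMap (y : E → F) : Prop where
  norm_map (x : E) : ‖y x‖ = ‖x‖
  inner_eq_zero_iff {x z : E} : ⟪y x, y z⟫_ℂ = 0 ↔ ⟪x, z⟫_ℂ = 0
  exists_eq_smul (n : F) : ∃ x, ∃ b : ℂ, n = b • y x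

/-- The affine chart of a map of rays `y` at `e`: the vector `n` orthogonal to `y e` for which
`y e + n` lies on the ray of `y (e + x)`, where `x` is orthogonal to `e`. -/
def rayChart (y : E → F) (e x : E) : F := (⟪y e, y (e + x)⟫_ℂ)⁻¹ • y (e + x) - y e

namespace IsOrthoRayMap

variable {y : E → F} (hy : IsOrthoRayMap y)
include hy

lemma map_eq_zero_iff {x : E} : y x = 0 ↔ x = 0 := by
  rw [← norm_eq_zero, hy.norm_map, norm_eq_zero]

lemma map_mem_span_image_iff {s : Set E} (hs : s.Finite) {x : E} :
    y x ∈ Submodule.span ℂ (y '' s) ↔ x ∈ Submodule.span ℂ s := by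
  rw [mem_span_iff_forall_inner_eq_zero hs, mem_span_iff_forall_inner_eq_zero (hs.image y)]
  simp only [Set.forall_mem_image]
  refine ⟨fun h u hu => ?_, fun h n hn => ?_⟩
  · rw [← hy.inner_eq_zero_iff]
    exact h _ fun a ha => hy.inner_eq_zero_iff.2 (hu a ha)
  · obtain ⟨u, b, rfl⟩ := hy.exists_eq_smul n
    rcases eq_or_ne b 0 with rfl | hb
    · rw [zero_smul, inner_zero_left]
    rw [inner_smul_left, hy.inner_eq_zero_iff.2 (h u fun a ha => ?_), mul_zero]
    have hau := hn ha
    rw [inner_smul_right] at hau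
    exact hy.inner_eq_zero_iff.1 ((mul_eq_zero.1 hau).resolve_left hb)

lemma map_mem_span_singleton_iff {x z : E} : y x ∈ ℂ ∙ y z ↔ x ∈ ℂ ∙ z := by
  simpa only [Set.image_singleton] using hy.map_mem_span_image_iff (s := {z}) (Set.toFinite _)

lemma map_mem_span_pair_iff {x z w : E} :
    y x ∈ Submodule.span ℂ {y z, y w} ↔ x ∈ Submodule.span ℂ {z, w} := by
  simpa only [Set.image_pair] using hy.map_mem_span_image_iff (s := {z, w}) (Set.toFinite _)

section Chart

variable {e : E} (he : ‖e‖ = 1)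
include he

lemma inner_map_add_ne_zero {x : E} (hx : ⟪e, x⟫_ℂ = 0) : ⟪y e, y (e + x)⟫_ℂ ≠ 0 := by
  rw [Ne, hy.inner_eq_zero_iff, inner_add_right, hx, inner_self_eq_one_of_norm_eq_one he, add_zero]
  exact one_ne_zero

lemma inner_rayChart {x : E} (hx : ⟪e, x⟫_ℂ = 0) : ⟪y e, rayChart y e x⟫_ℂ = 0 := by
  rw [rayChart, inner_sub_right, inner_smul_right,
    inv_mul_cancel₀ (hy.inner_map_add_ne_zero he hx),
    inner_self_eq_one_of_norm_eq_one ((hy.norm_map e).trans he), sub_self]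

lemma inner_rayChart_eq_neg_one_iff {x z : E} (hx : ⟪e, x⟫_ℂ = 0) (hz : ⟪e, z⟫_ℂ = 0) :
    ⟪rayChart y e x, rayChart y e z⟫_ℂ = -1 ↔ ⟪x, z⟫_ℂ = -1 := by
  rw [← inner_add_add_eq_zero_iff he hx hz, ← inner_add_add_eq_zero_iff ((hy.norm_map e).trans he)
    (hy.inner_rayChart he hx) (hy.inner_rayChart he hz), ← hy.inner_eq_zero_iff, rayChart, rayChart,
    add_sub_cancel, add_sub_cancel, inner_smul_left, inner_smul_right, mul_eq_zero, mul_eq_zero,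
    map_eq_zero, inv_eq_zero, inv_eq_zero]
  simp only [hy.inner_map_add_ne_zero he hx, hy.inner_map_add_ne_zero he hz, false_or]

lemma rayChart_eq_zero_iff {x : E} (hx : ⟪e, x⟫_ℂ = 0) : rayChart y e x = 0 ↔ x = 0 := by
  refine ⟨fun h => ?_, ?_⟩
  · have hmem : y (e + x) ∈ ℂ ∙ y e := by
      rw [← Submodule.smul_mem_iff _ (inv_ne_zero (hy.inner_map_add_ne_zero he hx)),
        sub_eq_zero.1 h]
      exact Submodule.mem_span_singleton_self _
    rw [hy.map_mem_span_singleton_iff, Submodule.add_mem_iff_right _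
      (Submodule.mem_span_singleton_self e), Submodule.mem_span_singleton] at hmem
    obtain ⟨c, rfl⟩ := hmem
    rw [inner_smul_right, inner_self_eq_one_of_norm_eq_one he, mul_one] at hx
    rw [hx, zero_smul]
  · rintro rfl
    rw [rayChart, add_zero, inner_self_eq_one_of_norm_eq_one ((hy.norm_map e).trans he), inv_one,
      one_smul, sub_self]

lemma exists_rayChart_eq_smul {x : E} (hx : ⟪e, x⟫_ℂ = 0) :
    ∃ a : ℂ, a ≠ 0 ∧ rayChart y e x = a • y x := by
  rcases eq_or_ne x 0 with rfl | hx0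
  · exact ⟨1, one_ne_zero, by
      rw [(hy.rayChart_eq_zero_iff he hx).2 rfl, hy.map_eq_zero_iff.2 rfl, smul_zero]⟩
  have hV : rayChart y e x ≠ 0 := (hy.rayChart_eq_zero_iff he hx).not.2 hx0
  obtain ⟨w, c, hw⟩ := hy.exists_eq_smul (rayChart y e x)
  have hc : c ≠ 0 := by
    rintro rfl
    exact hV (hw.trans (zero_smul ℂ _))
  have hwe : ⟪e, w⟫_ℂ = 0 := by
    have h := hy.inner_rayChart he hx
    rw [hw, inner_smul_right] at h
    exact hy.inner_eq_zero_iff.1 ((mul_eq_zero.1 h).resolve_left hc)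
  have hw_pair : w ∈ Submodule.span ℂ {e, e + x} := by
    rw [← hy.map_mem_span_pair_iff, ← Submodule.smul_mem_iff _ hc, ← hw]
    exact sub_mem (Submodule.smul_mem _ _ (Submodule.subset_span (by simp)))
      (Submodule.subset_span (by simp))
  have hwx : w ∈ ℂ ∙ x := by
    obtain ⟨p, q, rfl⟩ := Submodule.mem_span_pair.1 hw_pair
    rw [inner_add_right, inner_smul_right, inner_smul_right, inner_add_right, hx,
      inner_self_eq_one_of_norm_eq_one he, mul_one, add_zero, mul_one] at hwe
    rw [smul_add, ← add_assoc, ← add_smul, hwe, zero_smul, zero_add]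
    exact Submodule.smul_mem _ _ (Submodule.mem_span_singleton_self x)
  obtain ⟨b, hb⟩ := Submodule.mem_span_singleton.1 (hy.map_mem_span_singleton_iff.2 hwx)
  rw [← hb, smul_smul] at hw
  exact ⟨c * b, fun h => hV (by rw [hw, h, zero_smul]), hw⟩

lemma span_singleton_rayChart {x : E} (hx : ⟪e, x⟫_ℂ = 0) : ℂ ∙ rayChart y e x = ℂ ∙ y x := by
  obtain ⟨a, ha, hax⟩ := hy.exists_rayChart_eq_smul he hx
  rw [hax, Submodule.span_singleton_smul_eq ha.isUnit]

lemma inner_rayChart_eq_zero_iff {x z : E} (hx : ⟪e, x⟫_ℂ = 0) (hz : ⟪e, z⟫_ℂ = 0) :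
    ⟪rayChart y e x, rayChart y e z⟫_ℂ = 0 ↔ ⟪x, z⟫_ℂ = 0 := by
  obtain ⟨a, ha, hax⟩ := hy.exists_rayChart_eq_smul he hx
  obtain ⟨b, hb, hbz⟩ := hy.exists_rayChart_eq_smul he hz
  rw [hax, hbz, inner_smul_left, inner_smul_right, mul_eq_zero, mul_eq_zero, map_eq_zero]
  simp only [ha, hb, false_or, hy.inner_eq_zero_iff]

lemma isChartMap_rayChart : IsChartMap fun x : (ℂ ∙ e)ᗮ => rayChart y e x := by
  have orth (x : (ℂ ∙ e)ᗮ) : ⟪e, (x : E)⟫_ℂ = 0 :=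
    Submodule.mem_orthogonal_singleton_iff_inner_right.1 x.2
  refine ⟨hy.inner_rayChart_eq_zero_iff he (orth _) (orth _),
    hy.inner_rayChart_eq_neg_one_iff he (orth _) (orth _), fun c x => ?_, fun x z => ?_⟩
  · have h : rayChart y e (c • x : (ℂ ∙ e)ᗮ) ∈ ℂ ∙ rayChart y e x := by
      rw [← Submodule.span_singleton_le_iff_mem, hy.span_singleton_rayChart he (orth _),
        hy.span_singleton_rayChart he (orth _), Submodule.span_singleton_le_iff_mem,
        hy.map_mem_span_singleton_iff]
      exact Submodule.smul_mem _ _ (Submodule.mem_span_singleton_self _)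
    obtain ⟨a, ha⟩ := Submodule.mem_span_singleton.1 h
    exact ⟨a, ha.symm⟩
  · have h : rayChart y e (x + z : (ℂ ∙ e)ᗮ) ∈
        Submodule.span ℂ {rayChart y e x, rayChart y e z} := by
      rw [← Submodule.span_singleton_le_iff_mem, Submodule.span_insert,
        hy.span_singleton_rayChart he (orth _), hy.span_singleton_rayChart he (orth _),
        hy.span_singleton_rayChart he (orth _), ← Submodule.span_insert,
        Submodule.span_singleton_le_iff_mem, hy.map_mem_span_pair_iff]
      exact add_mem (Submodule.subset_span (by simp)) (Submodule.subset_span (by simp))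
    obtain ⟨a, b, hab⟩ := Submodule.mem_span_pair.1 h
    exact ⟨a, b, hab.symm⟩

lemma exists_ringHom_inner_rayChart_eq (hdim : 3 ≤ Module.rank ℂ E) :
    ∃ σ : ℂ →+* ℂ, (∀ t, σ (conj t) = conj (σ t)) ∧ ∀ x z, ⟪e, x⟫_ℂ = 0 → ⟪e, z⟫_ℂ = 0 →
      ⟪rayChart y e x, rayChart y e z⟫_ℂ = σ ⟪x, z⟫_ℂ := by
  obtain ⟨σ, hσ, h⟩ := (hy.isChartMap_rayChart he).exists_ringHom_inner_map_eq fun z => by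
    obtain ⟨q, hq, heq, hzq⟩ := exists_ne_zero_orthogonal_pair hdim e (z : E)
    exact ⟨⟨q, Submodule.mem_orthogonal_singleton_iff_inner_right.2 heq⟩,
      fun h => hq (congrArg Subtype.val h), hzq⟩
  exact ⟨σ, hσ, fun x z hx hz => h ⟨x, Submodule.mem_orthogonal_singleton_iff_inner_right.2 hx⟩
    ⟨z, Submodule.mem_orthogonal_singleton_iff_inner_right.2 hz⟩⟩

end Chart

lemma exists_ringHom_inner_map_eq (hdim : 3 ≤ Module.rank ℂ E) :
    ∃ σ : ℂ →+* ℂ, (∀ t, σ (conj t) = conj (σ t)) ∧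
      ∃ L : E → F, (∀ x z, ⟪L x, L z⟫_ℂ = σ ⟪x, z⟫_ℂ) ∧ ∀ x, L x ∈ ℂ ∙ y x := by
  obtain ⟨e₀, he₀, -⟩ := exists_ne_zero_orthogonal_pair hdim 0 0
  let e : E := (‖e₀‖⁻¹ : ℂ) • e₀
  have he : ‖e‖ = 1 := norm_smul_inv_norm he₀
  have hee : ⟪e, e⟫_ℂ = 1 := inner_self_eq_one_of_norm_eq_one he
  have hye : ⟪y e, y e⟫_ℂ = 1 := inner_self_eq_one_of_norm_eq_one ((hy.norm_map e).trans he)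
  obtain ⟨σ, hσ, hV⟩ := hy.exists_ringHom_inner_rayChart_eq he hdim
  let p (x : E) : E := x - ⟪e, x⟫_ℂ • e
  have hp (x : E) : ⟪e, p x⟫_ℂ = 0 := by
    rw [inner_sub_right, inner_smul_right, hee, mul_one, sub_self]
  let L (x : E) : F := σ ⟪e, x⟫_ℂ • y e + rayChart y e (p x)
  have hL (x z : E) : ⟪L x, L z⟫_ℂ = σ ⟪x, z⟫_ℂ := by
    have hxz : ⟪x, z⟫_ℂ = conj ⟪e, x⟫_ℂ * ⟪e, z⟫_ℂ + ⟪p x, p z⟫_ℂ := by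
      simp only [p, inner_sub_left, inner_sub_right, inner_smul_left, inner_smul_right, hee,
        inner_conj_symm]
      ring
    have hVe (v : E) : ⟪rayChart y e (p v), y e⟫_ℂ = 0 :=
      inner_eq_zero_symm.1 (hy.inner_rayChart he (hp v))
    simp only [L, inner_add_left, inner_add_right, inner_smul_left, inner_smul_right, hye, hVe,
      hy.inner_rayChart he (hp _), hV _ _ (hp x) (hp z), hxz, map_add, map_mul, hσ]
    ring
  refine ⟨σ, hσ, L, hL, fun x => ?_⟩
  by_cases hex : ⟪e, x⟫_ℂ = 0
  · have hLx : L x = rayChart y e x := by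
      simp only [L, p, hex, map_zero, zero_smul, zero_add, sub_zero]
    rw [hLx, ← hy.span_singleton_rayChart he hex]
    exact Submodule.mem_span_singleton_self _
  · let x₁ := (⟪e, x⟫_ℂ)⁻¹ • x
    have hex₁ : ⟪e, x₁⟫_ℂ = 1 := by rw [inner_smul_right, inv_mul_cancel₀ hex]
    have hLx₁ : L x₁ = (⟪y e, y x₁⟫_ℂ)⁻¹ • y x₁ := by
      simp only [L, p, hex₁, map_one, one_smul, rayChart, add_sub_cancel]
    have hLx : L x = σ ⟪e, x⟫_ℂ • L x₁ := by
      rw [← map_smul_of_inner_map_eq hL hσ, smul_inv_smul₀ hex]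
    have hyx₁ : y x₁ ∈ ℂ ∙ y x := hy.map_mem_span_singleton_iff.2 <|
      Submodule.smul_mem _ _ (Submodule.mem_span_singleton_self x)
    rw [hLx, hLx₁]
    exact Submodule.smul_mem _ _ (Submodule.smul_mem _ _ hyx₁)

theorem exists_linearIsometryEquiv (hdim : 3 ≤ Module.rank ℂ E) :
    (∃ U : E ≃ₗᵢ[ℂ] F, ∀ x, U x ∈ ℂ ∙ y x) ∨ ∃ U : E ≃ₗᵢ⋆[ℂ] F, ∀ x, U x ∈ ℂ ∙ y x := by
  obtain ⟨σ, hσ, L, hL, hLy⟩ := hy.exists_ringHom_inner_map_eq hdim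
  have hL_surj (hσ_surj : Function.Surjective σ) : Function.Surjective L := fun n => by
    obtain ⟨x, b, rfl⟩ := hy.exists_eq_smul n
    obtain ⟨a, ha⟩ := Submodule.mem_span_singleton.1 (hLy x)
    rcases eq_or_ne x 0 with rfl | hx
    · exact ⟨0, by rw [← ha, hy.map_eq_zero_iff.2 rfl, smul_zero, smul_zero]⟩
    have ha0 : a ≠ 0 := by
      rintro rfl
      have h := hL x x
      rw [← ha, zero_smul, inner_zero_left, eq_comm, map_eq_zero, inner_self_eq_zero] at h
      exact hx h
    obtain ⟨t, ht⟩ := hσ_surj (b / a)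
    refine ⟨t • x, ?_⟩
    rw [map_smul_of_inner_map_eq hL hσ, ht, ← ha, smul_smul, div_mul_cancel₀ _ ha0]
  rcases eq_id_or_eq_starRingEnd_of_map_conj hσ with rfl | rfl
  · obtain ⟨U, rfl⟩ :=
      exists_linearIsometryEquiv_of_inner_map_eq hL hσ (hL_surj (RingHom.surjective _))
    exact .inl ⟨U, hLy⟩
  · obtain ⟨U, rfl⟩ :=
      exists_linearIsometryEquiv_of_inner_map_eq hL hσ (hL_surj (RingHom.surjective _))
    exact .inr ⟨U, hLy⟩

end IsOrthoRayMap

end OrthoRayMap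

local notation "𝓑ₛ(" E ")" => selfAdjoint (E →L[ℂ] E)

-- A shortcut without which the search for scalar actions on `𝓑ₛ(H)` times out.
instance instModuleRealSelfAdjoint : Module ℝ 𝓑ₛ(H) := inferInstance

section Commutation

lemma commC_iff {A B : 𝓑ₛ(H)} : CommC A B ↔ ∀ v, A.1 (B.1 v) = B.1 (A.1 v) :=
  ContinuousLinearMap.ext_iff

lemma commC_comm {A B : 𝓑ₛ(H)} : CommC A B ↔ CommC B A := eq_comm

lemma selfAdjoint_inner_left (A : 𝓑ₛ(H)) (v w : H) : ⟪A.1 v, w⟫_ℂ = ⟪v, A.1 w⟫_ℂ :=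
  A.2.isSymmetric v w

omit [CompleteSpace H] in
lemma inner_self_eq_ofReal (x : H) : ⟪x, x⟫_ℂ = (‖x‖ ^ 2 : ℝ) := by
  rw [inner_self_eq_norm_sq_to_K]; norm_cast

/-- The self-adjoint operator `x ⊗ x : v ↦ ⟪x, v⟫ x`. -/
def rankOneSA (x : H) : 𝓑ₛ(H) :=
  ⟨InnerProductSpace.rankOne ℂ x x, InnerProductSpace.adjoint_rankOne x x⟩

@[simp]
lemma rankOneSA_apply (x v : H) : (rankOneSA x).1 v = ⟪x, v⟫_ℂ • x := rfl

@[simp]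
lemma rankOneSA_zero : rankOneSA (0 : H) = 0 := by ext v; simp

lemma exists_rankOneSA_apply_self (x : H) : ∃ l : ℝ, (rankOneSA x).1 x = l • x :=
  ⟨‖x‖ ^ 2, by rw [rankOneSA_apply, inner_self_eq_ofReal, Complex.coe_smul]⟩

lemma rankOneSA_smul (c : ℂ) (x : H) : rankOneSA (c • x) = (‖c‖ ^ 2) • rankOneSA x := by
  ext v
  change ⟪c • x, v⟫_ℂ • c • x = (‖c‖ ^ 2) • ⟪x, v⟫_ℂ • x
  rw [inner_smul_left, ← Complex.coe_smul, smul_smul, smul_smul, Complex.ofReal_pow,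
    ← Complex.conj_mul']
  congr 1
  ring

lemma ofReal_re_inner_apply_self (A : 𝓑ₛ(H)) (x : H) :
    ((⟪x, A.1 x⟫_ℂ).re : ℂ) = ⟪x, A.1 x⟫_ℂ := by
  rw [← Complex.conj_eq_iff_re, inner_conj_symm, selfAdjoint_inner_left]

lemma commC_rankOneSA_iff {A : 𝓑ₛ(H)} {x : H} :
    CommC A (rankOneSA x) ↔ ∃ l : ℝ, A.1 x = l • x := by
  rcases eq_or_ne x 0 with rfl | hx
  · simp [commC_iff]
  constructor
  · intro h
    have hx' : ⟪x, x⟫_ℂ ≠ 0 := inner_self_ne_zero.2 hx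
    have hAx : A.1 x = (⟪x, A.1 x⟫_ℂ / ⟪x, x⟫_ℂ) • x := by
      have := commC_iff.1 h x
      simp only [rankOneSA_apply, map_smul] at this
      rw [div_eq_inv_mul, mul_smul, ← this, inv_smul_smul₀ hx']
    refine ⟨(⟪x, A.1 x⟫_ℂ).re / ‖x‖ ^ 2, ?_⟩
    rw [← Complex.coe_smul, Complex.ofReal_div, ofReal_re_inner_apply_self, ← inner_self_eq_ofReal]
    exact hAx
  · rintro ⟨l, hl⟩
    refine commC_iff.2 fun v => ?_
    rw [← Complex.coe_smul] at hl
    simp only [rankOneSA_apply, map_smul, hl]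
    rw [← selfAdjoint_inner_left, hl, inner_smul_left, Complex.conj_ofReal, smul_smul, mul_comm]

lemma commC_smul_add_smul_one_iff {A B : 𝓑ₛ(H)} {α β : ℝ} (hα : α ≠ 0) :
    CommC (α • A + β • (1 : 𝓑ₛ(H))) B ↔ CommC A B := by
  simp only [commC_iff]
  refine forall_congr' fun v => ?_
  change α • A.1 (B.1 v) + β • B.1 v = B.1 (α • A.1 v + β • v) ↔ _
  rw [map_add, ContinuousLinearMap.map_smul_of_tower, ContinuousLinearMap.map_smul_of_tower,
    add_left_inj, smul_right_inj hα]

/-- The operator `A` acts on `E` as multiplication by a real scalar. -/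
def IsScalarOn (A : 𝓑ₛ(H)) (E : Submodule ℂ H) : Prop :=
  ∃ μ : ℝ, ∀ w ∈ E, A.1 w = μ • w

lemma isScalarOn_of_forall_exists {A : 𝓑ₛ(H)} {E : Submodule ℂ H}
    (h : ∀ w ∈ E, ∃ l : ℝ, A.1 w = l • w) : IsScalarOn A E := by
  have hAE : ∀ w ∈ E, A.1 w ∈ E := fun w hw => by
    obtain ⟨l, hl⟩ := h w hw
    exact hl ▸ E.smul_of_tower_mem l hw
  obtain ⟨a, ha⟩ := LinearMap.exists_eq_smul_id_of_forall_notLinearIndependent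
    (f := A.1.toLinearMap.restrict hAE) fun w hw => by
      obtain ⟨l, hl⟩ := h w w.2
      have := (LinearIndependent.pair_iff.1 hw) l (-1) (Subtype.ext (by simp [hl]))
      exact absurd this.2 (by norm_num)
  have haE : ∀ w ∈ E, A.1 w = a • w := fun w hw =>
    congrArg Subtype.val (LinearMap.congr_fun ha ⟨w, hw⟩)
  by_cases hE : ∃ z ∈ E, z ≠ 0
  · obtain ⟨z, hz, hz0⟩ := hE
    obtain ⟨l, hl⟩ := h z hz
    have hal : a = l := smul_left_injective ℂ hz0 <| by
      simp only [← haE z hz, hl, Complex.coe_smul]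
    exact ⟨l, fun w hw => by rw [haE w hw, hal, Complex.coe_smul]⟩
  · push Not at hE
    exact ⟨0, fun w hw => by simp [hE w hw]⟩

end Commutation

section Bicommutant

/-- The bicommutant of a set `s` within the self-adjoint operators: the operators that commute
with everything commuting with all of `s`. -/
def bicommutant (s : Set 𝓑ₛ(H)) : Submodule ℝ 𝓑ₛ(H) where
  carrier := {D | ∀ C, (∀ A ∈ s, CommC A C) → CommC D C}
  zero_mem' C _ := (Commute.zero_left C.1).eq
  add_mem' hD hD' C hC := (Commute.add_left (hD C hC) (hD' C hC)).eq
  smul_mem' r _ hD C hC := (Commute.smul_left (hD C hC) r).eq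

variable {s t : Set 𝓑ₛ(H)} {A B D : 𝓑ₛ(H)}

lemma mem_bicommutant : D ∈ bicommutant s ↔ ∀ C, (∀ A ∈ s, CommC A C) → CommC D C := Iff.rfl

lemma subset_bicommutant (s : Set 𝓑ₛ(H)) : s ⊆ bicommutant s := fun _ hA _ hC => hC _ hA

lemma bicommutant_le_of_subset (h : s ⊆ bicommutant t) : bicommutant s ≤ bicommutant t :=
  fun _ hD C hC => hD C fun _ hA => h hA C hC

lemma bicommutant_mono (h : s ⊆ t) : bicommutant s ≤ bicommutant t :=
  bicommutant_le_of_subset (h.trans (subset_bicommutant t))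

lemma smul_one_mem_bicommutant (r : ℝ) (s : Set 𝓑ₛ(H)) : r • (1 : 𝓑ₛ(H)) ∈ bicommutant s :=
  Submodule.smul_mem _ r fun C _ => (Commute.one_left C.1).eq

lemma exists_apply_eq_smul_of_mem_bicommutant {x : H} (hs : ∀ A ∈ s, ∃ l : ℝ, A.1 x = l • x)
    (hD : D ∈ bicommutant s) : ∃ l : ℝ, D.1 x = l • x :=
  commC_rankOneSA_iff.1 <| hD _ fun A hA => commC_rankOneSA_iff.2 (hs A hA)

lemma IsScalarOn.of_mem_bicommutant {E : Submodule ℂ H} (hs : ∀ A ∈ s, IsScalarOn A E)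
    (hD : D ∈ bicommutant s) : IsScalarOn D E :=
  isScalarOn_of_forall_exists fun w hw =>
    exists_apply_eq_smul_of_mem_bicommutant (fun A hA => (hs A hA).imp fun _ h => h w hw) hD

lemma smul_add_smul_one_mem_bicommutant_iff {α β : ℝ} (hα : α ≠ 0) :
    α • A + β • (1 : 𝓑ₛ(H)) ∈ bicommutant s ↔ A ∈ bicommutant s := by
  rw [Submodule.add_mem_iff_left _ (smul_one_mem_bicommutant β s), Submodule.smul_mem_iff _ hα]

lemma bicommutant_smul_add_smul_one {α β : ℝ} (hα : α ≠ 0) :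
    bicommutant {α • A + β • (1 : 𝓑ₛ(H))} = bicommutant {A} := by
  refine le_antisymm (bicommutant_le_of_subset ?_) (bicommutant_le_of_subset ?_)
  · rintro _ rfl
    exact (smul_add_smul_one_mem_bicommutant_iff hα).2 (subset_bicommutant _ rfl)
  · rintro _ rfl
    exact (smul_add_smul_one_mem_bicommutant_iff hα).1 (subset_bicommutant _ rfl)

lemma exists_eq_smul_one_of_forall_rankOneSA (h : ∀ x, CommC D (rankOneSA x)) :
    ∃ r : ℝ, D = r • (1 : 𝓑ₛ(H)) := by
  obtain ⟨r, hr⟩ := isScalarOn_of_forall_exists (E := ⊤) fun x _ => commC_rankOneSA_iff.1 (h x)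
  exact ⟨r, by ext v; exact hr v trivial⟩

lemma mem_bicommutant_empty_iff : D ∈ bicommutant ∅ ↔ ∃ r : ℝ, D = r • (1 : 𝓑ₛ(H)) := by
  refine ⟨fun hD => exists_eq_smul_one_of_forall_rankOneSA fun x => hD _ (by simp), ?_⟩
  rintro ⟨r, rfl⟩
  exact smul_one_mem_bicommutant r ∅

lemma exists_eq_smul_rankOneSA {x : H} (hx : ∃ l : ℝ, D.1 x = l • x)
    (h : ∀ v, ⟪x, v⟫_ℂ = 0 → D.1 v = 0) : ∃ κ : ℝ, D = κ • rankOneSA x := by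
  obtain ⟨l, hl⟩ := hx
  rw [← Complex.coe_smul] at hl
  refine ⟨l / ‖x‖ ^ 2, ?_⟩
  ext v
  have hv := h _ (inner_sub_proj_eq_zero x v)
  rw [map_sub, sub_eq_zero, map_smul, hl, inner_self_eq_ofReal] at hv
  calc D.1 v = (l / ‖x‖ ^ 2 : ℝ) • ⟪x, v⟫_ℂ • x := by
        rw [hv, ← Complex.coe_smul, smul_smul, smul_smul]
        push_cast
        congr 1
        ring
    _ = ((l / ‖x‖ ^ 2) • rankOneSA x).1 v := rfl

lemma exists_eq_of_mem_bicommutant_rankOneSA_pair {x : H} {Q : 𝓑ₛ(H)}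
    (hQ : IsIdempotentElem Q.1) (hxQ : CommC Q (rankOneSA x))
    (hD : D ∈ bicommutant {rankOneSA x, Q}) :
    ∃ κ α β : ℝ, D = κ • rankOneSA x + α • Q + β • (1 : 𝓑ₛ(H)) := by
  obtain ⟨l, hl⟩ := commC_rankOneSA_iff.1 hxQ
  have hQQ (v : H) : Q.1 (Q.1 v) = Q.1 v := ContinuousLinearMap.ext_iff.1 hQ v
  have scalarOn {μ : ℝ} {E : Submodule ℂ H} (hQE : ∀ w ∈ E, Q.1 w = μ • w)
      (hxE : ∀ w ∈ E, ⟪x, w⟫_ℂ = 0) : IsScalarOn D E := by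
    refine IsScalarOn.of_mem_bicommutant ?_ hD
    rintro A (rfl | rfl)
    · exact ⟨0, fun w hw => by simp [hxE w hw]⟩
    · exact ⟨μ, hQE⟩
  obtain ⟨α, hα⟩ := scalarOn (μ := 1)
    (E := LinearMap.eqLocus Q.1.toLinearMap LinearMap.id ⊓ (ℂ ∙ x)ᗮ)
    (fun w hw => by rw [one_smul]; exact hw.1)
    (fun w hw => Submodule.mem_orthogonal_singleton_iff_inner_right.1 hw.2)
  obtain ⟨β, hβ⟩ := scalarOn (μ := 0) (E := LinearMap.ker Q.1.toLinearMap ⊓ (ℂ ∙ x)ᗮ)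
    (fun w hw => by rw [zero_smul]; exact hw.1)
    (fun w hw => Submodule.mem_orthogonal_singleton_iff_inner_right.1 hw.2)
  obtain ⟨κ, hκ⟩ := exists_eq_smul_rankOneSA (D := D - (α - β) • Q - β • (1 : 𝓑ₛ(H))) (x := x)
    (by
      refine exists_apply_eq_smul_of_mem_bicommutant (s := {rankOneSA x, Q}) ?_ <|
        Submodule.sub_mem _ (Submodule.sub_mem _ hD <| Submodule.smul_mem _ _ <|
          subset_bicommutant _ (by simp)) (smul_one_mem_bicommutant β _)
      rintro A (rfl | rfl)
      · exact exists_rankOneSA_apply_self x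
      · exact ⟨l, hl⟩)
    (fun v hv => by
      have hxQv : ⟪x, Q.1 v⟫_ℂ = 0 := by
        rw [← selfAdjoint_inner_left, hl, ← Complex.coe_smul, inner_smul_left, hv, mul_zero]
      have h1 : D.1 (Q.1 v) = α • Q.1 v :=
        hα _ ⟨hQQ v, Submodule.mem_orthogonal_singleton_iff_inner_right.2 hxQv⟩
      have h0 : D.1 (v - Q.1 v) = β • (v - Q.1 v) :=
        hβ _ ⟨by simp [hQQ], Submodule.mem_orthogonal_singleton_iff_inner_right.2 <| by
          rw [inner_sub_right, hv, hxQv, sub_zero]⟩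
      rw [map_sub, h1] at h0
      change D.1 v - (α - β) • Q.1 v - β • v = 0
      linear_combination (norm := module) h0)
  exact ⟨κ, α - β, β, by rw [← hκ]; abel⟩

lemma exists_eq_of_mem_bicommutant_of_isIdempotentElem {Q : 𝓑ₛ(H)} (hQ : IsIdempotentElem Q.1)
    (hD : D ∈ bicommutant {Q}) : ∃ α β : ℝ, D = α • Q + β • (1 : 𝓑ₛ(H)) := by
  obtain ⟨κ, α, β, h⟩ := exists_eq_of_mem_bicommutant_rankOneSA_pair (x := 0) hQ
    (commC_rankOneSA_iff.2 ⟨0, by simp⟩) (bicommutant_mono (by simp) hD)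
  exact ⟨α, β, by
    rwa [rankOneSA_zero, show κ • (0 : 𝓑ₛ(H)) = 0 from Subtype.ext (smul_zero κ), zero_add] at h⟩

lemma exists_eq_of_mem_bicommutant_rankOneSA {x : H} (hD : D ∈ bicommutant {rankOneSA x}) :
    ∃ κ β : ℝ, D = κ • rankOneSA x + β • (1 : 𝓑ₛ(H)) := by
  obtain ⟨κ, α, β, h⟩ := exists_eq_of_mem_bicommutant_rankOneSA_pair (x := x) (Q := 0)
    IsIdempotentElem.zero (Commute.zero_left (rankOneSA x).1).eq (bicommutant_mono (by simp) hD)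
  exact ⟨κ, β, by rwa [show α • (0 : 𝓑ₛ(H)) = 0 from Subtype.ext (smul_zero α), add_zero] at h⟩

end Bicommutant

section Atoms

lemma exists_isStarProjection_of_spectrum_subset_pair {R : Type*} [Ring R] [StarRing R]
    [TopologicalSpace R] [Algebra ℝ R] [ContinuousFunctionalCalculus ℝ R IsSelfAdjoint]
    {T : R} (hT : IsSelfAdjoint T) {a c : ℝ} (hac : a ≠ c) (h : spectrum ℝ T ⊆ {a, c}) :
    ∃ q : R, IsStarProjection q ∧ T = (c - a) • q + algebraMap ℝ R a := by
  have hca : c - a ≠ 0 := sub_ne_zero.2 hac.symm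
  let f : ℝ → ℝ := fun t => (t - a) / (c - a)
  have hf : Continuous f := by fun_prop
  refine ⟨cfc f T, ⟨?_, cfc_predicate f T⟩, ?_⟩
  · rw [isIdempotentElem_iff_spectrum_subset ℝ _ (cfc_predicate f T),
      cfc_map_spectrum f T hT hf.continuousOn]
    rintro _ ⟨t, ht, rfl⟩
    rcases h ht with rfl | rfl
    · simp [f]
    · simp [f, div_self hca]
  · have hid : (fun t => (c - a) * f t + a) = id := by
      funext t
      simp only [f, id, mul_div_cancel₀ _ hca, sub_add_cancel]
    rw [← cfc_const_mul _ f T hf.continuousOn, ← cfc_add_const a _ T (by fun_prop), hid,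
      cfc_id ℝ T]

/-- The generator `A` of a minimal nontrivial bicommutant: every non-scalar operator in the
bicommutant of `A` has the same bicommutant as `A`. -/
def IsBicommutantAtom (A : 𝓑ₛ(H)) : Prop :=
  A ∉ bicommutant ∅ ∧ ∀ D ∈ bicommutant {A}, D ∉ bicommutant ∅ → A ∈ bicommutant {D}

variable {A Q : 𝓑ₛ(H)}

lemma cfc_mem_bicommutant (f : ℝ → ℝ) (A : 𝓑ₛ(H)) :
    (⟨cfc f A.1, cfc_predicate f A.1⟩ : 𝓑ₛ(H)) ∈ bicommutant {A} :=
  fun _ hC => Commute.cfc_real (hC A rfl) f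

lemma eqOn_const_of_cfc_mem_bicommutant_empty {f : ℝ → ℝ} (hf : Continuous f)
    (h : (⟨cfc f A.1, cfc_predicate f A.1⟩ : 𝓑ₛ(H)) ∈ bicommutant ∅) :
    ∃ r, Set.EqOn f (fun _ => r) (spectrum ℝ A.1) := by
  obtain ⟨r, hr⟩ := mem_bicommutant_empty_iff.1 h
  have hA : IsSelfAdjoint A.1 := A.2
  have hcfc : cfc f A.1 = cfc (fun _ => r) A.1 := by
    rw [cfc_const r A.1, Algebra.algebraMap_eq_smul_one]
    exact congrArg Subtype.val hr
  exact ⟨r, eqOn_of_cfc_eq_cfc hcfc hf.continuousOn⟩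

lemma eqOn_of_isScalarOn_ker_cfc {f g : ℝ → ℝ} (hf : Continuous f) (hg : Continuous g)
    (hfg : ∀ t, f t * g t = 0)
    (h : IsScalarOn A (LinearMap.ker (cfc f A.1).toLinearMap)) :
    ∃ μ : ℝ, Set.EqOn (fun t => t * g t) (fun t => μ * g t) (spectrum ℝ A.1) := by
  obtain ⟨μ, hμ⟩ := h
  have hA : IsSelfAdjoint A.1 := A.2
  have hfgA : cfc f A.1 * cfc g A.1 = 0 := by
    rw [← cfc_mul f g A.1 hf.continuousOn hg.continuousOn]
    simp only [hfg, cfc_const_zero]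
  refine ⟨μ, eqOn_of_cfc_eq_cfc (a := A.1) ?_⟩
  rw [cfc_mul (fun t => t) g A.1 continuousOn_id hg.continuousOn, cfc_id' ℝ A.1,
    cfc_const_mul μ g A.1 hg.continuousOn]
  ext v
  exact hμ _ (ContinuousLinearMap.ext_iff.1 hfgA v)

lemma IsBicommutantAtom.eq_of_mem_spectrum (hA : IsBicommutantAtom A) {a b c m : ℝ}
    (ha : a ∈ spectrum ℝ A.1) (hb : b ∈ spectrum ℝ A.1) (hc : c ∈ spectrum ℝ A.1)
    (ham : a < m) (hmb : m < b) (hmc : m < c) : b = c := by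
  let f : ℝ → ℝ := fun t => max (m - t) 0
  let g : ℝ → ℝ := fun t => max (t - m) 0
  have hf : Continuous f := by fun_prop
  have hg : Continuous g := by fun_prop
  have hfg (t : ℝ) : f t * g t = 0 := by
    rcases le_total t m with h | h <;> simp [f, g, h]
  let D : 𝓑ₛ(H) := ⟨cfc f A.1, cfc_predicate f A.1⟩
  have hD : D ∉ bicommutant ∅ := fun hD => by
    obtain ⟨r, hr⟩ := eqOn_const_of_cfc_mem_bicommutant_empty hf hD
    have hfa : 0 < f a := lt_max_of_lt_left (sub_pos.2 ham)
    have hfb : f b = 0 := max_eq_right (sub_nonpos.2 hmb.le)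
    exact hfa.ne' ((hr ha).trans ((hr hb).symm.trans hfb))
  have hA_ker : IsScalarOn A (LinearMap.ker D.1.toLinearMap) := by
    refine IsScalarOn.of_mem_bicommutant ?_ (hA.2 D (cfc_mem_bicommutant f A) hD)
    rintro _ rfl
    exact ⟨0, fun w hw => by rw [zero_smul]; exact hw⟩
  obtain ⟨μ, hμ⟩ := eqOn_of_isScalarOn_ker_cfc hf hg hfg hA_ker
  have eq_μ {t : ℝ} (ht : t ∈ spectrum ℝ A.1) (hmt : m < t) : t = μ :=
    mul_right_cancel₀ (lt_max_of_lt_left (sub_pos.2 hmt)).ne' (hμ ht)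
  rw [eq_μ hb hmb, eq_μ hc hmc]

lemma IsBicommutantAtom.exists_spectrum_subset_pair (hA : IsBicommutantAtom A) :
    ∃ a c : ℝ, a ≠ c ∧ spectrum ℝ A.1 ⊆ {a, c} := by
  have : Nontrivial (H →L[ℂ] H) := by
    by_contra h
    rw [not_nontrivial_iff_subsingleton] at h
    exact hA.1 fun _ _ => Subsingleton.elim _ _
  obtain ⟨a, ha, hmin⟩ := (ContinuousFunctionalCalculus.isCompact_spectrum (R := ℝ)
    (p := IsSelfAdjoint) A.1).exists_isLeast
      (ContinuousFunctionalCalculus.spectrum_nonempty (R := ℝ) A.1 A.2)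
  obtain ⟨c, hc, hca⟩ : ∃ c ∈ spectrum ℝ A.1, c ≠ a := by
    by_contra! h
    refine hA.1 (mem_bicommutant_empty_iff.2 ⟨a, Subtype.ext ?_⟩)
    exact (CFC.eq_algebraMap_of_spectrum_subset_singleton A.1 a h A.2).trans
      (Algebra.algebraMap_eq_smul_one a)
  refine ⟨a, c, hca.symm, fun b hb => or_iff_not_imp_left.2 fun hba => ?_⟩
  obtain ⟨m, ham, hm⟩ := exists_between
    (lt_min ((hmin hb).lt_of_ne' hba) ((hmin hc).lt_of_ne' hca))
  exact hA.eq_of_mem_spectrum ha hb hc ham (hm.trans_le (min_le_left b c))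
    (hm.trans_le (min_le_right b c))

lemma IsBicommutantAtom.exists_eq_smul_add (hA : IsBicommutantAtom A) :
    ∃ (Q : 𝓑ₛ(H)) (s r : ℝ), IsIdempotentElem Q.1 ∧ s ≠ 0 ∧ A = s • Q + r • (1 : 𝓑ₛ(H)) := by
  obtain ⟨a, c, hac, hspec⟩ := hA.exists_spectrum_subset_pair
  obtain ⟨q, hq, hAq⟩ := exists_isStarProjection_of_spectrum_subset_pair A.2 hac hspec
  rw [Algebra.algebraMap_eq_smul_one] at hAq
  exact ⟨⟨q, hq.isSelfAdjoint⟩, c - a, a, hq.isIdempotentElem, sub_ne_zero.2 hac.symm,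
    Subtype.ext hAq⟩

lemma isBicommutantAtom_of_isIdempotentElem (hQ : IsIdempotentElem Q.1)
    (hQ' : Q ∉ bicommutant ∅) : IsBicommutantAtom Q := by
  refine ⟨hQ', fun D hD hD' => ?_⟩
  obtain ⟨α, β, rfl⟩ := exists_eq_of_mem_bicommutant_of_isIdempotentElem hQ hD
  have hα : α ≠ 0 := by
    rintro rfl
    exact hD' (by rw [zero_smul, zero_add]; exact smul_one_mem_bicommutant β ∅)
  exact (smul_add_smul_one_mem_bicommutant_iff hα).1 (subset_bicommutant _ rfl)

end Atoms

section RankOne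

lemma rankOneSA_notMem_bicommutant_empty {x u : H} (hx : x ≠ 0) (hu : u ≠ 0)
    (hxu : ⟪x, u⟫_ℂ = 0) : rankOneSA x ∉ bicommutant ∅ := by
  rw [mem_bicommutant_empty_iff]
  rintro ⟨r, hr⟩
  have apply_eq (v : H) : ⟪x, v⟫_ℂ • x = r • v := congrArg (fun A : 𝓑ₛ(H) => A.1 v) hr
  have hr0 : r = 0 := by simpa [hxu, hu] using (apply_eq u).symm
  simpa [hr0, hx] using apply_eq x

lemma mem_span_singleton_of_rankOneSA_mem_bicommutant {x z u : H} (hu : u ≠ 0)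
    (hxu : ⟪x, u⟫_ℂ = 0) (hzu : ⟪z, u⟫_ℂ = 0)
    (h : rankOneSA z ∈ bicommutant {rankOneSA x}) : z ∈ ℂ ∙ x := by
  obtain ⟨κ, β, hκβ⟩ := exists_eq_of_mem_bicommutant_rankOneSA h
  have apply_eq (v : H) : ⟪z, v⟫_ℂ • z = κ • ⟪x, v⟫_ℂ • x + β • v :=
    congrArg (fun A : 𝓑ₛ(H) => A.1 v) hκβ
  have hβ : β = 0 := by simpa [hxu, hzu, hu] using (apply_eq u).symm
  have hz := apply_eq z
  rw [hβ, zero_smul, add_zero] at hz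
  rcases eq_or_ne z 0 with rfl | hz0
  · exact zero_mem _
  rw [← Submodule.smul_mem_iff _ (inner_self_ne_zero (𝕜 := ℂ).2 hz0), hz]
  exact Submodule.smul_of_tower_mem _ _ <|
    Submodule.smul_mem _ _ (Submodule.mem_span_singleton_self x)

lemma inner_eq_zero_iff_commC_rankOneSA (hdim : 3 ≤ Module.rank ℂ H) {x z : H} :
    ⟪x, z⟫_ℂ = 0 ↔ CommC (rankOneSA x) (rankOneSA z) ∧
      (rankOneSA z ∈ bicommutant {rankOneSA x} → x = 0 ∨ z = 0) := by
  refine ⟨fun h => ⟨commC_rankOneSA_iff.2 ⟨0, by simp [h]⟩, fun hz => ?_⟩, fun ⟨hxz, hz⟩ => ?_⟩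
  · obtain ⟨u, hu, hxu, hzu⟩ := exists_ne_zero_orthogonal_pair hdim x z
    obtain ⟨c, rfl⟩ := Submodule.mem_span_singleton.1 <|
      mem_span_singleton_of_rankOneSA_mem_bicommutant hu hxu hzu hz
    rw [inner_smul_right, mul_eq_zero, inner_self_eq_zero] at h
    exact h.symm.imp_right fun hc => by rw [hc, zero_smul]
  · by_contra h
    obtain ⟨l, hl⟩ := commC_rankOneSA_iff.1 hxz
    have hx : x ≠ 0 := by rintro rfl; exact h (inner_zero_left z)
    have hz0 : z ≠ 0 := by rintro rfl; exact h (inner_zero_right x)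
    have hlx : ⟪x, z⟫_ℂ • x = (l : ℂ) • z := by rwa [Complex.coe_smul]
    have hl0 : (l : ℂ) ≠ 0 := by
      intro hl0
      rw [hl0, zero_smul] at hlx
      exact (smul_ne_zero h hx) hlx
    rw [← inv_smul_eq_iff₀ hl0, smul_smul] at hlx
    refine (hz ?_).elim hx hz0
    rw [← hlx, rankOneSA_smul]
    exact Submodule.smul_mem _ _ (subset_bicommutant _ rfl)

end RankOne

section ExchangeAtoms

/-- A bicommutant atom `A` with the exchange property: for an atom `B` commuting with `A`, adding
to `A` any `D` in the bicommutant of `{A, B}` but not of `A` recovers `B`. In dimension at least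
three these are exactly the operators `s • x ⊗ x + r • 1` with `s ≠ 0` and `x ≠ 0`, which
characterizes the latter by commutation alone. -/
def IsExchangeAtom (A : 𝓑ₛ(H)) : Prop :=
  IsBicommutantAtom A ∧ ∀ B, CommC A B → IsBicommutantAtom B →
    ∀ D ∈ bicommutant {A, B}, D ∉ bicommutant {A} → B ∈ bicommutant {A, D}

lemma isExchangeAtom_rankOneSA {x u : H} (hx : x ≠ 0) (hu : u ≠ 0) (hxu : ⟪x, u⟫_ℂ = 0) :
    IsExchangeAtom (rankOneSA x) := by
  refine ⟨⟨rankOneSA_notMem_bicommutant_empty hx hu hxu, fun D hD hD' => ?_⟩,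
    fun B hxB hB D hD hD' => ?_⟩
  · obtain ⟨κ, β, rfl⟩ := exists_eq_of_mem_bicommutant_rankOneSA hD
    have hκ : κ ≠ 0 := by
      rintro rfl
      exact hD' (by rw [zero_smul, zero_add]; exact smul_one_mem_bicommutant β ∅)
    exact (smul_add_smul_one_mem_bicommutant_iff hκ).1 (subset_bicommutant _ rfl)
  · obtain ⟨Q, s, r, hQ, hs, rfl⟩ := hB.exists_eq_smul_add
    have hQB : Q ∈ bicommutant {s • Q + r • (1 : 𝓑ₛ(H))} :=
      (smul_add_smul_one_mem_bicommutant_iff hs).1 (subset_bicommutant _ rfl)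
    have hxQ : CommC Q (rankOneSA x) := hQB _ (by rintro _ rfl; exact commC_comm.1 hxB)
    have hle : bicommutant {rankOneSA x, s • Q + r • (1 : 𝓑ₛ(H))} ≤
        bicommutant {rankOneSA x, Q} := by
      refine bicommutant_le_of_subset ?_
      rintro _ (rfl | rfl)
      · exact subset_bicommutant _ (by simp)
      · exact add_mem (Submodule.smul_mem _ s (subset_bicommutant _ (by simp)))
          (smul_one_mem_bicommutant r _)
    obtain ⟨κ, α, β, rfl⟩ := exists_eq_of_mem_bicommutant_rankOneSA_pair hQ hxQ (hle hD)
    have hxmem (t : Set 𝓑ₛ(H)) (ht : rankOneSA x ∈ t) : κ • rankOneSA x ∈ bicommutant t :=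
      Submodule.smul_mem _ κ (subset_bicommutant t ht)
    rw [add_assoc, Submodule.add_mem_iff_right _ (hxmem _ (Set.mem_singleton _))] at hD'
    have hα : α ≠ 0 := by
      rintro rfl
      exact hD' (by rw [zero_smul, zero_add]; exact smul_one_mem_bicommutant β _)
    refine add_mem (Submodule.smul_mem _ s ?_) (smul_one_mem_bicommutant r _)
    refine (smul_add_smul_one_mem_bicommutant_iff (β := β) hα).1 ?_
    rw [← Submodule.add_mem_iff_right _ (hxmem _ (by simp)), ← add_assoc]
    exact subset_bicommutant _ (by simp)

lemma exists_norm_eq_one_apply_eq_self {P : 𝓑ₛ(H)} (hP : IsIdempotentElem P.1) (hP0 : P ≠ 0) :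
    ∃ x : H, ‖x‖ = 1 ∧ P.1 x = x := by
  obtain ⟨v, hv⟩ : ∃ v, P.1 v ≠ 0 := by
    by_contra! h
    exact hP0 (by ext v; exact h v)
  have hPP : P.1 (P.1 v) = P.1 v := ContinuousLinearMap.ext_iff.1 hP v
  exact ⟨(‖P.1 v‖⁻¹ : ℂ) • P.1 v, norm_smul_inv_norm hv, by rw [map_smul, hPP]⟩

lemma exists_eq_rankOneSA_or_exists_orthonormal {P : 𝓑ₛ(H)} (hP : IsIdempotentElem P.1)
    (hP0 : P ≠ 0) : (∃ x : H, ‖x‖ = 1 ∧ P = rankOneSA x) ∨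
      ∃ x z : H, ‖x‖ = 1 ∧ ‖z‖ = 1 ∧ ⟪x, z⟫_ℂ = 0 ∧ P.1 x = x ∧ P.1 z = z := by
  obtain ⟨x, hx, hPx⟩ := exists_norm_eq_one_apply_eq_self hP hP0
  by_cases h : P = rankOneSA x
  · exact .inl ⟨x, hx, h⟩
  have hPx' (v : H) : ⟪x, P.1 v⟫_ℂ = ⟪x, v⟫_ℂ := by rw [← selfAdjoint_inner_left, hPx]
  have hPP (v : H) : P.1 (P.1 v) = P.1 v := ContinuousLinearMap.ext_iff.1 hP v
  have hxx : ⟪x, x⟫_ℂ = 1 := inner_self_eq_one_of_norm_eq_one hx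
  obtain ⟨z, hz, hPz⟩ := exists_norm_eq_one_apply_eq_self (P := P - rankOneSA x)
    (by ext v; simp [hPP, hPx, hPx', hx]) (sub_ne_zero.2 h)
  replace hPz : P.1 z - ⟪x, z⟫_ℂ • x = z := hPz
  have hxz : ⟪x, z⟫_ℂ = 0 := by
    rw [← hPz, inner_sub_right, inner_smul_right, hxx, mul_one, hPx', sub_self]
  exact .inr ⟨x, z, hx, hz, hxz, hPx, by rwa [hxz, zero_smul, sub_zero] at hPz⟩

lemma inner_eq_zero_of_apply_eq_smul {A : 𝓑ₛ(H)} {a b : ℝ} (hab : a ≠ b) {x z : H}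
    (hx : A.1 x = a • x) (hz : A.1 z = b • z) : ⟪x, z⟫_ℂ = 0 := by
  have h := selfAdjoint_inner_left A x z
  rw [hx, hz, ← Complex.coe_smul, ← Complex.coe_smul, inner_smul_left, inner_smul_right,
    Complex.conj_ofReal] at h
  exact (mul_eq_mul_right_iff.1 h).resolve_left (by exact_mod_cast hab)

lemma notMem_bicommutant_of_apply_add_eq {s : Set 𝓑ₛ(H)} {D : 𝓑ₛ(H)} {e v : H} (he : e ≠ 0)
    (hv : v ≠ 0) (hev : ⟪e, v⟫_ℂ = 0) (hs : ∀ A ∈ s, ∃ l : ℝ, A.1 (e + v) = l • (e + v))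
    (hD : D.1 (e + v) = e) : D ∉ bicommutant s := fun hDs => by
  obtain ⟨l, hl⟩ := exists_apply_eq_smul_of_mem_bicommutant hs hDs
  rw [hD, ← Complex.coe_smul] at hl
  have hl0 : (l : ℂ) = 0 := by
    have hve : ⟪v, e⟫_ℂ = ⟪v, (l : ℂ) • (e + v)⟫_ℂ := congrArg (⟪v, ·⟫_ℂ) hl
    rw [inner_smul_right, inner_add_right, inner_eq_zero_symm.1 hev, zero_add] at hve
    exact (mul_eq_zero.1 hve.symm).resolve_right (inner_self_ne_zero.2 hv)
  exact he (by rw [hl, hl0, zero_smul])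

lemma rankOneSA_mem_bicommutant_pair {A : 𝓑ₛ(H)} {a b : ℝ} (hab : a ≠ b) {x z : H}
    (hx : A.1 x = a • x) (hz : A.1 z = b • z) :
    rankOneSA x ∈ bicommutant {A, rankOneSA x + rankOneSA z} := by
  have hmul : (a - b) • (rankOneSA x).1 = (A.1 - b • 1) * (rankOneSA x + rankOneSA z).1 := by
    ext v
    change (a - b) • ⟪x, v⟫_ℂ • x = A.1 (⟪x, v⟫_ℂ • x + ⟪z, v⟫_ℂ • z) -
      b • (⟪x, v⟫_ℂ • x + ⟪z, v⟫_ℂ • z)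
    rw [map_add, map_smul, map_smul, hx, hz]
    module
  refine (Submodule.smul_mem_iff _ (sub_ne_zero.2 hab)).1 fun C hC => ?_
  have hAC : Commute A.1 C.1 := hC A (by simp)
  have hBC : Commute (rankOneSA x + rankOneSA z).1 C.1 := hC _ (by simp)
  exact (congrArg (Commute · C.1) hmul).mpr <|
    (hAC.sub_left ((Commute.one_left C.1).smul_left b)).mul_left hBC

-- The exchange property fails for `B = e₁ ⊗ e₁ + e₃ ⊗ e₃` and `D = e₁ ⊗ e₁`.
lemma not_isExchangeAtom_of_apply_eq_smul {A : 𝓑ₛ(H)} {a b : ℝ} (hab : a ≠ b) {e₁ e₂ e₃ e₄ : H}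
    (he₁ : ‖e₁‖ = 1) (he₂ : e₂ ≠ 0) (he₃ : ‖e₃‖ = 1) (he₄ : e₄ ≠ 0)
    (h₁₂ : ⟪e₁, e₂⟫_ℂ = 0) (h₃₄ : ⟪e₃, e₄⟫_ℂ = 0) (h₁ : A.1 e₁ = a • e₁) (h₂ : A.1 e₂ = a • e₂)
    (h₃ : A.1 e₃ = b • e₃) (h₄ : A.1 e₄ = b • e₄) : ¬ IsExchangeAtom A := by
  have h₁₃ : ⟪e₁, e₃⟫_ℂ = 0 := inner_eq_zero_of_apply_eq_smul hab h₁ h₃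
  have h₃₁ : ⟪e₃, e₁⟫_ℂ = 0 := inner_eq_zero_symm.1 h₁₃
  have h₁₄ : ⟪e₁, e₄⟫_ℂ = 0 := inner_eq_zero_of_apply_eq_smul hab h₁ h₄
  have h₃₂ : ⟪e₃, e₂⟫_ℂ = 0 := inner_eq_zero_of_apply_eq_smul hab.symm h₃ h₂
  have he₁0 : e₁ ≠ 0 := norm_ne_zero_iff.1 (he₁ ▸ one_ne_zero)
  have he₃0 : e₃ ≠ 0 := norm_ne_zero_iff.1 (he₃ ▸ one_ne_zero)
  have hAe₁₂ : A.1 (e₁ + e₂) = a • (e₁ + e₂) := by rw [map_add, h₁, h₂, smul_add]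
  have hAe₃₄ : A.1 (e₃ + e₄) = b • (e₃ + e₄) := by rw [map_add, h₃, h₄, smul_add]
  let B := rankOneSA e₁ + rankOneSA e₃
  have hB_apply (v : H) : B.1 v = ⟪e₁, v⟫_ℂ • e₁ + ⟪e₃, v⟫_ℂ • e₃ := rfl
  have hBB : IsIdempotentElem B.1 := by
    ext v
    simp [hB_apply, he₁, he₃, h₁₃, h₃₁]
  have hB : B ∉ bicommutant ∅ :=
    notMem_bicommutant_of_apply_add_eq he₁0 he₂ h₁₂ (by simp) (by simp [*])
  have hAB : CommC A B := Commute.add_right (commC_rankOneSA_iff.2 ⟨a, h₁⟩)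
    (commC_rankOneSA_iff.2 ⟨b, h₃⟩)
  have hD : rankOneSA e₁ ∈ bicommutant {A, B} := rankOneSA_mem_bicommutant_pair hab h₁ h₃
  have hD' : rankOneSA e₁ ∉ bicommutant {A} :=
    notMem_bicommutant_of_apply_add_eq he₁0 he₂ h₁₂ (by rintro _ rfl; exact ⟨a, hAe₁₂⟩)
      (by simp [*])
  refine fun hA => notMem_bicommutant_of_apply_add_eq he₃0 he₄ h₃₄ (D := B) ?_
    (by simp [*]) <|
    hA.2 B hAB (isBicommutantAtom_of_isIdempotentElem hBB hB) _ hD hD'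
  rintro _ (rfl | rfl)
  exacts [⟨b, hAe₃₄⟩, ⟨0, by simp [h₁₃, h₁₄]⟩]

lemma IsExchangeAtom.exists_eq_smul_rankOneSA_add {A : 𝓑ₛ(H)} (hA : IsExchangeAtom A) :
    ∃ (x : H) (s r : ℝ), x ≠ 0 ∧ s ≠ 0 ∧ A = s • rankOneSA x + r • (1 : 𝓑ₛ(H)) := by
  obtain ⟨Q, s, r, hQ, hs, rfl⟩ := hA.1.exists_eq_smul_add
  have norm_ne {x : H} (hx : ‖x‖ = 1) : x ≠ 0 := norm_ne_zero_iff.1 (hx ▸ one_ne_zero)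
  have hQ0 : Q ≠ 0 := by
    rintro rfl
    exact hA.1.1 (add_mem (Submodule.smul_mem _ s (zero_mem _)) (smul_one_mem_bicommutant r ∅))
  have hQ1 : 1 - Q ≠ 0 := fun h => by
    rw [← sub_eq_zero.1 h, ← add_smul] at hA
    exact hA.1.1 (smul_one_mem_bicommutant _ ∅)
  rcases exists_eq_rankOneSA_or_exists_orthonormal hQ hQ0 with
    ⟨x, hx, rfl⟩ | ⟨e₁, e₂, he₁, he₂, h₁₂, hQe₁, hQe₂⟩
  · exact ⟨x, s, r, norm_ne hx, hs, rfl⟩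
  rcases exists_eq_rankOneSA_or_exists_orthonormal (P := 1 - Q) hQ.one_sub hQ1 with
    ⟨x, hx, hQx⟩ | ⟨e₃, e₄, he₃, he₄, h₃₄, hQe₃, hQe₄⟩
  · refine ⟨x, -s, s + r, norm_ne hx, neg_ne_zero.2 hs, ?_⟩
    rw [← hQx]
    module
  · have apply_of_mem_range {v : H} (hv : Q.1 v = v) :
        (s • Q + r • (1 : 𝓑ₛ(H))).1 v = (s + r) • v := by
      change s • Q.1 v + r • v = _
      rw [hv, add_smul]
    have apply_of_mem_ker {v : H} (hv : (1 - Q).1 v = v) :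
        (s • Q + r • (1 : 𝓑ₛ(H))).1 v = r • v := by
      change s • Q.1 v + r • v = _
      rw [show Q.1 v = 0 from sub_eq_self.1 hv, smul_zero, zero_add]
    exact absurd hA <| not_isExchangeAtom_of_apply_eq_smul (add_ne_right.2 hs) he₁ (norm_ne he₂)
      he₃ (norm_ne he₄) h₁₂ h₃₄ (apply_of_mem_range hQe₁) (apply_of_mem_range hQe₂)
      (apply_of_mem_ker hQe₃) (apply_of_mem_ker hQe₄)

end ExchangeAtoms

section PreservesCommSub

/-- A surjection `φ` of the self-adjoint operators with `A - B ↔_c C` if and only if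
`φ A - φ B ↔_c φ C`. -/
structure PreservesCommSub (φ : 𝓑ₛ(H) → 𝓑ₛ(H)) : Prop where
  surjective : Function.Surjective φ
  commC_sub_iff (A B C : 𝓑ₛ(H)) : CommC (φ A - φ B) (φ C) ↔ CommC (A - B) C

namespace PreservesCommSub

variable {φ : 𝓑ₛ(H) → 𝓑ₛ(H)} (hφ : PreservesCommSub φ)
include hφ

lemma map_zero_mem_bicommutant_empty : φ 0 ∈ bicommutant ∅ := fun C _ => by
  obtain ⟨A, rfl⟩ := hφ.surjective C
  obtain ⟨B, hB⟩ := hφ.surjective 0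
  have h := (hφ.commC_sub_iff A B 0).2 (Commute.zero_right (A - B).1).eq
  rw [hB, sub_zero] at h
  exact h.symm

lemma commC_map_iff {A C : 𝓑ₛ(H)} : CommC (φ A) (φ C) ↔ CommC A C := by
  obtain ⟨r, hr⟩ := mem_bicommutant_empty_iff.1 hφ.map_zero_mem_bicommutant_empty
  have h := hφ.commC_sub_iff A 0 C
  rw [sub_zero, hr] at h
  rw [← h, ← commC_smul_add_smul_one_iff one_ne_zero (β := -r), one_smul, neg_smul, sub_eq_add_neg]

lemma map_mem_bicommutant_iff {D : 𝓑ₛ(H)} {s : Set 𝓑ₛ(H)} :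
    φ D ∈ bicommutant (φ '' s) ↔ D ∈ bicommutant s := by
  rw [mem_bicommutant, hφ.surjective.forall]
  simp only [mem_bicommutant, Set.forall_mem_image, hφ.commC_map_iff]

lemma map_mem_bicommutant_empty_iff {D : 𝓑ₛ(H)} : φ D ∈ bicommutant ∅ ↔ D ∈ bicommutant ∅ := by
  simpa only [Set.image_empty] using hφ.map_mem_bicommutant_iff (D := D) (s := ∅)

lemma map_mem_bicommutant_singleton_iff {A D : 𝓑ₛ(H)} :
    φ D ∈ bicommutant {φ A} ↔ D ∈ bicommutant {A} := by
  simpa only [Set.image_singleton] using hφ.map_mem_bicommutant_iff (D := D) (s := {A})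

lemma map_mem_bicommutant_pair_iff {A B D : 𝓑ₛ(H)} :
    φ D ∈ bicommutant {φ A, φ B} ↔ D ∈ bicommutant {A, B} := by
  simpa only [Set.image_pair] using hφ.map_mem_bicommutant_iff (D := D) (s := {A, B})

lemma isBicommutantAtom_map_iff {A : 𝓑ₛ(H)} : IsBicommutantAtom (φ A) ↔ IsBicommutantAtom A :=
  and_congr (not_congr hφ.map_mem_bicommutant_empty_iff) <| hφ.surjective.forall.trans <|
    forall_congr' fun _ => imp_congr hφ.map_mem_bicommutant_singleton_iff <|
      imp_congr (not_congr hφ.map_mem_bicommutant_empty_iff) hφ.map_mem_bicommutant_singleton_iff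

lemma isExchangeAtom_map_iff {A : 𝓑ₛ(H)} : IsExchangeAtom (φ A) ↔ IsExchangeAtom A :=
  and_congr hφ.isBicommutantAtom_map_iff <| hφ.surjective.forall.trans <| forall_congr' fun _ =>
    imp_congr hφ.commC_map_iff <| imp_congr hφ.isBicommutantAtom_map_iff <|
      hφ.surjective.forall.trans <| forall_congr' fun _ =>
        imp_congr hφ.map_mem_bicommutant_pair_iff <|
          imp_congr (not_congr hφ.map_mem_bicommutant_singleton_iff)
            hφ.map_mem_bicommutant_pair_iff

lemma exists_map_rankOneSA_eq (hdim : 3 ≤ Module.rank ℂ H) (x : H) :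
    ∃ (y : H) (h r : ℝ), ‖y‖ = ‖x‖ ∧ h ≠ 0 ∧
      φ (rankOneSA x) = h • rankOneSA y + r • (1 : 𝓑ₛ(H)) := by
  rcases eq_or_ne x 0 with rfl | hx
  · obtain ⟨r, hr⟩ := mem_bicommutant_empty_iff.1 hφ.map_zero_mem_bicommutant_empty
    exact ⟨0, 1, r, rfl, one_ne_zero, by rw [rankOneSA_zero, hr, one_smul, zero_add]⟩
  obtain ⟨u, hu, hxu, -⟩ := exists_ne_zero_orthogonal_pair hdim x x
  obtain ⟨n, s, r, hn, hs, hφx⟩ :=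
    (hφ.isExchangeAtom_map_iff.2 (isExchangeAtom_rankOneSA hx hu hxu)).exists_eq_smul_rankOneSA_add
  have hn' : ‖n‖ ≠ 0 := norm_ne_zero_iff.2 hn
  have hx' : ‖x‖ ≠ 0 := norm_ne_zero_iff.2 hx
  let c : ℝ := ‖x‖ / ‖n‖
  have hc0 : c ≠ 0 := div_ne_zero hx' hn'
  have hc : ‖(c : ℂ)‖ = c := by rw [Complex.norm_real, Real.norm_of_nonneg (by positivity)]
  refine ⟨(c : ℂ) • n, s / c ^ 2, r, ?_, by positivity, ?_⟩
  · rw [norm_smul, hc, div_mul_cancel₀ _ hn']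
  · rw [hφx, rankOneSA_smul, hc]
    match_scalars <;> field_simp

lemma exists_isOrthoRayMap (hdim : 3 ≤ Module.rank ℂ H) :
    ∃ y : H → H, IsOrthoRayMap y ∧ ∀ x, ∃ h r : ℝ, h ≠ 0 ∧
      φ (rankOneSA x) = h • rankOneSA (y x) + r • (1 : 𝓑ₛ(H)) := by
  choose y h r hnorm hh hy using hφ.exists_map_rankOneSA_eq hdim
  have y_eq_zero (x : H) : y x = 0 ↔ x = 0 := by rw [← norm_eq_zero, hnorm, norm_eq_zero]
  have mem_iff {A : 𝓑ₛ(H)} (x : H) :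
      φ A ∈ bicommutant {rankOneSA (y x)} ↔ A ∈ bicommutant {rankOneSA x} := by
    rw [← hφ.map_mem_bicommutant_singleton_iff (A := rankOneSA x), hy,
      bicommutant_smul_add_smul_one (hh x)]
  refine ⟨y, ⟨hnorm, fun {x z} => ?_, fun n => ?_⟩, fun x => ⟨h x, r x, hh x, hy x⟩⟩
  · have hcomm : CommC (rankOneSA (y x)) (rankOneSA (y z)) ↔
        CommC (rankOneSA x) (rankOneSA z) := by
      rw [← hφ.commC_map_iff (A := rankOneSA x), hy x, hy z, commC_smul_add_smul_one_iff (hh x),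
        commC_comm (B := h z • rankOneSA (y z) + r z • (1 : 𝓑ₛ(H))),
        commC_smul_add_smul_one_iff (hh z)]
      exact commC_comm
    have hmem : rankOneSA (y z) ∈ bicommutant {rankOneSA (y x)} ↔
        rankOneSA z ∈ bicommutant {rankOneSA x} := by
      rw [← mem_iff (A := rankOneSA z), hy z, smul_add_smul_one_mem_bicommutant_iff (hh z)]
    rw [inner_eq_zero_iff_commC_rankOneSA hdim, inner_eq_zero_iff_commC_rankOneSA hdim, hcomm,
      hmem, y_eq_zero, y_eq_zero]
  · obtain ⟨A, hA⟩ := hφ.surjective (rankOneSA n)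
    rcases eq_or_ne n 0 with rfl | hn
    · exact ⟨0, 0, (zero_smul ℂ _).symm⟩
    obtain ⟨u, hu, hnu, -⟩ := exists_ne_zero_orthogonal_pair hdim n n
    obtain ⟨x, s, t, -, hs, rfl⟩ := (hφ.isExchangeAtom_map_iff.1 <|
      hA ▸ isExchangeAtom_rankOneSA hn hu hnu).exists_eq_smul_rankOneSA_add
    have hmem : rankOneSA n ∈ bicommutant {rankOneSA (y x)} := by
      rw [← hA, mem_iff]
      exact (smul_add_smul_one_mem_bicommutant_iff hs).2 (subset_bicommutant _ rfl)
    obtain ⟨v, hv, hxv, hnv⟩ := exists_ne_zero_orthogonal_pair hdim (y x) n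
    obtain ⟨b, hb⟩ := Submodule.mem_span_singleton.1 <|
      mem_span_singleton_of_rankOneSA_mem_bicommutant hv hxv hnv hmem
    exact ⟨x, b, hb.symm⟩

end PreservesCommSub

end PreservesCommSub

section MapRankOne

lemma rankOneSA_eq_of_mem_span_singleton {x z : H} (h : x ∈ ℂ ∙ z) (hxz : ‖x‖ = ‖z‖) :
    rankOneSA x = rankOneSA z := by
  obtain ⟨c, rfl⟩ := Submodule.mem_span_singleton.1 h
  rcases eq_or_ne z 0 with rfl | hz
  · rw [smul_zero]
  rw [norm_smul, mul_eq_right₀ (norm_ne_zero_iff.2 hz)] at hxz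
  rw [rankOneSA_smul, hxz, one_pow, one_smul]

lemma rankOneSA_apply_add_smul {w q : H} (hwq : ⟪w, q⟫_ℂ = 0) (β : ℝ) :
    (rankOneSA w).1 (w + β • q) = ‖w‖ ^ 2 • w := by
  rw [rankOneSA_apply, inner_add_right, ← Complex.coe_smul, inner_smul_right, hwq, mul_zero,
    add_zero, inner_self_eq_ofReal, Complex.coe_smul]

lemma exists_rankOneSA_add_apply_eq {w q : H} (hw : w ≠ 0) (hq : q ≠ 0) (hwq : ⟪w, q⟫_ℂ = 0) :
    ∃ β l : ℝ, β ≠ 0 ∧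
      (rankOneSA (w + q)).1 (w + β • q) = ‖w‖ ^ 2 • w + l • (w + β • q) := by
  have hq' : 0 < ‖q‖ ^ 2 := pow_pos (norm_pos_iff.2 hq) 2
  have hdiscrim : 0 ≤ discrim (‖q‖ ^ 2) (-‖q‖ ^ 2) (-‖w‖ ^ 2) := by
    rw [discrim, mul_neg, sub_neg_eq_add]
    positivity
  obtain ⟨β, hβ⟩ : ∃ β : ℝ, ‖q‖ ^ 2 * (β * β) + -‖q‖ ^ 2 * β + -‖w‖ ^ 2 = 0 :=
    exists_quadratic_eq_zero hq'.ne' ⟨_, (Real.mul_self_sqrt hdiscrim).symm⟩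
  have hβ0 : β ≠ 0 := by
    rintro rfl
    simp [hw] at hβ
  have hinner : ⟪w + q, w + β • q⟫_ℂ = (‖w‖ ^ 2 + β * ‖q‖ ^ 2 : ℝ) := by
    rw [← Complex.coe_smul, inner_add_left, inner_add_right, inner_add_right, inner_smul_right,
      inner_smul_right, hwq, inner_eq_zero_symm.1 hwq, inner_self_eq_ofReal, inner_self_eq_ofReal]
    push_cast
    ring
  refine ⟨β, β * ‖q‖ ^ 2, hβ0, ?_⟩
  rw [rankOneSA_apply, hinner, Complex.coe_smul]
  match_scalars
  · ring
  · linarith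

namespace PreservesCommSub

variable {θ : 𝓑ₛ(H) → 𝓑ₛ(H)} (hθ : PreservesCommSub θ) {h r : H → ℝ} (hh : ∀ x, h x ≠ 0)
  (hθ_rankOne : ∀ x, θ (rankOneSA x) = h x • rankOneSA x + r x • (1 : 𝓑ₛ(H)))
include hθ hh hθ_rankOne

lemma exists_map_sub_map_apply_eq_smul {A B : 𝓑ₛ(H)} {x : H} {l : ℝ}
    (hl : (A - B).1 x = l • x) : ∃ m : ℝ, (θ A).1 x - (θ B).1 x = m • x := by
  refine commC_rankOneSA_iff (A := θ A - θ B).1 ?_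
  rw [commC_comm, ← commC_smul_add_smul_one_iff (hh x) (β := r x), ← hθ_rankOne, commC_comm,
    hθ.commC_sub_iff]
  exact commC_rankOneSA_iff.2 ⟨l, hl⟩

lemma scale_add_eq {w q : H} (hw : w ≠ 0) (hq : q ≠ 0) (hwq : ⟪w, q⟫_ℂ = 0) :
    h (w + q) = h w := by
  obtain ⟨β, l, hβ, hx⟩ := exists_rankOneSA_add_apply_eq hw hq hwq
  have hwx := rankOneSA_apply_add_smul hwq β
  have hsub : (rankOneSA w - rankOneSA (w + q)).1 (w + β • q) = -l • (w + β • q) := by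
    change (rankOneSA w).1 _ - (rankOneSA (w + q)).1 _ = _
    rw [hwx, hx]
    module
  obtain ⟨m, hm⟩ := hθ.exists_map_sub_map_apply_eq_smul hh hθ_rankOne hsub
  rw [hθ_rankOne, hθ_rankOne] at hm
  change h w • (rankOneSA w).1 (w + β • q) + r w • (w + β • q) -
    (h (w + q) • (rankOneSA (w + q)).1 (w + β • q) + r (w + q) • (w + β • q)) = _ at hm
  rw [hwx, hx] at hm
  obtain ⟨k, hk⟩ : ∃ k : ℝ, ((h w - h (w + q)) * ‖w‖ ^ 2) • w = k • (w + β • q) := by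
    refine ⟨m - r w + h (w + q) * l + r (w + q), ?_⟩
    linear_combination (norm := module) hm
  have hk0 : k = 0 := by
    have h := congrArg (⟪q, ·⟫_ℂ) hk
    simpa [← Complex.coe_smul, inner_smul_right, inner_add_right, inner_eq_zero_symm.1 hwq, hβ, hq]
      using h
  rw [hk0, zero_smul, smul_eq_zero_iff_left hw, mul_eq_zero_iff_right (by simpa using hw)] at hk
  exact (sub_eq_zero.1 hk).symm

lemma exists_map_eq_smul_add_smul_one (hdim : 3 ≤ Module.rank ℂ H) :
    ∃ c : ℝ, c ≠ 0 ∧ ∀ A, ∃ g : ℝ, θ A = c • A + g • (1 : 𝓑ₛ(H)) := by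
  have exists_orthogonal (z : H) : ∃ q ≠ 0, ⟪z, q⟫_ℂ = 0 := by
    obtain ⟨q, hq, hzq, -⟩ := exists_ne_zero_orthogonal_pair hdim z z
    exact ⟨q, hq, hzq⟩
  obtain ⟨e, he, -⟩ := exists_orthogonal 0
  have scale_eq {w : H} (hw : w ≠ 0) : h w = h e :=
    eq_of_forall_add_orthogonal exists_orthogonal
      (fun z q hz hq hzq => hθ.scale_add_eq hh hθ_rankOne hz hq hzq) he hw
  refine ⟨h e, hh e, fun A => ?_⟩
  suffices hA : ∀ x, CommC (θ A - h e • A) (rankOneSA x) by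
    obtain ⟨g, hg⟩ := exists_eq_smul_one_of_forall_rankOneSA hA
    exact ⟨g, by rw [← hg, add_sub_cancel]⟩
  intro x
  rcases eq_or_ne x 0 with rfl | hx
  · exact commC_rankOneSA_iff.2 ⟨0, by simp⟩
  have hx' : (⟪x, x⟫_ℂ) ≠ 0 := inner_self_ne_zero.2 hx
  let t : ℝ := (1 - (⟪x, A.1 x⟫_ℂ).re) / ‖x‖ ^ 2
  let w : H := A.1 x + t • x
  have hxw : ⟪x, w⟫_ℂ = 1 := by
    rw [inner_add_right, ← Complex.coe_smul, inner_smul_right, Complex.ofReal_div,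
      Complex.ofReal_sub, Complex.ofReal_one, ofReal_re_inner_apply_self, ← inner_self_eq_ofReal,
      div_mul_cancel₀ _ hx', add_sub_cancel]
  have hw : w ≠ 0 := by
    intro hw
    rw [hw, inner_zero_right] at hxw
    exact zero_ne_one hxw
  have hwx : (rankOneSA w).1 x = A.1 x + t • x := by
    rw [rankOneSA_apply, ← inner_conj_symm, hxw, map_one, one_smul]
  have hsub : (A - rankOneSA w).1 x = -t • x := by
    change A.1 x - (rankOneSA w).1 x = -t • x
    rw [hwx]
    module
  obtain ⟨l, hl⟩ := hθ.exists_map_sub_map_apply_eq_smul hh hθ_rankOne hsub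
  refine commC_rankOneSA_iff.2 ⟨l + r w + h e * t, ?_⟩
  rw [hθ_rankOne, scale_eq hw] at hl
  change (θ A).1 x - (h e • (rankOneSA w).1 x + r w • x) = l • x at hl
  change (θ A).1 x - h e • A.1 x = _
  rw [sub_eq_iff_eq_add.1 hl, hwx]
  module

end PreservesCommSub

end MapRankOne

section Conjugation

omit [CompleteSpace H] in
lemma inner_map_map_of_antilinear (U : H ≃ₗᵢ⋆[ℂ] H) (x z : H) :
    ⟪U x, U z⟫_ℂ = conj ⟪x, z⟫_ℂ := by
  have map_I_smul : U (Complex.I • z) = -(Complex.I • U z) := by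
    rw [U.map_smulₛₗ, Complex.conj_I, neg_smul]
  have hadd : ‖U x + Complex.I • U z‖ = ‖x - Complex.I • z‖ := by
    rw [← U.norm_map (x - _), map_sub, map_I_smul, sub_neg_eq_add]
  have hsub : ‖U x - Complex.I • U z‖ = ‖x + Complex.I • z‖ := by
    rw [← U.norm_map (x + _), map_add, map_I_smul, ← sub_eq_add_neg]
  rw [inner_eq_sum_norm_sq_div_four, inner_eq_sum_norm_sq_div_four, ← map_add, ← map_sub,
    U.norm_map, U.norm_map]
  simp only [RCLike.I_to_complex, hadd, hsub, map_div₀, map_add, map_sub, map_mul, map_pow,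
    RCLike.conj_ofReal, Complex.conj_I, map_ofNat]
  ring

variable {σ σ' : ℂ →+* ℂ} [RingHomInvPair σ σ'] [RingHomInvPair σ' σ]

/-- The operator `U⁻¹ A U`. The condition on `U` holds for `σ = id` and `σ = conj`, the unitary and
the antiunitary operators. -/
def conjSA (U : H ≃ₛₗᵢ[σ] H) (hU : ∀ x z, ⟪U x, U z⟫_ℂ = σ ⟪x, z⟫_ℂ) (A : 𝓑ₛ(H)) : 𝓑ₛ(H) :=
  ⟨(U.symm.toContinuousLinearEquiv : H →SL[σ'] H).comp
      (A.1.comp (U.toContinuousLinearEquiv : H →SL[σ] H)), by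
    refine ContinuousLinearMap.isSelfAdjoint_iff_isSymmetric.2 fun v w => σ.injective ?_
    change σ ⟪U.symm (A.1 (U v)), w⟫_ℂ = σ ⟪v, U.symm (A.1 (U w))⟫_ℂ
    rw [← hU, ← hU, U.apply_symm_apply, U.apply_symm_apply, selfAdjoint_inner_left]⟩

variable {U : H ≃ₛₗᵢ[σ] H} (hU : ∀ x z, ⟪U x, U z⟫_ℂ = σ ⟪x, z⟫_ℂ)

lemma conjSA_apply (A : 𝓑ₛ(H)) (v : H) : (conjSA U hU A).1 v = U.symm (A.1 (U v)) := rfl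

lemma conjSA_sub (A B : 𝓑ₛ(H)) : conjSA U hU (A - B) = conjSA U hU A - conjSA U hU B := by
  ext v
  exact map_sub U.symm (A.1 (U v)) (B.1 (U v))

lemma commC_conjSA_iff {A B : 𝓑ₛ(H)} : CommC (conjSA U hU A) (conjSA U hU B) ↔ CommC A B := by
  simp only [commC_iff, conjSA_apply, U.apply_symm_apply, U.symm.injective.eq_iff]
  exact (U.surjective.forall (p := fun v => A.1 (B.1 v) = B.1 (A.1 v))).symm

lemma conjSA_surjective : Function.Surjective (conjSA U hU) := fun A => by
  have hU' (x z : H) : ⟪U.symm x, U.symm z⟫_ℂ = σ' ⟪x, z⟫_ℂ := by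
    rw [← RingHomInvPair.comp_apply_eq (σ := σ) (σ' := σ') (x := ⟪U.symm x, _⟫_ℂ), ← hU,
      U.apply_symm_apply, U.apply_symm_apply]
  refine ⟨conjSA U.symm hU' A, ?_⟩
  ext v
  simp [conjSA_apply]

lemma conjSA_smul_rankOneSA_add (x : H) (h r : ℝ) :
    conjSA U hU (h • rankOneSA (U x) + r • (1 : 𝓑ₛ(H))) = h • rankOneSA x + r • (1 : 𝓑ₛ(H)) := by
  ext v
  change U.symm (h • ⟪U x, U v⟫_ℂ • U x + r • U v) = h • ⟪x, v⟫_ℂ • x + r • v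
  rw [map_add, map_real_smul U.symm U.symm.continuous, map_real_smul U.symm U.symm.continuous,
    U.symm.map_smulₛₗ, hU, RingHomInvPair.comp_apply_eq, U.symm_apply_apply, U.symm_apply_apply]

namespace PreservesCommSub

variable {φ : 𝓑ₛ(H) → 𝓑ₛ(H)} (hφ : PreservesCommSub φ)
include hφ hU

lemma conjSA_comp : PreservesCommSub (conjSA U hU ∘ φ) where
  surjective := (conjSA_surjective hU).comp hφ.surjective
  commC_sub_iff A B C := by
    rw [Function.comp_apply, Function.comp_apply, Function.comp_apply, ← conjSA_sub,
      commC_conjSA_iff, hφ.commC_sub_iff]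

lemma exists_map_apply_eq (hdim : 3 ≤ Module.rank ℂ H)
    (hφ_rankOne : ∀ x, ∃ h r : ℝ, h ≠ 0 ∧
      φ (rankOneSA x) = h • rankOneSA (U x) + r • (1 : 𝓑ₛ(H))) :
    ∃ c : ℝ, c ≠ 0 ∧ ∃ g : 𝓑ₛ(H) → ℝ, ∀ (A : 𝓑ₛ(H)) (x : H),
      (φ A).1 x = (c : ℂ) • U (A.1 (U.symm x)) + (g A : ℂ) • x := by
  choose h r hh hφU using hφ_rankOne
  obtain ⟨c, hc, hφc⟩ := (hφ.conjSA_comp hU).exists_map_eq_smul_add_smul_one hh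
    (fun x => by rw [Function.comp_apply, hφU, conjSA_smul_rankOneSA_add]) hdim
  choose g hg using hφc
  refine ⟨c, hc, g, fun A x => ?_⟩
  have hAx : U.symm ((φ A).1 (U (U.symm x))) = c • A.1 (U.symm x) + g A • U.symm x :=
    congrArg (fun B : 𝓑ₛ(H) => B.1 (U.symm x)) (hg A)
  rw [U.apply_symm_apply] at hAx
  rw [← U.apply_symm_apply ((φ A).1 x), hAx, map_add, map_real_smul U U.continuous,
    map_real_smul U U.continuous, U.apply_symm_apply, Complex.coe_smul, Complex.coe_smul]

end PreservesCommSub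

end Conjugation

theorem stmt0
    (hdim : 3 ≤ Module.rank ℂ H)
    (φ : selfAdjoint (H →L[ℂ] H) → selfAdjoint (H →L[ℂ] H))
    (hsurj : Function.Surjective φ)
    (hpres : ∀ A B C : selfAdjoint (H →L[ℂ] H),
      CommC (A - B) C ↔ CommC (φ A - φ B) (φ C)) :
    ∃ c : ℝ, c ≠ 0 ∧ ∃ g : selfAdjoint (H →L[ℂ] H) → ℝ,
      ((∃ U : H ≃ₗᵢ[ℂ] H, ∀ (A : selfAdjoint (H →L[ℂ] H)) (x : H),
          (φ A : H →L[ℂ] H) x = (c : ℂ) • U ((A : H →L[ℂ] H) (U.symm x)) + (g A : ℂ) • x) ∨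
       (∃ U : H ≃ₗᵢ⋆[ℂ] H, ∀ (A : selfAdjoint (H →L[ℂ] H)) (x : H),
          (φ A : H →L[ℂ] H) x = (c : ℂ) • U ((A : H →L[ℂ] H) (U.symm x)) + (g A : ℂ) • x)) := by
  have hφ : PreservesCommSub φ := ⟨hsurj, fun A B C => (hpres A B C).symm⟩
  obtain ⟨y, hy, hφy⟩ := hφ.exists_isOrthoRayMap hdim
  have rankOneSA_eq {u x : H} (hu : u ∈ ℂ ∙ y x) (hux : ‖u‖ = ‖x‖) :
      rankOneSA (y x) = rankOneSA u :=
    (rankOneSA_eq_of_mem_span_singleton hu (hux.trans (hy.norm_map x).symm)).symm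
  rcases hy.exists_linearIsometryEquiv hdim with ⟨U, hU⟩ | ⟨U, hU⟩
  · obtain ⟨c, hc, g, hg⟩ := hφ.exists_map_apply_eq (U := U) U.inner_map_map hdim fun x => by
      simpa only [rankOneSA_eq (hU x) (U.norm_map x)] using hφy x
    exact ⟨c, hc, g, .inl ⟨U, hg⟩⟩
  · obtain ⟨c, hc, g, hg⟩ :=
      hφ.exists_map_apply_eq (U := U) (inner_map_map_of_antilinear U) hdim fun x => by
        simpa only [rankOneSA_eq (hU x) (U.norm_map x)] using hφy x
    exact ⟨c, hc, g, .inr ⟨U, hg⟩⟩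
end
end

section
/- Let H be a complex Hilbert space with dim H ≥ 3 and let φ : B_s(H) → B_s(H) be an additive surjective map such that for all A, B ∈ B_s(H), AB = BA if and only if φ(A)φ(B) = φ(B)φ(A). Then there exist a nonzero real scalar c, an operator U on H that is either unitary or antiunitary, and an additive function g : B_s(H) → ℝ such that φ(A) = c·U A U* + g(A)·I for all A ∈ B_s(H). -/
noncomputable section

variable {H : Type*} [NormedAddCommGroup H] [InnerProductSpace ℂ H] [CompleteSpace H]

/-!
For commuting additive surjections the double commutant is an invariant, and it singles out the
self-adjoint operators with at most two spectral values. Adding such operators to each other tells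
the rank one projections apart from the others, so `φ` maps, modulo scalars, every line `ℝ • x ⊗ x`
onto another line `ℝ • v ⊗ v`, with the same additive coordinate function for all `x`.
Comparing the images of both sides of `(x + y) ⊗ (x + y) + (x - y) ⊗ (x - y) = 2 x ⊗ x + 2 y ⊗ y`
and its weighted versions shows that this function is monotone up to sign, hence linear. After
rescaling, the ray map `x ↦ v` is induced by a unitary or antiunitary operator `U`. Finally,
subtracting from `A` a symmetrized dyad `x ⊗ y + y ⊗ x` turns `x` into an eigenvector, and this
identifies the image of `A` with `U A U⁻¹` modulo scalars.
-/

namespace CommutativityPreserver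

open scoped InnerProductSpace ComplexConjugate

section Proportional

theorem exists_eq_smul_of_forall_exists_eq_smul {K V W : Type*} [Field K] [AddCommGroup V]
    [Module K V] [AddCommGroup W] [Module K W] {f g : V →ₗ[K] W}
    (h : ∀ x, ∃ c : K, f x = c • g x) : ∃ c : K, f = c • g := by
  by_cases hg : ∀ x, g x = 0
  · refine ⟨0, LinearMap.ext fun x => ?_⟩
    obtain ⟨c, hc⟩ := h x
    simp [hc, hg x]
  push Not at hg
  obtain ⟨x₀, hx₀⟩ := hg
  obtain ⟨c, hc⟩ := h x₀
  refine ⟨c, LinearMap.ext fun x => ?_⟩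
  obtain ⟨a, ha⟩ := h x
  obtain ⟨d, hd⟩ := h (x + x₀)
  have hdep : (a - d) • g x = (d - c) • g x₀ := by
    rw [map_add, map_add, ha, hc] at hd
    linear_combination (norm := module) hd
  by_cases had : a = d
  · have hdc : d = c := by
      rw [had, sub_self, zero_smul, eq_comm, smul_eq_zero_iff_left hx₀] at hdep
      exact sub_eq_zero.mp hdep
    rw [ha, had, hdc, LinearMap.smul_apply]
  · obtain ⟨k, hk⟩ : ∃ k : K, g x = k • g x₀ :=
      ⟨(a - d)⁻¹ * (d - c), by rw [mul_smul, ← hdep, inv_smul_smul₀ (sub_ne_zero.mpr had)]⟩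
    obtain ⟨b, hb⟩ := h (x - k • x₀)
    simp only [map_sub, map_smul, hk, sub_self, smul_zero, sub_eq_zero] at hb
    rw [LinearMap.smul_apply, hb, hk, hc, smul_comm]

end Proportional

section FunctionalCalculus

theorem exists_mul_eq_zero_of_isSelfAdjoint {A : Type*} [Ring A] [StarRing A] [Algebra ℝ A]
    [TopologicalSpace A] [ContinuousFunctionalCalculus ℝ A IsSelfAdjoint] [IsTopologicalRing A]
    [T2Space A] {a : A} (ha : IsSelfAdjoint a) (hna : ∀ r : ℝ, a ≠ algebraMap ℝ A r) :
    ∃ f g : A, IsSelfAdjoint f ∧ IsSelfAdjoint g ∧ f ≠ 0 ∧ g ≠ 0 ∧ f * g = 0 ∧ g * f = 0 ∧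
      ∀ b, Commute a b → Commute f b ∧ Commute g b := by
  have hσ : (spectrum ℝ a).Nontrivial := by
    rw [← Set.not_subsingleton_iff]
    intro h
    rcases h.eq_empty_or_singleton with h | ⟨r, h⟩
    · exact hna 0 (CFC.eq_algebraMap_of_spectrum_subset_singleton a 0 (by simp [h]))
    · exact hna r (CFC.eq_algebraMap_of_spectrum_subset_singleton a r h.subset)
  obtain ⟨r, hr, s, hs, hrs⟩ := hσ.exists_lt
  let p : ℝ → ℝ := fun u => max (u - (r + s) / 2) 0
  let q : ℝ → ℝ := fun u => max ((r + s) / 2 - u) 0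
  have hp : Continuous p := by fun_prop
  have hq : Continuous q := by fun_prop
  have hpq (u : ℝ) : p u * q u = 0 := by
    rcases le_total u ((r + s) / 2) with h | h
    · rw [show p u = 0 from max_eq_right (by linarith), zero_mul]
    · rw [show q u = 0 from max_eq_right (by linarith), mul_zero]
  have hne {k : ℝ → ℝ} (hk : Continuous k) {u : ℝ} (hu : u ∈ spectrum ℝ a) (hku : k u ≠ 0) :
      cfc k a ≠ 0 := fun h =>
    hku <| eqOn_of_cfc_eq_cfc (g := 0) (h.trans (cfc_zero ℝ a).symm) hk.continuousOn
      continuousOn_const ha hu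
  refine ⟨cfc p a, cfc q a, cfc_predicate p a, cfc_predicate q a, hne hp hs ?_, hne hq hr ?_, ?_,
    ?_, fun b hb => ⟨hb.cfc_real p, hb.cfc_real q⟩⟩
  · exact ne_of_gt (lt_max_of_lt_left (by linarith))
  · exact ne_of_gt (lt_max_of_lt_left (by linarith))
  · rw [← cfc_mul p q a hp.continuousOn hq.continuousOn]
    simp only [hpq, cfc_const_zero]
  · rw [← cfc_mul q p a hq.continuousOn hp.continuousOn]
    simp only [mul_comm (q _), hpq, cfc_const_zero]

end FunctionalCalculus

section Orthogonal

theorem exists_norm_eq_one_forall_inner_eq_zero {𝕜 E : Type*} [RCLike 𝕜] [NormedAddCommGroup E]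
    [InnerProductSpace 𝕜 E] (s : Finset E) (hs : (s.card : Cardinal) < Module.rank 𝕜 E) :
    ∃ z : E, ‖z‖ = 1 ∧ ∀ x ∈ s, ⟪x, z⟫_𝕜 = 0 := by
  let V : Submodule 𝕜 E := Submodule.span 𝕜 s
  have hV : V ≠ ⊤ := fun h => by
    have hle : Module.rank 𝕜 V ≤ s.card := rank_span_finset_le s
    rw [h, rank_top] at hle
    exact hle.not_gt hs
  have hV' : Vᗮ ≠ ⊥ := fun h => hV (Submodule.orthogonal_eq_bot_iff.mp h)
  obtain ⟨w, hw, hw₀⟩ := Submodule.exists_mem_ne_zero_of_ne_bot hV'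
  refine ⟨((‖w‖⁻¹ : ℝ) : 𝕜) • w, ?_, fun x hx => ?_⟩
  · rw [RCLike.ofReal_inv, norm_smul_inv_norm hw₀]
  · exact Submodule.inner_right_of_mem_orthogonal (Submodule.subset_span hx) (Vᗮ.smul_mem _ hw)

theorem exists_norm_eq_one_inner_eq_zero {𝕜 E : Type*} [RCLike 𝕜] [NormedAddCommGroup E]
    [InnerProductSpace 𝕜 E] (hE : 1 < Module.rank 𝕜 E) (x : E) :
    ∃ z : E, ‖z‖ = 1 ∧ ⟪x, z⟫_𝕜 = 0 := by
  obtain ⟨z, hz, h⟩ := exists_norm_eq_one_forall_inner_eq_zero (𝕜 := 𝕜) {x} (by simpa)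
  exact ⟨z, hz, h x (by simp)⟩

theorem exists_norm_eq_one_inner_eq_zero_and {𝕜 E : Type*} [RCLike 𝕜] [NormedAddCommGroup E]
    [InnerProductSpace 𝕜 E] (hE : 2 < Module.rank 𝕜 E) (x y : E) :
    ∃ z : E, ‖z‖ = 1 ∧ ⟪x, z⟫_𝕜 = 0 ∧ ⟪y, z⟫_𝕜 = 0 := by
  classical
  obtain ⟨z, hz, h⟩ := exists_norm_eq_one_forall_inner_eq_zero (𝕜 := 𝕜) {x, y} <|
    hE.trans_le' <| by exact_mod_cast Finset.card_le_two
  exact ⟨z, hz, h x (by simp), h y (by simp)⟩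

theorem norm_add_eq_one_and_norm_sub_eq_one {𝕜 E : Type*} [RCLike 𝕜] [NormedAddCommGroup E]
    [InnerProductSpace 𝕜 E] {x y : E} (hxy : ⟪x, y⟫_𝕜 = 0) (h : ‖x‖ ^ 2 + ‖y‖ ^ 2 = 1) :
    ‖x + y‖ = 1 ∧ ‖x - y‖ = 1 := by
  constructor
  · rw [← pow_eq_one_iff_of_nonneg (norm_nonneg _) two_ne_zero, norm_add_sq (𝕜 := 𝕜), hxy]
    simpa using h
  · rw [← pow_eq_one_iff_of_nonneg (norm_nonneg _) two_ne_zero, norm_sub_sq (𝕜 := 𝕜), hxy]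
    simpa using h

end Orthogonal

/-- The real vector space of bounded self-adjoint operators on `H`. -/
abbrev SA (H : Type*) [NormedAddCommGroup H] [InnerProductSpace ℂ H] [CompleteSpace H] : Type _ :=
  selfAdjoint (H →L[ℂ] H)

scoped instance : CoeFun (SA H) fun _ => H → H := ⟨fun A => (A : H →L[ℂ] H)⟩

-- Shortcuts: the generic search for these instances is slow.
local instance : AddCommGroup (SA H) := inferInstance
local instance : AddCommMonoid (SA H) := inferInstance
local instance : AddMonoid (SA H) := inferInstance
local instance : AddZeroClass (SA H) := inferInstance
local instance : Module ℝ (SA H) := inferInstance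
local instance : DistribSMul ℝ (SA H) := inferInstance

section Basic

@[ext] theorem SA.ext {A B : SA H} (h : ∀ x, A x = B x) : A = B :=
  Subtype.ext (ContinuousLinearMap.ext h)

theorem commC_iff {A B : SA H} : CommC A B ↔ ∀ x, A (B x) = B (A x) :=
  ContinuousLinearMap.ext_iff

theorem isSymmetric (A : SA H) : (A : H →ₗ[ℂ] H).IsSymmetric :=
  ContinuousLinearMap.isSelfAdjoint_iff_isSymmetric.mp A.2

theorem inner_apply_left (A : SA H) (x y : H) : ⟪A x, y⟫_ℂ = ⟪x, A y⟫_ℂ :=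
  isSymmetric A x y

@[simp] theorem add_apply (A B : SA H) (x : H) : (A + B) x = A x + B x := rfl
@[simp] theorem sub_apply (A B : SA H) (x : H) : (A - B) x = A x - B x := rfl
@[simp] theorem smul_apply (r : ℝ) (A : SA H) (x : H) : (r • A) x = (r : ℂ) • A x := rfl
@[simp] theorem one_apply (x : H) : (1 : SA H) x = x := rfl
@[simp] theorem zero_apply (x : H) : (0 : SA H) x = 0 := rfl

theorem ofReal_re_of_apply_eq_smul {A : SA H} {x : H} {c : ℂ} (hx : x ≠ 0) (h : A x = c • x) :
    (c.re : ℂ) = c :=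
  Complex.conj_eq_iff_re.mp <| (isSymmetric A).conj_eigenvalue_eq_self <|
    Module.End.hasEigenvalue_of_hasEigenvector ⟨Module.End.mem_eigenspace_iff.mpr h, hx⟩

theorem exists_real_smul_of_forall_exists_smul {A : SA H} {T : H →L[ℂ] H}
    (h : ∀ x, ∃ c : ℂ, A (T x) = c • T x) : ∃ r : ℝ, ∀ x, A (T x) = (r : ℂ) • T x := by
  obtain ⟨c, hc⟩ := exists_eq_smul_of_forall_exists_eq_smul
    (f := ((A : H →L[ℂ] H) * T : H →L[ℂ] H).toLinearMap) (g := T.toLinearMap) h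
  replace hc (x : H) : A (T x) = c • T x := LinearMap.congr_fun hc x
  by_cases hT : ∀ x, T x = 0
  · exact ⟨0, fun x => by rw [hT, map_zero, smul_zero]⟩
  push Not at hT
  obtain ⟨x, hx⟩ := hT
  exact ⟨c.re, by rwa [ofReal_re_of_apply_eq_smul hx (hc x)]⟩

end Basic

/-- The real scalar operators, along which operators are compared as `A ≡ B [SMOD scalars]`. -/
def scalars : Submodule ℝ (SA H) := Submodule.span ℝ {1}

section Scalars

theorem mem_scalars_iff {A : SA H} : A ∈ scalars ↔ ∃ r : ℝ, ∀ x, A x = (r : ℂ) • x := by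
  refine Submodule.mem_span_singleton.trans (exists_congr fun r => ?_)
  exact ⟨fun h x => by rw [← h]; rfl, fun h => SA.ext fun x => (h x).symm⟩

theorem smodEq_iff {A B : SA H} :
    A ≡ B [SMOD scalars] ↔ ∃ r : ℝ, ∀ x, A x = B x + (r : ℂ) • x := by
  rw [SModEq.sub_mem, mem_scalars_iff]
  simp only [sub_apply, sub_eq_iff_eq_add']

theorem eq_of_smodEq_of_apply_eq {A B : SA H} (h : A ≡ B [SMOD scalars]) {z : H} (hz : z ≠ 0)
    (hAB : A z = B z) : A = B := by
  obtain ⟨r, hr⟩ := smodEq_iff.mp h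
  have hrz : (r : ℂ) • z = 0 := by simpa [hAB] using hr z
  ext x
  rw [hr x, (smul_eq_zero_iff_left hz).mp hrz, zero_smul, add_zero]

theorem commC_congr_left {A B C : SA H} (h : A ≡ B [SMOD scalars]) : CommC A C ↔ CommC B C := by
  obtain ⟨r, hr⟩ := smodEq_iff.mp h
  simp only [commC_iff, hr, map_add, map_smul, add_left_inj]

theorem commC_comm {A B : SA H} : CommC A B ↔ CommC B A := eq_comm

theorem commC_congr_right {A B C : SA H} (h : A ≡ B [SMOD scalars]) : CommC C A ↔ CommC C B := by
  rw [commC_comm, commC_congr_left h, commC_comm]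

end Scalars

section Dyad

/-- The dyad `x ⊗ x`, that is the operator `z ↦ ⟪x, z⟫ • x`. -/
def dyad (x : H) : SA H :=
  ⟨InnerProductSpace.rankOne ℂ x x, (InnerProductSpace.isPositive_rankOne_self x).isSelfAdjoint⟩

/-- The symmetrized dyad `x ⊗ y + y ⊗ x`. -/
def symDyad (x y : H) : SA H := dyad (x + y) - dyad x - dyad y

@[simp] theorem dyad_apply (x z : H) : dyad x z = ⟪x, z⟫_ℂ • x := rfl

theorem symDyad_apply (x y z : H) : symDyad x y z = ⟪x, z⟫_ℂ • y + ⟪y, z⟫_ℂ • x := by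
  simp only [symDyad, sub_apply, dyad_apply, inner_add_left]
  module

theorem dyad_smul (c : ℂ) (x : H) : dyad (c • x) = (‖c‖ ^ 2) • dyad x := by
  ext z
  simp only [dyad_apply, smul_apply, inner_smul_left, smul_smul, Complex.ofReal_pow,
    ← Complex.conj_mul']
  ring_nf

theorem dyad_add_dyad_sub (x y : H) :
    dyad (x + y) + dyad (x - y) = (2 : ℝ) • dyad x + (2 : ℝ) • dyad y := by
  ext z
  simp only [add_apply, smul_apply, dyad_apply, inner_add_left, inner_sub_left,
    Complex.ofReal_ofNat]
  module

theorem commC_dyad_iff {A : SA H} {x : H} : CommC A (dyad x) ↔ ∃ r : ℝ, A x = (r : ℂ) • x := by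
  rcases eq_or_ne x 0 with rfl | hx
  · exact iff_of_true (commC_iff.mpr fun z => by simp) ⟨0, by simp⟩
  refine ⟨fun h => ?_, fun ⟨r, hr⟩ => commC_iff.mpr fun z => ?_⟩
  · have hA : ⟪x, x⟫_ℂ • A x = ⟪x, A x⟫_ℂ • x := by simpa using commC_iff.mp h x
    have hA' : A x = ((⟪x, x⟫_ℂ)⁻¹ * ⟪x, A x⟫_ℂ) • x := by
      rw [mul_smul, ← hA, inv_smul_smul₀ (inner_self_ne_zero.mpr hx)]
    exact ⟨_, (ofReal_re_of_apply_eq_smul hx hA').symm ▸ hA'⟩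
  · rw [dyad_apply, dyad_apply, map_smul, ← inner_apply_left, hr, inner_smul_left,
      Complex.conj_ofReal, smul_smul, mul_comm]

theorem exists_apply_eq_smul_of_forall_commC_dyad {A : SA H} (T : H →L[ℂ] H)
    (h : ∀ x, CommC A (dyad (T x))) : ∃ r : ℝ, ∀ x, A (T x) = (r : ℂ) • T x :=
  exists_real_smul_of_forall_exists_smul fun x => (commC_dyad_iff.mp (h x)).imp' _ fun _ => id

theorem mem_scalars_of_forall_commC_dyad {A : SA H} (h : ∀ x, CommC A (dyad x)) : A ∈ scalars :=
  mem_scalars_iff.mpr <| exists_apply_eq_smul_of_forall_commC_dyad 1 h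

theorem mem_scalars_iff_forall_commC {A : SA H} : A ∈ scalars ↔ ∀ B, CommC A B := by
  refine ⟨fun h B => ?_, fun h => mem_scalars_of_forall_commC_dyad fun x => h _⟩
  rw [commC_congr_left (SModEq.zero.mpr h)]
  exact commC_iff.mpr fun _ => (map_zero (B : H →L[ℂ] H)).symm

end Dyad

/-- The set of self-adjoint operators commuting with `A`. That `B` lies in the double commutant of
`A` is expressed as `commutant A ⊆ commutant B`. -/
def commutant (A : SA H) : Set (SA H) := {B | CommC A B}

/-- The operators with at most two spectral values: affine functions of a projection. -/
def IsTwoValued (A : SA H) : Prop :=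
  ∃ (P : SA H) (a : ℝ), (∀ x, P (P x) = P x) ∧ A ≡ a • P [SMOD scalars]

section TwoValued

theorem commutant_congr {A B : SA H} (h : A ≡ B [SMOD scalars]) : commutant A = commutant B :=
  Set.ext fun _ => commC_congr_left h

theorem commutant_smul {a : ℝ} (ha : a ≠ 0) (A : SA H) : commutant (a • A) = commutant A := by
  have ha' : (a : ℂ) ≠ 0 := Complex.ofReal_ne_zero.mpr ha
  ext B
  simp only [commutant, Set.mem_ofPred_eq, commC_iff, smul_apply, map_smul, smul_right_inj ha']

theorem commC_iff_of_commutant_eq {A A' B B' : SA H} (hA : commutant A = commutant A')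
    (hB : commutant B = commutant B') : CommC A B ↔ CommC A' B' :=
  calc CommC A B ↔ CommC A' B := Set.ext_iff.mp hA B
    _ ↔ CommC B A' := commC_comm
    _ ↔ CommC B' A' := Set.ext_iff.mp hB A'
    _ ↔ CommC A' B' := commC_comm

theorem mem_scalars_of_commutant_subset {A B : SA H} (h : commutant A ⊆ commutant B)
    (hA : A ∈ scalars) : B ∈ scalars :=
  mem_scalars_iff_forall_commC.mpr fun C => h (mem_scalars_iff_forall_commC.mp hA C)

theorem exists_smodEq_smul_of_commutant_subset {P B : SA H} (hP : ∀ x, P (P x) = P x)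
    (h : commutant P ⊆ commutant B) : ∃ b : ℝ, B ≡ b • P [SMOD scalars] := by
  obtain ⟨r, hr⟩ := exists_apply_eq_smul_of_forall_commC_dyad (A := B) P fun x =>
    h (commC_dyad_iff.mpr ⟨1, by simp [hP]⟩)
  obtain ⟨s, hs⟩ := exists_apply_eq_smul_of_forall_commC_dyad (A := B) (1 - P) fun x =>
    h (commC_dyad_iff.mpr ⟨0, by simp [hP]⟩)
  refine ⟨r - s, smodEq_iff.mpr ⟨s, fun x => ?_⟩⟩
  have hs' : B x - B (P x) = (s : ℂ) • (x - P x) := by simpa using hs x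
  simp only [smul_apply, Complex.ofReal_sub]
  linear_combination (norm := module) hs' + hr x

theorem IsTwoValued.mem_scalars_or_commutant_subset {A B : SA H} (hA : IsTwoValued A)
    (h : commutant A ⊆ commutant B) : B ∈ scalars ∨ commutant B ⊆ commutant A := by
  obtain ⟨P, a, hP, hAP⟩ := hA
  rcases eq_or_ne a 0 with rfl | ha
  · exact .inl <| mem_scalars_of_commutant_subset h (by simpa [SModEq.zero] using hAP)
  rw [commutant_congr hAP, commutant_smul ha] at h ⊢
  obtain ⟨b, hB⟩ := exists_smodEq_smul_of_commutant_subset hP h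
  rcases eq_or_ne b 0 with rfl | hb
  · exact .inl (by simpa [SModEq.zero] using hB)
  · exact .inr (by rw [commutant_congr hB, commutant_smul hb])

theorem exists_mul_eq_zero_of_notMem_scalars {A : SA H} (hA : A ∉ scalars) :
    ∃ F G : SA H, F ≠ 0 ∧ G ≠ 0 ∧ (∀ x, F (G x) = 0) ∧ (∀ x, G (F x) = 0) ∧
      commutant A ⊆ commutant F ∧ commutant A ⊆ commutant G := by
  obtain ⟨f, g, hf, hg, hf₀, hg₀, hfg, hgf, h⟩ := exists_mul_eq_zero_of_isSelfAdjoint A.2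
    fun r hr => hA <| mem_scalars_iff.mpr ⟨r, fun x => by rw [hr]; rfl⟩
  exact ⟨⟨f, hf⟩, ⟨g, hg⟩, fun h => hf₀ (congrArg Subtype.val h),
    fun h => hg₀ (congrArg Subtype.val h), DFunLike.congr_fun hfg, DFunLike.congr_fun hgf,
    fun B hB => (h B hB).1, fun B hB => (h B hB).2⟩

theorem notMem_scalars_of_apply_apply_eq_zero {F G : SA H} (hF : F ≠ 0) (hG : G ≠ 0)
    (hFG : ∀ x, F (G x) = 0) : G ∉ scalars := fun hGs => by
  obtain ⟨r, hr⟩ := mem_scalars_iff.mp hGs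
  rcases eq_or_ne (r : ℂ) 0 with hr₀ | hr₀
  · exact hG (SA.ext fun x => by simp [hr, hr₀])
  · exact hF (SA.ext fun x => (smul_eq_zero_iff_right hr₀).mp (by rw [← map_smul, ← hr, hFG]))

theorem eq_zero_of_forall_apply_apply_eq_zero {F : SA H} (h : ∀ x, F (F x) = 0) : F = 0 :=
  SA.ext fun x => inner_self_eq_zero (𝕜 := ℂ).mp <| by
    rw [inner_apply_left, h, inner_zero_right]

theorem isTwoValued_iff {A : SA H} : IsTwoValued A ↔
    ∀ B, commutant A ⊆ commutant B → B ∈ scalars ∨ commutant B ⊆ commutant A := by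
  refine ⟨fun hA B => hA.mem_scalars_or_commutant_subset, fun h => ?_⟩
  by_cases hA : A ∈ scalars
  · exact ⟨0, 0, fun x => rfl, by simpa [SModEq.zero] using hA⟩
  obtain ⟨F, G, hF, hG, hFG, hGF, hAF, hAG⟩ := exists_mul_eq_zero_of_notMem_scalars hA
  have hGA : commutant G ⊆ commutant A :=
    (h G hAG).resolve_left (notMem_scalars_of_apply_apply_eq_zero hF hG hFG)
  have hFA : commutant F ⊆ commutant A :=
    (h F hAF).resolve_left (notMem_scalars_of_apply_apply_eq_zero hG hF hGF)
  obtain ⟨r, hr⟩ := exists_apply_eq_smul_of_forall_commC_dyad (A := F) F fun x =>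
    hAF <| hGA <| commC_dyad_iff.mpr ⟨0, by simp [hGF]⟩
  have hr₀ : (r : ℂ) ≠ 0 := fun hr₀ =>
    hF <| eq_zero_of_forall_apply_apply_eq_zero fun x => by rw [hr, hr₀, zero_smul]
  have hP (x : H) : (r⁻¹ • F) ((r⁻¹ • F) x) = (r⁻¹ • F) x := by
    simp only [smul_apply, map_smul, hr, Complex.ofReal_inv, inv_smul_smul₀ hr₀]
  have hPA : commutant (r⁻¹ • F) ⊆ commutant A := by
    rwa [commutant_smul (inv_ne_zero (Complex.ofReal_ne_zero.mp hr₀))]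
  exact ⟨_, (exists_smodEq_smul_of_commutant_subset hP hPA).imp fun a ha => ⟨hP, ha⟩⟩

theorem isTwoValued_congr {A B : SA H} (h : A ≡ B [SMOD scalars]) :
    IsTwoValued A ↔ IsTwoValued B :=
  exists_congr fun _ => exists_congr fun _ => and_congr_right fun _ => ⟨h.symm.trans, h.trans⟩

theorem IsTwoValued.smul {P : SA H} (hP : ∀ x, P (P x) = P x) (a : ℝ) : IsTwoValued (a • P) :=
  ⟨P, a, hP, SModEq.rfl⟩

theorem eq_zero_or_eq_one_of_apply_eq_smul {P : SA H} (hP : ∀ x, P (P x) = P x) {x : H}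
    (hx : x ≠ 0) {c : ℂ} (hc : P x = c • x) : c = 0 ∨ c = 1 := by
  have h : (c * c) • x = c • x := by rw [mul_smul, ← hc, ← map_smul, ← hc, hP, hc]
  rw [or_comm, ← mul_right_eq_self₀]
  exact smul_left_injective ℂ hx h

theorem IsTwoValued.exists_eigenvalues {A : SA H} (hA : IsTwoValued A) :
    ∃ u v : ℝ, ∀ (x : H) (l : ℝ), x ≠ 0 → A x = (l : ℂ) • x → l = u ∨ l = v := by
  obtain ⟨P, a, hP, hAP⟩ := hA
  obtain ⟨b, hb⟩ := smodEq_iff.mp hAP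
  refine ⟨b, a + b, fun x l hx hl => ?_⟩
  rw [hb, smul_apply] at hl
  rcases eq_or_ne a 0 with rfl | ha
  · left
    simpa [hx, eq_comm] using hl
  have ha' : (a : ℂ) ≠ 0 := Complex.ofReal_ne_zero.mpr ha
  have hPx : P x = (((l - b) / a : ℝ) : ℂ) • x := by
    rw [← inv_smul_smul₀ ha' (P x), eq_sub_of_add_eq hl, ← sub_smul, smul_smul]
    push_cast
    ring_nf
  rcases eq_zero_or_eq_one_of_apply_eq_smul hP hx hPx with h | h <;> norm_cast at h
  · left
    linarith [(div_eq_zero_iff.mp h).resolve_right ha]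
  · right
    linarith [(div_eq_one_iff_eq ha).mp h]

end TwoValued

/-- Nonconstant affine functions of a rank one projection. -/
def IsRankOneAffine (A : SA H) : Prop :=
  ∃ (x : H) (a : ℝ), ‖x‖ = 1 ∧ a ≠ 0 ∧ A ≡ a • dyad x [SMOD scalars]

/-- A property of `A` phrased through commutation and addition only, which characterizes
`IsRankOneAffine`. -/
def IsSplitting (A : SA H) : Prop :=
  A ∉ scalars ∧ IsTwoValued A ∧ ∀ B, IsTwoValued B → CommC A B →
    ∃ A', commutant A' = commutant A ∧ IsTwoValued (A' + B)

section RankOne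

theorem dyad_apply_self {x : H} (hx : ‖x‖ = 1) : dyad x x = x := by
  rw [dyad_apply, inner_self_eq_norm_sq_to_K, hx]
  simp

theorem dyad_apply_dyad_apply {x : H} (hx : ‖x‖ = 1) (z : H) :
    dyad x (dyad x z) = dyad x z := by
  rw [dyad_apply x z, map_smul, dyad_apply_self hx]

theorem notMem_scalars_of_apply_eq_zero {A : SA H} (hA : A ≠ 0) {z : H} (hz : z ≠ 0)
    (hAz : A z = 0) : A ∉ scalars := fun h =>
  hA <| eq_of_smodEq_of_apply_eq (SModEq.zero.mpr h) hz hAz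

theorem dyad_ne_zero {x : H} (hx : x ≠ 0) : dyad x ≠ 0 := fun h => by
  have hxx : ⟪x, x⟫_ℂ • x = 0 := by rw [← dyad_apply, h, zero_apply]
  exact hx ((smul_eq_zero_iff_right (inner_self_ne_zero.mpr hx)).mp hxx)

theorem dyad_notMem_scalars (hH : 1 < Module.rank ℂ H) {x : H} (hx : x ≠ 0) :
    dyad x ∉ scalars := by
  obtain ⟨z, hz, hxz⟩ := exists_norm_eq_one_inner_eq_zero hH x
  have hz₀ : z ≠ 0 := ne_zero_of_norm_ne_zero (hz.trans_ne one_ne_zero)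
  exact notMem_scalars_of_apply_eq_zero (dyad_ne_zero hx) hz₀ (by rw [dyad_apply, hxz, zero_smul])

theorem exists_isTwoValued_smul_dyad_add {x : H} (hx : ‖x‖ = 1) {Q : SA H}
    (hQ : ∀ y, Q (Q y) = Q y) (hQx : CommC Q (dyad x)) {c : ℝ} (hc : c ≠ 0) :
    ∃ b : ℝ, b ≠ 0 ∧ IsTwoValued (b • dyad x + c • Q) := by
  have hx₀ : x ≠ 0 := ne_zero_of_norm_ne_zero (hx.trans_ne one_ne_zero)
  obtain ⟨r, hr⟩ := commC_dyad_iff.mp hQx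
  rcases eq_zero_or_eq_one_of_apply_eq_smul hQ hx₀ hr with h | h
  · refine ⟨c, hc, ?_⟩
    rw [← smul_add]
    refine IsTwoValued.smul (fun y => ?_) c
    have hQ₁ (y : H) : Q (dyad x y) = 0 := by rw [dyad_apply, map_smul, hr, h, zero_smul, smul_zero]
    have hQ₂ (y : H) : dyad x (Q y) = 0 := by rw [← commC_iff.mp hQx, hQ₁]
    simp only [add_apply, map_add, hQ, hQ₁, hQ₂, dyad_apply_dyad_apply hx, add_zero, zero_add]
  · refine ⟨-c, neg_ne_zero.mpr hc, ?_⟩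
    rw [neg_smul, neg_add_eq_sub, ← smul_sub]
    refine IsTwoValued.smul (fun y => ?_) c
    have hQ₁ (y : H) : Q (dyad x y) = dyad x y := by rw [dyad_apply, map_smul, hr, h, one_smul]
    have hQ₂ (y : H) : dyad x (Q y) = dyad x y := by rw [← commC_iff.mp hQx, hQ₁]
    simp only [sub_apply, map_sub, hQ, hQ₁, hQ₂, dyad_apply_dyad_apply hx, sub_self, sub_zero]

theorem IsRankOneAffine.isSplitting (hH : 1 < Module.rank ℂ H) {A : SA H}
    (hA : IsRankOneAffine A) : IsSplitting A := by
  obtain ⟨x, a, hx, ha, hAx⟩ := hA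
  have hx₀ : x ≠ 0 := ne_zero_of_norm_ne_zero (hx.trans_ne one_ne_zero)
  have hcomm : commutant A = commutant (dyad x) := by
    rw [commutant_congr hAx, commutant_smul ha]
  have hA₂ : IsTwoValued A := ⟨dyad x, a, dyad_apply_dyad_apply hx, hAx⟩
  refine ⟨fun hA => dyad_notMem_scalars hH hx₀ ?_, hA₂, fun B hB hAB => ?_⟩
  · exact mem_scalars_of_commutant_subset hcomm.subset hA
  obtain ⟨Q, c, hQ, hBQ⟩ := hB
  rcases eq_or_ne c 0 with rfl | hc
  · exact ⟨A, rfl, (isTwoValued_congr (by simpa using SModEq.rfl.add hBQ)).mpr hA₂⟩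
  have hQx : CommC Q (dyad x) := by
    have hBx : CommC B (dyad x) := commC_comm.mp (hcomm.subset hAB)
    exact (commutant_smul hc Q).subset ((commutant_congr hBQ).subset hBx)
  obtain ⟨b, hb, h⟩ := exists_isTwoValued_smul_dyad_add hx hQ hQx hc
  exact ⟨b • dyad x, by rw [commutant_smul hb, hcomm],
    (isTwoValued_congr (SModEq.rfl.add hBQ)).mpr h⟩

theorem exists_orthogonal_fixed_points {P : SA H} (hP : ∀ x, P (P x) = P x) (hP₀ : P ≠ 0)
    (hP₁ : ∀ x, ‖x‖ = 1 → P ≠ dyad x) :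
    ∃ x z, ‖x‖ = 1 ∧ z ≠ 0 ∧ ⟪x, z⟫_ℂ = 0 ∧ P x = x ∧ P z = z := by
  obtain ⟨w, hw⟩ : ∃ w, P w ≠ 0 := by
    by_contra! h
    exact hP₀ (SA.ext h)
  set x : H := (‖P w‖ : ℂ)⁻¹ • P w with hx
  have hx₁ : ‖x‖ = 1 := norm_smul_inv_norm (𝕜 := ℂ) hw
  have hPx : P x = x := by rw [hx, map_smul, hP]
  by_contra! h
  refine hP₁ x hx₁ (SA.ext fun y => sub_eq_zero.mp ?_)
  by_contra hz
  refine h x (P y - dyad x y) hx₁ hz ?_ hPx (by rw [map_sub, hP, dyad_apply, map_smul, hPx])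
  rw [inner_sub_right, ← inner_apply_left (dyad x), dyad_apply_self hx₁, ← inner_apply_left, hPx,
    sub_self]

theorem not_isTwoValued_smul_add_dyad_add_dyad {P : SA H} {x x' y y' : H}
    (hx : ‖x‖ = 1) (hx' : x' ≠ 0) (hy : ‖y‖ = 1) (hy' : y' ≠ 0)
    (hPx : P x = x) (hPx' : P x' = x') (hPy : P y = 0) (hPy' : P y' = 0)
    (hxx' : ⟪x, x'⟫_ℂ = 0) (hyy' : ⟪y, y'⟫_ℂ = 0) {c : ℝ} (hc : c ≠ 0) :
    ¬ IsTwoValued (c • P + (dyad x + dyad y)) := by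
  intro h
  -- The eigenvalues `c + 1`, `c`, `1` and `0` take at least three values.
  obtain ⟨u, v, huv⟩ := h.exists_eigenvalues
  have horth {s t : H} (hs : P s = s) (ht : P t = 0) : ⟪s, t⟫_ℂ = 0 := by
    rw [← hs, inner_apply_left, ht, inner_zero_right]
  have h₁ := huv x (c + 1) (ne_zero_of_norm_ne_zero (hx.trans_ne one_ne_zero)) <| by
    simp only [add_apply, smul_apply, dyad_apply_self hx, dyad_apply y, hPx,
      inner_eq_zero_symm.mp (horth hPx hPy)]
    push_cast
    module
  have h₂ := huv x' c hx' <| by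
    simp [hPx', hxx', inner_eq_zero_symm.mp (horth hPx' hPy)]
  have h₃ := huv y 1 (ne_zero_of_norm_ne_zero (hy.trans_ne one_ne_zero)) <| by
    simp only [add_apply, smul_apply, dyad_apply_self hy, dyad_apply x, hPy, horth hPx hPy]
    simp
  have h₄ := huv y' 0 hy' <| by simp [hPy', hyy', horth hPx hPy']
  grind

theorem isTwoValued_dyad_add_dyad {x y : H} (hx : ‖x‖ = 1) (hy : ‖y‖ = 1) (hxy : ⟪x, y⟫_ℂ = 0) :
    IsTwoValued (dyad x + dyad y) := by
  rw [← one_smul ℝ (dyad x + dyad y)]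
  refine IsTwoValued.smul (fun z => ?_) 1
  have hyx : ⟪y, x⟫_ℂ = 0 := inner_eq_zero_symm.mp hxy
  have hxy' : dyad x (dyad y z) = 0 := by simp [hxy]
  have hyx' : dyad y (dyad x z) = 0 := by simp [hyx]
  simp only [add_apply, map_add, dyad_apply_dyad_apply hx, dyad_apply_dyad_apply hy, hxy', hyx',
    add_zero, zero_add]

theorem not_isSplitting_of_orthogonal_fixed_points {A P : SA H} (hP : ∀ x, P (P x) = P x)
    (hA : A ∉ scalars) (hcomm : commutant A = commutant P) {x x' y y' : H}
    (hx : ‖x‖ = 1) (hx' : x' ≠ 0) (hy : ‖y‖ = 1) (hy' : y' ≠ 0)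
    (hPx : P x = x) (hPx' : P x' = x') (hPy : P y = 0) (hPy' : P y' = 0)
    (hxx' : ⟪x, x'⟫_ℂ = 0) (hyy' : ⟪y, y'⟫_ℂ = 0) : ¬ IsSplitting A := by
  rintro ⟨-, -, h⟩
  have hxy : ⟪x, y⟫_ℂ = 0 := by rw [← hPx, inner_apply_left, hPy, inner_zero_right]
  have hPB : CommC P (dyad x + dyad y) := by
    have hPdx : CommC P (dyad x) := commC_dyad_iff.mpr ⟨1, by simp [hPx]⟩
    have hPdy : CommC P (dyad y) := commC_dyad_iff.mpr ⟨0, by simp [hPy]⟩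
    exact commC_iff.mpr fun z => by
      simp only [add_apply, map_add, commC_iff.mp hPdx, commC_iff.mp hPdy]
  obtain ⟨A', hA', hA'B⟩ := h _ (isTwoValued_dyad_add_dyad hx hy hxy) (hcomm.superset hPB)
  obtain ⟨c, hc⟩ := exists_smodEq_smul_of_commutant_subset hP (hA'.trans hcomm).superset
  have hc₀ : c ≠ 0 := by
    rintro rfl
    exact hA (mem_scalars_of_commutant_subset hA'.subset (by simpa [SModEq.zero] using hc))
  exact not_isTwoValued_smul_add_dyad_add_dyad hx hx' hy hy' hPx hPx' hPy hPy' hxx' hyy' hc₀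
    ((isTwoValued_congr (hc.add SModEq.rfl)).mp hA'B)

theorem IsSplitting.isRankOneAffine {A : SA H} (h : IsSplitting A) : IsRankOneAffine A := by
  obtain ⟨hA, ⟨P, a, hP, hAP⟩, -⟩ := id h
  have ha : a ≠ 0 := by
    rintro rfl
    exact hA (by simpa [SModEq.zero] using hAP)
  by_cases h₁ : ∃ x, ‖x‖ = 1 ∧ P = dyad x
  · obtain ⟨x, hx, rfl⟩ := h₁
    exact ⟨x, a, hx, ha, hAP⟩
  by_cases h₂ : ∃ x, ‖x‖ = 1 ∧ 1 - P = dyad x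
  · obtain ⟨x, hx, hPx⟩ := h₂
    refine ⟨x, -a, hx, neg_ne_zero.mpr ha, hAP.trans (smodEq_iff.mpr ⟨a, fun z => ?_⟩)⟩
    simp only [← hPx, smul_apply, sub_apply, one_apply, Complex.ofReal_neg]
    module
  push Not at h₁ h₂
  have hcomm : commutant A = commutant P := by rw [commutant_congr hAP, commutant_smul ha]
  have hPs : P ∉ scalars := fun hPs => hA (mem_scalars_of_commutant_subset hcomm.superset hPs)
  have hP' (x : H) : (1 - P) ((1 - P) x) = (1 - P) x := by simp [hP]
  have hP₀ : P ≠ 0 := fun hP₀ => hPs (hP₀ ▸ scalars.zero_mem)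
  have hP₁ : 1 - P ≠ 0 := fun hP₁ =>
    hPs (sub_eq_zero.mp hP₁ ▸ Submodule.mem_span_singleton_self _)
  obtain ⟨x, x', hx, hx', hxx', hPx, hPx'⟩ := exists_orthogonal_fixed_points hP hP₀ h₁
  obtain ⟨y, y', hy, hy', hyy', hPy, hPy'⟩ := exists_orthogonal_fixed_points hP' hP₁ h₂
  exact absurd h <| not_isSplitting_of_orthogonal_fixed_points hP hA hcomm hx hx' hy hy' hPx hPx'
    (by simpa using hPy) (by simpa using hPy') hxx' hyy'

theorem isRankOneAffine_iff_isSplitting (hH : 1 < Module.rank ℂ H) {A : SA H} :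
    IsRankOneAffine A ↔ IsSplitting A :=
  ⟨fun h => h.isSplitting hH, fun h => h.isRankOneAffine⟩

end RankOne

/-- The additive commutativity preservers of the space of bounded self-adjoint operators. -/
structure IsCommPreserver (φ : SA H →+ SA H) : Prop where
  surjective : Function.Surjective φ
  commC_map_iff : ∀ A B, CommC (φ A) (φ B) ↔ CommC A B

namespace IsCommPreserver

variable {φ : SA H →+ SA H}

theorem commutant_map_subset_iff (hφ : IsCommPreserver φ) {A B : SA H} :
    commutant (φ A) ⊆ commutant (φ B) ↔ commutant A ⊆ commutant B := by
  rw [Set.subset_def, Set.subset_def, hφ.surjective.forall]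
  simp only [commutant, Set.mem_ofPred_eq, hφ.commC_map_iff]

theorem commutant_map_eq_iff (hφ : IsCommPreserver φ) {A B : SA H} :
    commutant (φ A) = commutant (φ B) ↔ commutant A = commutant B := by
  simp only [Set.Subset.antisymm_iff, hφ.commutant_map_subset_iff]

theorem map_mem_scalars_iff (hφ : IsCommPreserver φ) {A : SA H} :
    φ A ∈ scalars ↔ A ∈ scalars := by
  rw [mem_scalars_iff_forall_commC, mem_scalars_iff_forall_commC, hφ.surjective.forall]
  simp only [hφ.commC_map_iff]

theorem isTwoValued_map_iff (hφ : IsCommPreserver φ) {A : SA H} :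
    IsTwoValued (φ A) ↔ IsTwoValued A := by
  rw [isTwoValued_iff, isTwoValued_iff, hφ.surjective.forall]
  simp only [hφ.commutant_map_subset_iff, hφ.map_mem_scalars_iff]

theorem isSplitting_map_iff (hφ : IsCommPreserver φ) {A : SA H} :
    IsSplitting (φ A) ↔ IsSplitting A := by
  rw [IsSplitting, IsSplitting, hφ.surjective.forall]
  refine and_congr hφ.map_mem_scalars_iff.not <| and_congr hφ.isTwoValued_map_iff <|
    forall_congr' fun B => ?_
  rw [hφ.surjective.exists]
  simp only [← map_add, hφ.isTwoValued_map_iff, hφ.commC_map_iff, hφ.commutant_map_eq_iff]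

end IsCommPreserver

/-- Modulo scalars, `φ` maps the line spanned by `dyad x` to the line spanned by `dyad v`, and `q`
is its coordinate expression. -/
structure MapsDyad (φ : SA H →+ SA H) (q : ℝ →+ ℝ) (x v : H) : Prop where
  norm_eq : ‖v‖ = ‖x‖
  map_smul_dyad : ∀ t : ℝ, φ (t • dyad x) ≡ q t • dyad v [SMOD scalars]

section DyadLines

variable {φ : SA H →+ SA H}

theorem eq_of_smul_smodEq_smul {A : SA H} (hA : A ∉ scalars) {s t : ℝ}
    (h : s • A ≡ t • A [SMOD scalars]) : s = t := by
  by_contra hst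
  rw [SModEq.sub_mem, ← sub_smul] at h
  exact hA ((scalars.smul_mem_iff (sub_ne_zero.mpr hst)).mp h)

theorem IsCommPreserver.exists_mapsDyad (hφ : IsCommPreserver φ) (hH : 1 < Module.rank ℂ H)
    {x : H} (hx : ‖x‖ = 1) : ∃ q v, MapsDyad φ q x v := by
  have hdx : IsRankOneAffine (dyad x) := ⟨x, 1, hx, one_ne_zero, by rw [one_smul]⟩
  obtain ⟨v, a, hv, ha, hva⟩ : IsRankOneAffine (φ (dyad x)) := by
    rwa [isRankOneAffine_iff_isSplitting hH, hφ.isSplitting_map_iff,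
      ← isRankOneAffine_iff_isSplitting hH]
  have hline (t : ℝ) : ∃ q : ℝ, φ (t • dyad x) ≡ q • dyad v [SMOD scalars] := by
    refine exists_smodEq_smul_of_commutant_subset (dyad_apply_dyad_apply hv) ?_
    rw [← commutant_smul ha, ← commutant_congr hva, hφ.commutant_map_subset_iff]
    rcases eq_or_ne t 0 with rfl | ht
    · exact fun B _ => mem_scalars_iff_forall_commC.mp (by simp) B
    · rw [commutant_smul ht]
  choose q hq using hline
  have hdv := dyad_notMem_scalars hH (ne_zero_of_norm_ne_zero (hv.trans_ne one_ne_zero))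
  refine ⟨AddMonoidHom.mk' q fun s t => eq_of_smul_smodEq_smul hdv ?_, v, hv.trans hx.symm, hq⟩
  rw [add_smul]
  refine (hq (s + t)).symm.trans ?_
  rw [add_smul, map_add]
  exact (hq s).add (hq t)

theorem inner_eq_zero_iff_commutant (hH : 2 < Module.rank ℂ H) {x y : H} (hx : x ≠ 0)
    (hy : y ≠ 0) : ⟪x, y⟫_ℂ = 0 ↔
      CommC (dyad x) (dyad y) ∧ ¬ commutant (dyad x) ⊆ commutant (dyad y) := by
  refine ⟨fun hxy => ⟨commC_dyad_iff.mpr ⟨0, by simp [hxy]⟩, fun h => ?_⟩, fun ⟨hcomm, h⟩ => ?_⟩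
  · obtain ⟨z, hz, hxz, hyz⟩ := exists_norm_eq_one_inner_eq_zero_and hH x y
    obtain ⟨r, hr⟩ : ∃ r : ℝ, dyad y (y + z) = (r : ℂ) • (y + z) :=
      commC_dyad_iff.mp <| h <| commC_dyad_iff.mpr ⟨0, by simp [hxy, hxz]⟩
    rw [dyad_apply, inner_add_right, hyz, add_zero] at hr
    have hr₀ : (r : ℂ) = 0 := by
      have := congrArg (inner ℂ z) hr
      simpa [inner_smul_right, inner_add_right, inner_eq_zero_symm.mp hyz,
        inner_self_eq_norm_sq_to_K, hz, eq_comm] using this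
    rw [hr₀, zero_smul, smul_eq_zero_iff_left hy] at hr
    exact hy (inner_self_eq_zero.mp hr)
  · by_contra hxy
    obtain ⟨r, hr⟩ := commC_dyad_iff.mp hcomm
    rw [dyad_apply] at hr
    have hxy' : x = ((⟪x, y⟫_ℂ)⁻¹ * r) • y := by rw [mul_smul, ← hr, inv_smul_smul₀ hxy]
    have hk : (⟪x, y⟫_ℂ)⁻¹ * r ≠ 0 := fun hk => hx (by rw [hxy', hk, zero_smul])
    refine h (Set.Subset.antisymm_iff.mp ?_).1
    rw [hxy', dyad_smul, commutant_smul (pow_ne_zero 2 (norm_ne_zero_iff.mpr hk))]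

theorem MapsDyad.apply_one_ne_zero {q : ℝ →+ ℝ} {x v : H} (h : MapsDyad φ q x v)
    (hφ : IsCommPreserver φ) (hH : 1 < Module.rank ℂ H) (hx : x ≠ 0) : q 1 ≠ 0 := fun hq =>
  dyad_notMem_scalars hH hx <| hφ.map_mem_scalars_iff.mp <| by
    simpa [hq, SModEq.zero] using h.map_smul_dyad 1

theorem MapsDyad.ne_zero {q : ℝ →+ ℝ} {x v : H} (h : MapsDyad φ q x v) (hx : x ≠ 0) : v ≠ 0 :=
  norm_ne_zero_iff.mp (h.norm_eq ▸ norm_ne_zero_iff.mpr hx)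

theorem MapsDyad.inner_eq_zero_iff {q p : ℝ →+ ℝ} {x y v w : H} (hxv : MapsDyad φ q x v)
    (hyw : MapsDyad φ p y w) (hφ : IsCommPreserver φ) (hH : 2 < Module.rank ℂ H) :
    ⟪v, w⟫_ℂ = 0 ↔ ⟪x, y⟫_ℂ = 0 := by
  rcases eq_or_ne x 0 with rfl | hx
  · have hv : v = 0 := norm_eq_zero.mp (hxv.norm_eq.trans norm_zero)
    simp [hv]
  rcases eq_or_ne y 0 with rfl | hy
  · have hw : w = 0 := norm_eq_zero.mp (hyw.norm_eq.trans norm_zero)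
    simp [hw]
  have hH₁ : 1 < Module.rank ℂ H := Cardinal.one_lt_two.trans hH
  have hcomm {q : ℝ →+ ℝ} {x v : H} (h : MapsDyad φ q x v) (hx : x ≠ 0) :
      commutant (φ (dyad x)) = commutant (dyad v) := by
    have h₁ := h.map_smul_dyad 1
    rw [one_smul] at h₁
    rw [commutant_congr h₁, commutant_smul (h.apply_one_ne_zero hφ hH₁ hx)]
  have hCommC : CommC (dyad v) (dyad w) ↔ CommC (dyad x) (dyad y) := by
    rw [← hφ.commC_map_iff (dyad x) (dyad y),
      commC_iff_of_commutant_eq (hcomm hxv hx) (hcomm hyw hy)]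
  rw [inner_eq_zero_iff_commutant hH (hxv.ne_zero hx) (hyw.ne_zero hy),
    inner_eq_zero_iff_commutant hH hx hy, ← hcomm hxv hx, ← hcomm hyw hy,
    hφ.commutant_map_subset_iff, hCommC]

end DyadLines

section Homogeneity

theorem map_eq_map_one_mul_of_nonneg (f : ℝ →+ ℝ) (hf : ∀ r, 0 ≤ r → 0 ≤ f r) (t : ℝ) :
    f t = f 1 * t := by
  have hmono : Monotone f := fun s t hst => by
    simpa [sub_nonneg] using hf (t - s) (sub_nonneg.mpr hst)
  have hcont : Continuous f :=
    MeasureTheory.Measure.AddMonoidHom.continuous_of_measurable f hmono.measurable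
  simpa [mul_comm] using map_real_smul f hcont t 1

variable {φ : SA H →+ SA H}

theorem smul_dyad_add_smul_dyad_congr (hφ : IsCommPreserver φ) (hH : 2 < Module.rank ℂ H)
    {q₁ q₂ q₃ q₄ : ℝ →+ ℝ} {x₁ x₂ x₃ x₄ v₁ v₂ v₃ v₄ z : H} (h₁ : MapsDyad φ q₁ x₁ v₁)
    (h₂ : MapsDyad φ q₂ x₂ v₂) (h₃ : MapsDyad φ q₃ x₃ v₃) (h₄ : MapsDyad φ q₄ x₄ v₄)
    (hz : ‖z‖ = 1) (hz₁ : ⟪x₁, z⟫_ℂ = 0) (hz₂ : ⟪x₂, z⟫_ℂ = 0) (hz₃ : ⟪x₃, z⟫_ℂ = 0)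
    (hz₄ : ⟪x₄, z⟫_ℂ = 0) {t₁ t₂ t₃ t₄ : ℝ}
    (h : t₁ • dyad x₁ + t₂ • dyad x₂ = t₃ • dyad x₃ + t₄ • dyad x₄) :
    q₁ t₁ • dyad v₁ + q₂ t₂ • dyad v₂ = q₃ t₃ • dyad v₃ + q₄ t₄ • dyad v₄ := by
  obtain ⟨_, f, hf⟩ := hφ.exists_mapsDyad (Cardinal.one_lt_two.trans hH) hz
  have happly {r : ℝ →+ ℝ} {x v : H} (hxv : MapsDyad φ r x v) (hxz : ⟪x, z⟫_ℂ = 0) :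
      dyad v f = 0 := by
    rw [dyad_apply, (hxv.inner_eq_zero_iff hf hφ hH).mpr hxz, zero_smul]
  have hf₀ : f ≠ 0 := hf.ne_zero (ne_zero_of_norm_ne_zero (hz.trans_ne one_ne_zero))
  refine eq_of_smodEq_of_apply_eq ?_ hf₀ ?_
  · refine ((h₁.map_smul_dyad t₁).add (h₂.map_smul_dyad t₂)).symm.trans ?_
    rw [← map_add, h, map_add]
    exact (h₃.map_smul_dyad t₃).add (h₄.map_smul_dyad t₄)
  · simp only [add_apply, smul_apply, happly h₁ hz₁, happly h₂ hz₂, happly h₃ hz₃, happly h₄ hz₄,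
      smul_zero, add_zero]

theorem smul_dyad_add_smul_dyad_eq (hφ : IsCommPreserver φ) (hH : 2 < Module.rank ℂ H)
    {q q₁ p p₁ : ℝ →+ ℝ} {x y v w u m : H} (hx : MapsDyad φ q x v) (hy : MapsDyad φ q₁ y w)
    {a b : ℂ} (hu : MapsDyad φ p (a • x + b • y) u) (hm : MapsDyad φ p₁ (a • x - b • y) m)
    (t : ℝ) : p t • dyad u + p₁ t • dyad m =
      q (2 * ‖a‖ ^ 2 * t) • dyad v + q₁ (2 * ‖b‖ ^ 2 * t) • dyad w := by
  obtain ⟨z, hz, hxz, hyz⟩ := exists_norm_eq_one_inner_eq_zero_and hH x y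
  refine smul_dyad_add_smul_dyad_congr hφ hH hu hm hx hy hz (by simp [hxz, hyz])
    (by simp [hxz, hyz]) hxz hyz ?_
  rw [← smul_add, dyad_add_dyad_sub, dyad_smul, dyad_smul]
  module

theorem inner_dyad_apply_self (x z : H) : ⟪z, dyad x z⟫_ℂ = (‖⟪x, z⟫_ℂ‖ ^ 2 : ℝ) := by
  rw [dyad_apply, inner_smul_right, ← inner_conj_symm z x, Complex.mul_conj']
  push_cast
  rfl

theorem eq_of_smul_dyad_add_smul_dyad_eq {u m v w : H} (hu : ‖u‖ = 1) (hv : ‖v‖ = 1)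
    (hmu : ⟪m, u⟫_ℂ = 0) (hvw : ⟪v, w⟫_ℂ = 0) (hvu : ⟪v, u⟫_ℂ ≠ 0) {a b c d : ℝ}
    (h : a • dyad u + b • dyad m = c • dyad v + d • dyad w) : a = c := by
  have happly : (a • dyad u + b • dyad m) u = (c • dyad v + d • dyad w) u := by rw [h]
  have hinner := congrArg (inner ℂ v) happly
  simp only [add_apply, smul_apply, dyad_apply_self hu, dyad_apply _ u, hmu, zero_smul, smul_zero,
    add_zero, inner_add_right, inner_smul_right, hvw, mul_zero, inner_self_eq_norm_sq_to_K, hv,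
    map_one, one_pow, mul_one] at hinner
  exact_mod_cast mul_right_cancel₀ hvu hinner

theorem MapsDyad.coord_eq_of_inner_eq_zero (hφ : IsCommPreserver φ) (hH : 2 < Module.rank ℂ H)
    {q q₁ : ℝ →+ ℝ} {x y v w : H} (hxv : MapsDyad φ q x v) (hyw : MapsDyad φ q₁ y w)
    (hx : ‖x‖ = 1) (hy : ‖y‖ = 1) (hxy : ⟪x, y⟫_ℂ = 0) : q = q₁ := by
  have hH₁ : 1 < Module.rank ℂ H := Cardinal.one_lt_two.trans hH
  obtain ⟨k, hk, hk₀⟩ : ∃ k : ℂ, 2 * ‖k‖ ^ 2 = 1 ∧ k ≠ 0 :=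
    ⟨(√(1 / 2) : ℝ), by simp, by simp⟩
  have hx₀ : x ≠ 0 := ne_zero_of_norm_ne_zero (hx.trans_ne one_ne_zero)
  have hy₀ : y ≠ 0 := ne_zero_of_norm_ne_zero (hy.trans_ne one_ne_zero)
  have hyx : ⟪y, x⟫_ℂ = 0 := inner_eq_zero_symm.mp hxy
  obtain ⟨hu, hm⟩ := norm_add_eq_one_and_norm_sub_eq_one (𝕜 := ℂ) (x := k • x) (y := k • y)
    (by rw [inner_smul_left, inner_smul_right, hxy, mul_zero, mul_zero]) (by
      rw [norm_smul, norm_smul, hx, hy]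
      linarith)
  obtain ⟨p, u, hxu⟩ := hφ.exists_mapsDyad hH₁ hu
  obtain ⟨p₁, m, hxm⟩ := hφ.exists_mapsDyad hH₁ hm
  have hsum (t : ℝ) := smul_dyad_add_smul_dyad_eq hφ hH hxv hyw hxu hxm t
  simp only [hk, one_mul] at hsum
  have hvw := (hxv.inner_eq_zero_iff hyw hφ hH).mpr hxy
  have hmu := (hxm.inner_eq_zero_iff hxu hφ hH).mpr <| by
    simp [hx, hy, hxy, hyx]
  have hvu := (hxv.inner_eq_zero_iff hxu hφ hH).not.mpr <| by
    simp [hxy, hx₀, hk₀]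
  have hwu := (hyw.inner_eq_zero_iff hxu hφ hH).not.mpr <| by
    simp [hyx, hy₀, hk₀]
  have hpq (t : ℝ) : p t = q t := eq_of_smul_dyad_add_smul_dyad_eq (hxu.norm_eq.trans hu)
    (hxv.norm_eq.trans hx) hmu hvw hvu (hsum t)
  have hpq₁ (t : ℝ) : p t = q₁ t := eq_of_smul_dyad_add_smul_dyad_eq (hxu.norm_eq.trans hu)
    (hyw.norm_eq.trans hy) hmu (inner_eq_zero_symm.mp hvw) hwu ((hsum t).trans (add_comm _ _))
  exact AddMonoidHom.ext fun t => (hpq t).symm.trans (hpq₁ t)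

theorem IsCommPreserver.exists_forall_mapsDyad (hφ : IsCommPreserver φ)
    (hH : 2 < Module.rank ℂ H) : ∃ q, ∀ x, ‖x‖ = 1 → ∃ v, MapsDyad φ q x v := by
  have hH₁ : 1 < Module.rank ℂ H := Cardinal.one_lt_two.trans hH
  obtain ⟨x, hx, -⟩ := exists_norm_eq_one_inner_eq_zero hH₁ (0 : H)
  obtain ⟨q, v, hxv⟩ := hφ.exists_mapsDyad hH₁ hx
  refine ⟨q, fun y hy => ?_⟩
  obtain ⟨p, w, hyw⟩ := hφ.exists_mapsDyad hH₁ hy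
  obtain ⟨z, hz, hxz, hyz⟩ := exists_norm_eq_one_inner_eq_zero_and hH x y
  obtain ⟨r, f, hzf⟩ := hφ.exists_mapsDyad hH₁ hz
  have hqr : q = r := hxv.coord_eq_of_inner_eq_zero hφ hH hzf hx hz hxz
  have hpr : p = r := hyw.coord_eq_of_inner_eq_zero hφ hH hzf hy hz hyz
  exact ⟨w, hqr.trans hpr.symm ▸ hyw⟩

theorem coord_mul_coord_nonneg (hφ : IsCommPreserver φ) (hH : 2 < Module.rank ℂ H) {q : ℝ →+ ℝ}
    (hq : ∀ x, ‖x‖ = 1 → ∃ v, MapsDyad φ q x v) {s : ℝ} (hs₀ : 0 ≤ s) (hs₂ : s ≤ 2) (t : ℝ) :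
    0 ≤ q (s * t) * q t := by
  have hH₁ : 1 < Module.rank ℂ H := Cardinal.one_lt_two.trans hH
  obtain ⟨x, hx, -⟩ := exists_norm_eq_one_inner_eq_zero hH₁ (0 : H)
  obtain ⟨y, hy, hxy⟩ := exists_norm_eq_one_inner_eq_zero hH₁ x
  have hs₀' : 0 ≤ s / 2 := by linarith
  have hs₂' : s / 2 ≤ 1 := by linarith
  obtain ⟨hu, hm⟩ := norm_add_eq_one_and_norm_sub_eq_one (𝕜 := ℂ) (x := ((√(s / 2) : ℝ) : ℂ) • x)
    (y := ((√(1 - s / 2) : ℝ) : ℂ) • y)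
    (by rw [inner_smul_left, inner_smul_right, hxy, mul_zero, mul_zero])
    (by simp [-Real.sqrt_div', norm_smul, hx, hy, Real.sq_sqrt, hs₀', hs₂'])
  obtain ⟨v, hxv⟩ := hq x hx
  obtain ⟨w, hyw⟩ := hq y hy
  obtain ⟨u, hxu⟩ := hq _ hu
  obtain ⟨m, hxm⟩ := hq _ hm
  have hv : ‖v‖ = 1 := hxv.norm_eq.trans hx
  have hwv : ⟪w, v⟫_ℂ = 0 := inner_eq_zero_symm.mp ((hxv.inner_eq_zero_iff hyw hφ hH).mpr hxy)
  have hsum := congrArg (fun A : SA H => ⟪v, A v⟫_ℂ)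
    (smul_dyad_add_smul_dyad_eq hφ hH hxv hyw hxu hxm t)
  have hqt : q (s * t) = q t * (‖⟪u, v⟫_ℂ‖ ^ 2 + ‖⟪m, v⟫_ℂ‖ ^ 2) := by
    simp only [add_apply, smul_apply, inner_add_right, inner_smul_right, inner_dyad_apply_self,
      inner_self_eq_norm_sq_to_K, hv, hwv, Complex.norm_real, Real.norm_eq_abs, sq_abs,
      Real.sq_sqrt hs₀', mul_div_cancel₀ s two_ne_zero] at hsum
    norm_num at hsum
    rw [mul_add]
    exact_mod_cast hsum.symm
  rw [hqt, mul_right_comm]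
  exact mul_nonneg (mul_self_nonneg _) (by positivity)

theorem coord_eq_mul (hφ : IsCommPreserver φ) (hH : 2 < Module.rank ℂ H) {q : ℝ →+ ℝ}
    (hq : ∀ x, ‖x‖ = 1 → ∃ v, MapsDyad φ q x v) (hq₁ : q 1 ≠ 0) (t : ℝ) : q t = q 1 * t := by
  have hnonneg (r : ℝ) (hr : 0 ≤ r) : 0 ≤ q 1 * q r := by
    rcases le_total r 1 with hr₁ | hr₁
    · simpa [mul_comm] using coord_mul_coord_nonneg hφ hH hq hr (by linarith) 1
    · have hr₂ : r⁻¹ ≤ 2 := (inv_le_one_of_one_le₀ hr₁).trans one_le_two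
      simpa [inv_mul_cancel₀ (zero_lt_one.trans_le hr₁).ne'] using
        coord_mul_coord_nonneg hφ hH hq (inv_nonneg.mpr hr) hr₂ r
  have hlin := map_eq_map_one_mul_of_nonneg ((AddMonoidHom.mulLeft (q 1)).comp q) hnonneg t
  simpa [mul_assoc, hq₁] using hlin

end Homogeneity

/-- `v` represents the image of the ray of `x` under the ray transformation induced by `ψ`. -/
abbrev IsDyadImage (ψ : SA H →+ SA H) (x v : H) : Prop := MapsDyad ψ (AddMonoidHom.id ℝ) x v

section Normalization

variable {φ ψ : SA H →+ SA H}

theorem MapsDyad.isDyadImage_inv_smul {q : ℝ →+ ℝ} {x v : H} (h : MapsDyad φ q x v) {c : ℝ}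
    (hc : c ≠ 0) (hq : ∀ t, q t = c * t) : IsDyadImage (c⁻¹ • φ) x v where
  norm_eq := h.norm_eq
  map_smul_dyad t := by
    have ht := (h.map_smul_dyad t).smul c⁻¹
    rwa [hq, smul_smul, inv_mul_cancel_left₀ hc] at ht

theorem IsDyadImage.smul {x v : H} (h : IsDyadImage ψ x v) {k l : ℂ} (hkl : ‖l‖ = ‖k‖) :
    IsDyadImage ψ (k • x) (l • v) where
  norm_eq := by rw [norm_smul, norm_smul, h.norm_eq, hkl]
  map_smul_dyad t := by
    rw [dyad_smul, dyad_smul, smul_smul, smul_smul, hkl]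
    exact h.map_smul_dyad (t * ‖k‖ ^ 2)

theorem IsCommPreserver.smul (hφ : IsCommPreserver φ) {c : ℝ} (hc : c ≠ 0) :
    IsCommPreserver (c • φ) where
  surjective := (MulAction.surjective₀ hc).comp hφ.surjective
  commC_map_iff A B := (commC_iff_of_commutant_eq (commutant_smul hc (φ A))
    (commutant_smul hc (φ B))).trans (hφ.commC_map_iff A B)

theorem IsCommPreserver.exists_isDyadImage_inv_smul (hφ : IsCommPreserver φ)
    (hH : 2 < Module.rank ℂ H) : ∃ c : ℝ, c ≠ 0 ∧ ∀ x, ∃ v, IsDyadImage (c⁻¹ • φ) x v := by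
  obtain ⟨q, hq⟩ := hφ.exists_forall_mapsDyad hH
  have hH₁ : 1 < Module.rank ℂ H := Cardinal.one_lt_two.trans hH
  obtain ⟨x₁, hx₁, -⟩ := exists_norm_eq_one_inner_eq_zero hH₁ (0 : H)
  obtain ⟨_, hxv₁⟩ := hq x₁ hx₁
  have hc : q 1 ≠ 0 :=
    hxv₁.apply_one_ne_zero hφ hH₁ (ne_zero_of_norm_ne_zero (hx₁.trans_ne one_ne_zero))
  have hunit (x : H) (hx : ‖x‖ = 1) : ∃ v, IsDyadImage ((q 1)⁻¹ • φ) x v :=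
    (hq x hx).imp fun v hxv => hxv.isDyadImage_inv_smul hc (coord_eq_mul hφ hH hq hc)
  refine ⟨q 1, hc, fun x => ?_⟩
  rcases eq_or_ne x 0 with rfl | hx
  · exact (hunit x₁ hx₁).imp' _ fun v hv => zero_smul ℂ x₁ ▸ hv.smul rfl
  · have hx₀ : (‖x‖ : ℂ) ≠ 0 := Complex.ofReal_ne_zero.mpr (norm_ne_zero_iff.mpr hx)
    obtain ⟨v, hv⟩ := hunit ((‖x‖ : ℂ)⁻¹ • x) (norm_smul_inv_norm hx)
    exact ⟨_, smul_inv_smul₀ hx₀ x ▸ hv.smul rfl⟩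

end Normalization

/-- Relative to a unit vector `e` with image `v`, the vector `w` orthogonal to `v` represents the
images of the rays of both `y` and `e + y`, where `y` is orthogonal to `e`. -/
structure IsDirectionImage (ψ : SA H →+ SA H) (e v y w : H) : Prop where
  inner_eq_zero : ⟪v, w⟫_ℂ = 0
  isDyadImage : IsDyadImage ψ y w
  isDyadImage_add : IsDyadImage ψ (e + y) (v + w)

section Direction

theorem smul_dyad_add_smul (x y : H) (t : ℝ) :
    (1 : ℝ) • dyad (x + (t : ℂ) • y) + (t - t ^ 2) • dyad y =
      (1 - t) • dyad x + t • dyad (x + y) := by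
  ext z
  simp only [add_apply, smul_apply, dyad_apply, inner_add_left, inner_smul_left,
    Complex.conj_ofReal, Complex.ofReal_sub, Complex.ofReal_pow, Complex.ofReal_one]
  module

theorem exists_eq_smul_of_dyad_eq {x y : H} (h : dyad x = dyad y) :
    ∃ k : ℂ, ‖k‖ = 1 ∧ x = k • y := by
  rcases eq_or_ne x 0 with rfl | hx
  · refine ⟨1, norm_one, ?_⟩
    by_contra hy
    exact dyad_ne_zero (fun h₀ => hy (by simp [h₀])) (h.symm.trans (by ext; simp))
  have hxy : ⟪x, x⟫_ℂ • x = ⟪y, x⟫_ℂ • y := congrArg (fun A : SA H => A x) h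
  obtain ⟨k, rfl⟩ : ∃ k : ℂ, x = k • y :=
    ⟨(⟪x, x⟫_ℂ)⁻¹ * ⟪y, x⟫_ℂ, by rw [mul_smul, ← hxy, inv_smul_smul₀ (inner_self_ne_zero.mpr hx)]⟩
  have hy : y ≠ 0 := right_ne_zero_of_smul hx
  have hyy : ((‖k‖ ^ 2 : ℝ) : ℂ) • dyad y y = (1 : ℂ) • dyad y y := by
    rw [one_smul, ← smul_apply, ← dyad_smul, h]
  have hk : ((‖k‖ ^ 2 : ℝ) : ℂ) = 1 :=
    smul_left_injective ℂ (smul_ne_zero (inner_self_ne_zero.mpr hy) hy) hyy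
  exact ⟨k, (pow_eq_one_iff_of_nonneg (norm_nonneg _) two_ne_zero).mp (by exact_mod_cast hk), rfl⟩

variable {ψ : SA H →+ SA H} {e v : H}

theorem norm_inner_eq_one_of_isDyadImage_add (hψ : IsCommPreserver ψ) (hH : 2 < Module.rank ℂ H)
    (hdy : ∀ x, ∃ w, IsDyadImage ψ x w) (he : ‖e‖ = 1) (hev : IsDyadImage ψ e v) {y p : H}
    (hey : ⟪e, y⟫_ℂ = 0) (hp : IsDyadImage ψ (e + y) p) : ‖⟪p, v⟫_ℂ‖ = 1 := by
  obtain ⟨z, hz, hez, hyz⟩ := exists_norm_eq_one_inner_eq_zero_and hH e y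
  obtain ⟨w, hyw⟩ := hdy y
  have hv : ‖v‖ = 1 := hev.norm_eq.trans he
  have hwv : ⟪w, v⟫_ℂ = 0 := inner_eq_zero_symm.mp ((hev.inner_eq_zero_iff hyw hψ hH).mpr hey)
  -- The squared modulus below is affine in `t`, so it is nonnegative for all `t` only if constant.
  have hnonneg (t : ℝ) : 0 ≤ 1 + t * (‖⟪p, v⟫_ℂ‖ ^ 2 - 1) := by
    obtain ⟨p', hp'⟩ := hdy (e + (t : ℂ) • y)
    have hsum := smul_dyad_add_smul_dyad_congr hψ hH hp' hyw hev hp hz (by simp [hez, hyz]) hyz hez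
      (by simp [hez, hyz]) (smul_dyad_add_smul e y t)
    have hinner := congrArg (fun A : SA H => ⟪v, A v⟫_ℂ) hsum
    simp only [AddMonoidHom.id_apply, add_apply, smul_apply, inner_add_right, inner_smul_right,
      inner_dyad_apply_self, inner_self_eq_norm_sq_to_K, hv, hwv] at hinner
    norm_num at hinner
    have h : ‖⟪p', v⟫_ℂ‖ ^ 2 = 1 - t + t * ‖⟪p, v⟫_ℂ‖ ^ 2 := by exact_mod_cast hinner
    linarith [sq_nonneg ‖⟪p', v⟫_ℂ‖]
  have hK : ‖⟪p, v⟫_ℂ‖ ^ 2 = 1 := by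
    by_contra hne
    have hne' : ‖⟪p, v⟫_ℂ‖ ^ 2 - 1 ≠ 0 := sub_ne_zero.mpr hne
    have := hnonneg (-2 / (‖⟪p, v⟫_ℂ‖ ^ 2 - 1))
    rw [div_mul_cancel₀ _ hne'] at this
    norm_num at this
  exact (pow_eq_one_iff_of_nonneg (norm_nonneg _) two_ne_zero).mp hK

theorem IsDyadImage.smul_right {x w : H} (h : IsDyadImage ψ x w) {k : ℂ} (hk : ‖k‖ = 1) :
    IsDyadImage ψ x (k • w) :=
  one_smul ℂ x ▸ h.smul (hk.trans norm_one.symm)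

theorem exists_isDyadImage_add_inner_eq_one (hψ : IsCommPreserver ψ) (hH : 2 < Module.rank ℂ H)
    (hdy : ∀ x, ∃ w, IsDyadImage ψ x w) (he : ‖e‖ = 1) (hev : IsDyadImage ψ e v) {y : H}
    (hey : ⟪e, y⟫_ℂ = 0) : ∃ p, IsDyadImage ψ (e + y) p ∧ ⟪p, v⟫_ℂ = 1 := by
  obtain ⟨p, hp⟩ := hdy (e + y)
  have hpv := norm_inner_eq_one_of_isDyadImage_add hψ hH hdy he hev hey hp
  refine ⟨⟪p, v⟫_ℂ • p, hp.smul_right hpv, ?_⟩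
  rw [inner_smul_left, Complex.conj_mul', hpv]
  simp

theorem exists_isDirectionImage (hψ : IsCommPreserver ψ) (hH : 2 < Module.rank ℂ H)
    (hdy : ∀ x, ∃ w, IsDyadImage ψ x w) (he : ‖e‖ = 1) (hev : IsDyadImage ψ e v) {y : H}
    (hey : ⟪e, y⟫_ℂ = 0) : ∃ w, IsDirectionImage ψ e v y w := by
  have hv : ‖v‖ = 1 := hev.norm_eq.trans he
  obtain ⟨w₀, hw₀⟩ := hdy y
  obtain ⟨p, hp, hpv⟩ := exists_isDyadImage_add_inner_eq_one hψ hH hdy he hev hey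
  obtain ⟨m, hm, hmv⟩ := exists_isDyadImage_add_inner_eq_one hψ hH hdy he hev (y := -y)
    (by rw [inner_neg_right, hey, neg_zero])
  have hw₀v : ⟪w₀, v⟫_ℂ = 0 := inner_eq_zero_symm.mp ((hev.inner_eq_zero_iff hw₀ hψ hH).mpr hey)
  have hsum : dyad p + dyad m = (2 : ℝ) • dyad v + (2 : ℝ) • dyad w₀ := by
    simpa using smul_dyad_add_smul_dyad_eq hψ hH hev hw₀ (a := 1) (b := 1) (p := .id ℝ)
      (p₁ := .id ℝ) (by simpa using hp) (by simpa [← sub_eq_add_neg] using hm) 1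
  have hpm : p + m = (2 : ℂ) • v := by
    have h : (dyad p + dyad m) v = ((2 : ℝ) • dyad v + (2 : ℝ) • dyad w₀) v := by rw [hsum]
    simpa only [add_apply, smul_apply, dyad_apply_self hv, dyad_apply _ v, hpv, hmv, hw₀v, one_smul,
      zero_smul, smul_zero, add_zero, Complex.ofReal_ofNat] using h
  obtain ⟨w, rfl⟩ : ∃ w, p = v + w := ⟨p - v, by abel⟩
  obtain rfl : m = v - w := by linear_combination (norm := module) hpm
  have hdyad : dyad w = dyad w₀ := by
    rw [dyad_add_dyad_sub, add_right_inj] at hsum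
    rw [← inv_smul_smul₀ (two_ne_zero (α := ℝ)) (dyad w), hsum, inv_smul_smul₀ two_ne_zero]
  obtain ⟨k, hk, rfl⟩ := exists_eq_smul_of_dyad_eq hdyad
  refine ⟨k • w₀, ?_, hw₀.smul_right hk, hp⟩
  rw [inner_smul_right, inner_eq_zero_symm.mp hw₀v, mul_zero]

end Direction

section Semilinear

theorem exists_linearMap_or_exists_conjLinearMap {V W : Type*} [AddCommGroup V] [Module ℂ V]
    [AddCommGroup W] [Module ℂ W] (f : V →ₗ[ℝ] W)
    (hf : ∀ x, f (Complex.I • x) = Complex.I • f x ∨ f (Complex.I • x) = -(Complex.I • f x)) :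
    (∃ g : V →ₗ[ℂ] W, ∀ x, g x = f x) ∨ ∃ g : V →ₗ⋆[ℂ] W, ∀ x, g x = f x := by
  let F : V →+ W := f.toAddMonoidHom.comp (DistribSMul.toAddMonoidHom V Complex.I)
  let G : V →+ W := (DistribSMul.toAddMonoidHom W Complex.I).comp f.toAddMonoidHom
  have hunion : ((⊤ : AddSubgroup V) : Set V) ⊆ F.eqLocus G ∪ F.eqLocus (-G) := fun x _ => hf x
  have hsmul (c : ℂ) (x : V) : f (c • x) = (c.re : ℂ) • f x + (c.im : ℂ) • f (Complex.I • x) := by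
    nth_rw 1 [← Complex.re_add_im c]
    simp only [add_smul, mul_smul, map_add, Complex.coe_smul, map_smul]
  rcases AddSubgroupClass.subset_union.mp hunion with h | h
  · refine .inl ⟨{ toFun := f, map_add' := map_add f, map_smul' := fun c x => ?_ }, fun _ => rfl⟩
    have hI : f (Complex.I • x) = Complex.I • f x := h (AddSubgroup.mem_top x)
    rw [hsmul, hI, RingHom.id_apply, smul_smul, ← add_smul, Complex.re_add_im]
  · refine .inr ⟨{ toFun := f, map_add' := map_add f, map_smul' := fun c x => ?_ }, fun _ => rfl⟩
    have hI : f (Complex.I • x) = -(Complex.I • f x) := h (AddSubgroup.mem_top x)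
    have hconj : conj c = c.re - c.im * Complex.I := Complex.ext (by simp) (by simp)
    rw [hsmul, hI, smul_neg, ← sub_eq_add_neg, smul_smul, ← sub_smul, hconj]

theorem eq_I_or_eq_neg_I {k : ℂ} (hk : ‖k‖ = 1) (hk' : ‖1 + k‖ = ‖1 + Complex.I‖) :
    k = Complex.I ∨ k = -Complex.I := by
  rw [← sq_eq_sq₀ (norm_nonneg _) (norm_nonneg _), Complex.sq_norm, Complex.sq_norm,
    Complex.normSq_apply, Complex.normSq_apply] at hk'
  rw [← pow_eq_one_iff_of_nonneg (norm_nonneg _) two_ne_zero, Complex.sq_norm,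
    Complex.normSq_apply] at hk
  simp only [Complex.add_re, Complex.one_re, Complex.add_im, Complex.one_im, Complex.I_re,
    Complex.I_im] at hk'
  have hre : k.re = 0 := by linarith
  rcases mul_self_eq_one_iff.mp (show k.im * k.im = 1 by simpa [hre] using hk) with him | him
  · exact .inl (Complex.ext hre him)
  · exact .inr (Complex.ext (by simp [hre]) (by simp [him]))

theorem symDyad_add_right (x y z : H) : symDyad x (y + z) = symDyad x y + symDyad x z := by
  ext u
  simp only [symDyad_apply, add_apply, inner_add_left]
  module

theorem symDyad_smul_right (x y : H) (r : ℝ) :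
    symDyad x ((r : ℂ) • y) = r • symDyad x y := by
  ext u
  simp only [symDyad_apply, smul_apply, inner_smul_left, Complex.conj_ofReal]
  module

theorem eq_of_symDyad_smodEq_symDyad {v a b : H} (hv : ‖v‖ = 1) (hva : ⟪v, a⟫_ℂ = 0)
    (hvb : ⟪v, b⟫_ℂ = 0) (h : symDyad v a ≡ symDyad v b [SMOD scalars]) : a = b := by
  obtain ⟨r, hr⟩ := smodEq_iff.mp h
  have hvv : ⟪v, v⟫_ℂ = 1 := by simp [inner_self_eq_norm_sq_to_K, hv]
  have hab : a = b + (r : ℂ) • v := by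
    simpa only [symDyad_apply, hvv, inner_eq_zero_symm.mp hva, inner_eq_zero_symm.mp hvb, one_smul,
      zero_smul, add_zero] using hr v
  have hr₀ : (r : ℂ) = 0 := by
    simpa only [hva, hvb, hvv, inner_add_right, inner_smul_right, zero_add, mul_one, eq_comm]
      using congrArg (inner ℂ v) hab
  rw [hab, hr₀, zero_smul, add_zero]

variable {ψ : SA H →+ SA H} {e v y w : H}

theorem dyad_eq_dyad_of_isDyadImage (hψ : IsCommPreserver ψ) (hH : 2 < Module.rank ℂ H)
    {x y v w : H} (hxv : IsDyadImage ψ x v) (hyw : IsDyadImage ψ y w) (h : dyad x = dyad y) :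
    dyad v = dyad w := by
  obtain ⟨z, hz, hxz, hyz⟩ := exists_norm_eq_one_inner_eq_zero_and hH x y
  simpa using smul_dyad_add_smul_dyad_congr hψ hH hxv hxv hyw hyw hz hxz hxz hyz hyz
    (t₁ := 1) (t₂ := 0) (t₃ := 1) (t₄ := 0) (by simpa using h)

theorem IsDyadImage.map_smul_symDyad {x y v w : H} (hx : IsDyadImage ψ x v)
    (hy : IsDyadImage ψ y w) (hxy : IsDyadImage ψ (x + y) (v + w)) (t : ℝ) :
    ψ (t • symDyad x y) ≡ t • symDyad v w [SMOD scalars] := by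
  simp only [symDyad, smul_sub, map_sub]
  exact ((hxy.map_smul_dyad t).sub (hx.map_smul_dyad t)).sub (hy.map_smul_dyad t)

namespace IsDirectionImage

theorem map_smul_symDyad (hev : IsDyadImage ψ e v) (h : IsDirectionImage ψ e v y w) (t : ℝ) :
    ψ (t • symDyad e y) ≡ t • symDyad v w [SMOD scalars] :=
  hev.map_smul_symDyad h.isDyadImage h.isDyadImage_add t

theorem eq_add (hv : ‖v‖ = 1) (hev : IsDyadImage ψ e v) (h : IsDirectionImage ψ e v y w)
    {y' w' w'' : H} (h' : IsDirectionImage ψ e v y' w')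
    (h'' : IsDirectionImage ψ e v (y + y') w'') : w'' = w + w' := by
  refine eq_of_symDyad_smodEq_symDyad hv h''.inner_eq_zero
    (by rw [inner_add_right, h.inner_eq_zero, h'.inner_eq_zero, add_zero]) ?_
  have hsum := (h.map_smul_symDyad hev 1).add (h'.map_smul_symDyad hev 1)
  rw [← map_add, ← smul_add, ← smul_add, ← symDyad_add_right, ← symDyad_add_right] at hsum
  simpa only [one_smul] using (h''.map_smul_symDyad hev 1).symm.trans hsum

theorem eq_smul (hv : ‖v‖ = 1) (hev : IsDyadImage ψ e v) (h : IsDirectionImage ψ e v y w) {r : ℝ}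
    {w' : H} (h' : IsDirectionImage ψ e v ((r : ℂ) • y) w') : w' = (r : ℂ) • w := by
  refine eq_of_symDyad_smodEq_symDyad hv h'.inner_eq_zero
    (by rw [inner_smul_right, h.inner_eq_zero, mul_zero]) ?_
  have hw' := h'.map_smul_symDyad hev 1
  rw [symDyad_smul_right, one_smul, one_smul] at hw'
  rw [symDyad_smul_right]
  exact hw'.symm.trans (h.map_smul_symDyad hev r)

theorem eq_I_smul_or_eq_neg (hψ : IsCommPreserver ψ) (hH : 2 < Module.rank ℂ H) (hv : ‖v‖ = 1)
    (hev : IsDyadImage ψ e v) (h : IsDirectionImage ψ e v y w) {w' w'' : H}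
    (h' : IsDirectionImage ψ e v (Complex.I • y) w')
    (h'' : IsDirectionImage ψ e v (y + Complex.I • y) w'') :
    w' = Complex.I • w ∨ w' = -(Complex.I • w) := by
  rcases eq_or_ne y 0 with rfl | hy
  · have hw : w = 0 := norm_eq_zero.mp (h.isDyadImage.norm_eq.trans norm_zero)
    have hw' : w' = 0 := norm_eq_zero.mp (h'.isDyadImage.norm_eq.trans (by simp))
    exact .inl (by rw [hw, hw', smul_zero])
  have hdyad : dyad w' = dyad w :=
    dyad_eq_dyad_of_isDyadImage hψ hH h'.isDyadImage h.isDyadImage (by simp [dyad_smul])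
  obtain ⟨k, hk, rfl⟩ := exists_eq_smul_of_dyad_eq hdyad
  have hnorm : ‖1 + k‖ * ‖w‖ = ‖1 + Complex.I‖ * ‖w‖ := by
    have := h''.isDyadImage.norm_eq
    have hadd (c : ℂ) (x : H) : x + c • x = (1 + c) • x := by rw [add_smul, one_smul]
    rwa [eq_add hv hev h h' h'', hadd, hadd, norm_smul, norm_smul, ← h.isDyadImage.norm_eq] at this
  rw [← neg_smul]
  exact (eq_I_or_eq_neg_I hk (mul_right_cancel₀ (norm_ne_zero_iff.mpr
    (h.isDyadImage.ne_zero hy)) hnorm)).imp (congrArg (· • w)) (congrArg (· • w))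

end IsDirectionImage

theorem exists_semilinear_isDirectionImage (hψ : IsCommPreserver ψ) (hH : 2 < Module.rank ℂ H)
    (hdy : ∀ x, ∃ w, IsDyadImage ψ x w) (he : ‖e‖ = 1) (hev : IsDyadImage ψ e v) :
    (∃ M : H →ₗ[ℂ] H, ∀ x, IsDirectionImage ψ e v (x - dyad e x) (M x)) ∨
      ∃ M : H →ₗ⋆[ℂ] H, ∀ x, IsDirectionImage ψ e v (x - dyad e x) (M x) := by
  have hv : ‖v‖ = 1 := hev.norm_eq.trans he
  have hee : ⟪e, e⟫_ℂ = 1 := by simp [inner_self_eq_norm_sq_to_K, he]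
  choose M hM using fun x => exists_isDirectionImage hψ hH hdy he hev (y := x - dyad e x)
    (by rw [inner_sub_right, dyad_apply, inner_smul_right, hee, mul_one, sub_self])
  have hadd (x y : H) : M (x + y) = M x + M y := by
    refine (hM x).eq_add hv hev (hM y) ?_
    convert hM (x + y) using 1
    rw [map_add]
    abel
  have hsmul (c : ℂ) (x : H) : c • (x - dyad e x) = c • x - dyad e (c • x) := by
    rw [map_smul, smul_sub]
  let f : H →ₗ[ℝ] H :=
    { toFun := M
      map_add' := hadd
      map_smul' := fun r x => (hM x).eq_smul hv hev (by
        rw [hsmul]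
        exact hM _) }
  refine (exists_linearMap_or_exists_conjLinearMap f fun x => ?_).imp
    (Exists.imp fun g hg x => ?_) (Exists.imp fun g hg x => ?_)
  · refine (hM x).eq_I_smul_or_eq_neg hψ hH hv hev (w'' := M (x + Complex.I • x)) ?_ ?_
    · rw [hsmul]
      exact hM _
    · rw [hsmul]
      convert hM (x + Complex.I • x) using 1
      rw [map_add]
      abel
  · exact (hg x).symm ▸ hM x
  · exact (hg x).symm ▸ hM x

end Semilinear

section Isometry

variable {σ : ℂ →+* ℂ} {ψ : SA H →+ SA H} {e v : H}

theorem isDyadImage_of_isDirectionImage [RingHomIsometric σ] {M : H →ₛₗ[σ] H}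
    (hM : ∀ x, IsDirectionImage ψ e v (x - dyad e x) (M x)) (x : H) :
    IsDyadImage ψ x (σ ⟪e, x⟫_ℂ • v + M x) := by
  rcases eq_or_ne ⟪e, x⟫_ℂ 0 with hex | hex
  · simpa [hex] using (hM x).isDyadImage
  set a : ℂ := ⟪e, x⟫_ℂ with ha
  have hσa : σ a ≠ 0 := (map_ne_zero σ).mpr hex
  have h := (hM (a⁻¹ • x)).isDyadImage_add.smul (RingHomIsometric.norm_map (σ := σ) (x := a))
  convert h using 1
  · rw [dyad_apply, inner_smul_right, ← ha, inv_mul_cancel₀ hex, one_smul, add_sub_cancel,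
      smul_inv_smul₀ hex]
  · rw [map_smulₛₗ, map_inv₀, smul_add, smul_inv_smul₀ hσa]

theorem exists_linearIsometry_of_isDirectionImage [RingHomIsometric σ] {M : H →ₛₗ[σ] H}
    (hM : ∀ x, IsDirectionImage ψ e v (x - dyad e x) (M x)) :
    ∃ U : H →ₛₗᵢ[σ] H, ∀ x, IsDyadImage ψ x (U x) :=
  ⟨{  toFun := fun x => σ ⟪e, x⟫_ℂ • v + M x
      map_add' := fun x y => by simp only [inner_add_right, map_add]; module
      map_smul' := fun c x => by
        simp only [inner_smul_right, map_mul, map_smulₛₗ, mul_smul, smul_add]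
      norm_map' := fun x => (isDyadImage_of_isDirectionImage hM x).norm_eq },
    isDyadImage_of_isDirectionImage hM⟩

theorem linearIsometry_surjective_of_isDyadImage [RingHomSurjective σ] (hψ : IsCommPreserver ψ)
    (hH : 1 < Module.rank ℂ H) {U : H →ₛₗᵢ[σ] H} (hU : ∀ x, IsDyadImage ψ x (U x)) :
    Function.Surjective U := by
  have hclosed : IsClosed (LinearMap.range U.toLinearMap : Set H) := by
    rw [LinearMap.coe_range]
    exact U.isometry.isClosedEmbedding.isClosed_range
  have := hclosed.completeSpace_coe
  suffices h : LinearMap.range U.toLinearMap = ⊤ from LinearMap.range_eq_top.mp h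
  rw [← Submodule.orthogonal_eq_bot_iff]
  by_contra hbot
  obtain ⟨w, hw, hw₀⟩ := Submodule.exists_mem_ne_zero_of_ne_bot hbot
  obtain ⟨A, hA⟩ := hψ.surjective (dyad w)
  have hcomm (x : H) : CommC A (dyad x) := by
    rw [← hψ.commC_map_iff, hA, ← one_smul ℝ (dyad x),
      commC_congr_right ((hU x).map_smul_dyad 1), AddMonoidHom.id_apply, one_smul]
    refine commC_dyad_iff.mpr ⟨0, ?_⟩
    have hwx : ⟪U x, w⟫_ℂ = 0 := hw _ ⟨x, rfl⟩
    rw [dyad_apply, inner_eq_zero_symm.mp hwx, zero_smul, Complex.ofReal_zero, zero_smul]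
  exact dyad_notMem_scalars hH hw₀ <| hA ▸
    hψ.map_mem_scalars_iff.mpr (mem_scalars_of_forall_commC_dyad hcomm)

theorem exists_linearIsometryEquiv_isDyadImage (hψ : IsCommPreserver ψ)
    (hH : 2 < Module.rank ℂ H) (hdy : ∀ x, ∃ w, IsDyadImage ψ x w) :
    (∃ U : H ≃ₗᵢ[ℂ] H, ∀ x, IsDyadImage ψ x (U x)) ∨
      ∃ U : H ≃ₗᵢ⋆[ℂ] H, ∀ x, IsDyadImage ψ x (U x) := by
  have hH₁ : 1 < Module.rank ℂ H := Cardinal.one_lt_two.trans hH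
  obtain ⟨e, he, -⟩ := exists_norm_eq_one_inner_eq_zero hH₁ (0 : H)
  obtain ⟨v, hev⟩ := hdy e
  rcases exists_semilinear_isDirectionImage hψ hH hdy he hev with ⟨M, hM⟩ | ⟨M, hM⟩
  · obtain ⟨U, hU⟩ := exists_linearIsometry_of_isDirectionImage hM
    exact .inl ⟨.ofSurjective U (linearIsometry_surjective_of_isDyadImage hψ hH₁ hU), hU⟩
  · obtain ⟨U, hU⟩ := exists_linearIsometry_of_isDirectionImage hM
    exact .inr ⟨.ofSurjective U (linearIsometry_surjective_of_isDyadImage hψ hH₁ hU), hU⟩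

end Isometry

section Conjugation

theorem ringHom_ofReal (σ : ℂ →+* ℂ) [RingHomIsometric σ] (r : ℝ) : σ r = r := by
  have hσ : Continuous σ :=
    (AddMonoidHomClass.isometry_of_norm σ fun _ => RingHomIsometric.norm_map).continuous
  rcases Complex.ringHom_eq_id_or_conj_of_continuous hσ with rfl | rfl
  · rfl
  · exact Complex.conj_ofReal r

theorem exists_inner_apply_sub_smul_eq_zero (A : SA H) (x : H) :
    ∃ a : ℝ, ⟪x, A x - (a : ℂ) • x⟫_ℂ = 0 := by
  rcases eq_or_ne x 0 with rfl | hx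
  · exact ⟨0, inner_zero_left _⟩
  have hre : ((⟪x, A x⟫_ℂ).re : ℂ) = ⟪x, A x⟫_ℂ :=
    Complex.conj_eq_iff_re.mp <| by rw [inner_conj_symm, inner_apply_left]
  refine ⟨(⟪x, A x⟫_ℂ).re / ‖x‖ ^ 2, ?_⟩
  have hx₀ : (‖x‖ : ℂ) ≠ 0 := Complex.ofReal_ne_zero.mpr (norm_ne_zero_iff.mpr hx)
  rw [inner_sub_right, inner_smul_right, inner_self_eq_norm_sq_to_K, Complex.ofReal_div, hre]
  simp [hx₀]

theorem symDyad_apply_self {x y : H} (hxy : ⟪x, y⟫_ℂ = 0) :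
    symDyad x y x = ((‖x‖ ^ 2 : ℝ) : ℂ) • y := by
  rw [symDyad_apply, inner_eq_zero_symm.mp hxy, zero_smul, add_zero, inner_self_eq_norm_sq_to_K]
  norm_cast

variable {σ : ℂ →+* ℂ} {ψ : SA H →+ SA H}

theorem exists_apply_eq_add_smul [RingHomIsometric σ] (hψ : IsCommPreserver ψ)
    (hH : 2 < Module.rank ℂ H) {U : H →ₛₗ[σ] H} (hU : ∀ x, IsDyadImage ψ x (U x)) (A : SA H)
    (x : H) : ∃ r : ℝ, ψ A (U x) = U (A x) + (r : ℂ) • U x := by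
  rcases eq_or_ne x 0 with rfl | hx
  · exact ⟨0, by simp⟩
  obtain ⟨a, ha⟩ := exists_inner_apply_sub_smul_eq_zero A x
  set z : H := A x - (a : ℂ) • x
  have hUz : ⟪U x, U z⟫_ℂ = 0 := ((hU x).inner_eq_zero_iff (hU z) hψ hH).mpr ha
  have hx₀ : (‖x‖ ^ 2 : ℝ) ≠ 0 := pow_ne_zero 2 (norm_ne_zero_iff.mpr hx)
  have hx₁ : (((‖x‖ ^ 2)⁻¹ : ℝ) : ℂ) * ((‖x‖ ^ 2 : ℝ) : ℂ) = 1 := by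
    rw [← Complex.ofReal_mul, inv_mul_cancel₀ hx₀, Complex.ofReal_one]
  -- `A - S` has `x` as an eigenvector, hence commutes with `dyad x`.
  let S : SA H := (‖x‖ ^ 2)⁻¹ • symDyad x z
  have hSx : S x = z := by rw [smul_apply, symDyad_apply_self ha, smul_smul, hx₁, one_smul]
  have hAS : (A - S) x = (a : ℂ) • x := by rw [sub_apply, hSx, sub_sub_cancel]
  obtain ⟨r, hr⟩ : ∃ r : ℝ, ψ (A - S) (U x) = (r : ℂ) • U x := by
    have h := (hψ.commC_map_iff _ _).mpr (commC_dyad_iff.mpr ⟨a, hAS⟩)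
    rw [← one_smul ℝ (dyad x), commC_congr_right ((hU x).map_smul_dyad 1)] at h
    exact commC_dyad_iff.mp (by simpa using h)
  obtain ⟨s, hs⟩ := smodEq_iff.mp <|
    (hU x).map_smul_symDyad (hU z) (map_add U x z ▸ hU (x + z)) (‖x‖ ^ 2)⁻¹
  have hψS : ψ S (U x) = U z + (s : ℂ) • U x := by
    rw [hs, smul_apply, symDyad_apply_self hUz, (hU x).norm_eq, smul_smul, hx₁, one_smul]
  have hUz' : U z = U (A x) - (a : ℂ) • U x := by rw [map_sub, map_smulₛₗ, ringHom_ofReal]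
  refine ⟨r + s - a, ?_⟩
  rw [← sub_add_cancel A S, map_add, add_apply, hr, hψS, hUz', Complex.ofReal_sub,
    Complex.ofReal_add, sub_add_cancel]
  module

variable {σ' : ℂ →+* ℂ} [RingHomInvPair σ σ'] [RingHomInvPair σ' σ]

theorem exists_addMonoidHom_forall_apply_eq [RingHomIsometric σ] (hψ : IsCommPreserver ψ)
    (hH : 2 < Module.rank ℂ H) {U : H ≃ₛₗᵢ[σ] H} (hU : ∀ x, IsDyadImage ψ x (U x)) :
    ∃ g : SA H →+ ℝ, ∀ A x, ψ A x = U (A (U.symm x)) + (g A : ℂ) • x := by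
  have : Nontrivial H := rank_pos_iff_nontrivial.mp (pos_of_gt hH)
  have hpt (A : SA H) (x : H) : ∃ r : ℝ, ψ A x - U (A (U.symm x)) = (r : ℂ) • x := by
    simpa [sub_eq_iff_eq_add'] using
      exists_apply_eq_add_smul hψ hH (U := U.toLinearEquiv.toLinearMap) hU A (U.symm x)
  have hex (A : SA H) : ∃ r : ℝ, ∀ x, ψ A x = U (A (U.symm x)) + (r : ℂ) • x := by
    obtain ⟨c, hc⟩ := exists_eq_smul_of_forall_exists_eq_smul (g := LinearMap.id)
      (f := ((ψ A : H →L[ℂ] H) : H →ₗ[ℂ] H) - U.toLinearEquiv.toLinearMap.comp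
        (((A : H →L[ℂ] H) : H →ₗ[ℂ] H).comp U.symm.toLinearEquiv.toLinearMap))
      fun x => (hpt A x).imp' _ fun _ => id
    replace hc (x : H) : ψ A x - U (A (U.symm x)) = c • x := LinearMap.congr_fun hc x
    obtain ⟨x, hx⟩ := exists_ne (0 : H)
    obtain ⟨r, hr⟩ := hpt A x
    have hcr : c = r := smul_left_injective ℂ hx ((hc x).symm.trans hr)
    exact ⟨r, fun x => by rw [← hcr, ← hc, add_sub_cancel]⟩
  choose g hg using hex
  refine ⟨AddMonoidHom.mk' g fun A B => ?_, hg⟩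
  obtain ⟨x, hx⟩ := exists_ne (0 : H)
  have hadd : (g (A + B) : ℂ) • x = ((g A + g B : ℝ) : ℂ) • x := by
    have h := hg (A + B) x
    rw [map_add, add_apply, hg, hg, add_apply, map_add] at h
    rw [Complex.ofReal_add]
    linear_combination (norm := module) -h
  exact_mod_cast smul_left_injective ℂ hx hadd

end Conjugation

end CommutativityPreserver

open CommutativityPreserver

theorem stmt1
    (hdim : 3 ≤ Module.rank ℂ H)
    (φ : selfAdjoint (H →L[ℂ] H) → selfAdjoint (H →L[ℂ] H))
    (hadd : ∀ A B : selfAdjoint (H →L[ℂ] H), φ (A + B) = φ A + φ B)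
    (hsurj : Function.Surjective φ)
    (hpres : ∀ A B : selfAdjoint (H →L[ℂ] H), CommC A B ↔ CommC (φ A) (φ B)) :
    ∃ c : ℝ, c ≠ 0 ∧ ∃ g : selfAdjoint (H →L[ℂ] H) → ℝ,
      (∀ A B : selfAdjoint (H →L[ℂ] H), g (A + B) = g A + g B) ∧
      ((∃ U : H ≃ₗᵢ[ℂ] H, ∀ (A : selfAdjoint (H →L[ℂ] H)) (x : H),
          (φ A : H →L[ℂ] H) x = (c : ℂ) • U ((A : H →L[ℂ] H) (U.symm x)) + (g A : ℂ) • x) ∨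
       (∃ U : H ≃ₗᵢ⋆[ℂ] H, ∀ (A : selfAdjoint (H →L[ℂ] H)) (x : H),
          (φ A : H →L[ℂ] H) x = (c : ℂ) • U ((A : H →L[ℂ] H) (U.symm x)) + (g A : ℂ) • x)) := by
  have hH : 2 < Module.rank ℂ H := lt_of_lt_of_le (by norm_num) hdim
  let Φ : SA H →+ SA H := AddMonoidHom.mk' φ hadd
  have hΦ : IsCommPreserver Φ := ⟨hsurj, fun A B => (hpres A B).symm⟩
  obtain ⟨c, hc, hdyad⟩ := hΦ.exists_isDyadImage_inv_smul hH
  have hψ : IsCommPreserver (c⁻¹ • Φ) := hΦ.smul (inv_ne_zero hc)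
  have hscale {A : SA H} {x y : H} {r : ℝ} (h : (c⁻¹ • Φ) A x = y + (r : ℂ) • x) :
      φ A x = (c : ℂ) • y + ((c * r : ℝ) : ℂ) • x := by
    rw [Complex.ofReal_mul, mul_smul, ← smul_add, ← h]
    exact congrArg (fun B : SA H => B x) (smul_inv_smul₀ hc (φ A)).symm
  refine ⟨c, hc, ?_⟩
  rcases exists_linearIsometryEquiv_isDyadImage hψ hH hdyad with ⟨U, hU⟩ | ⟨U, hU⟩
  · obtain ⟨g, hg⟩ := exists_addMonoidHom_forall_apply_eq hψ hH hU
    exact ⟨c • g, map_add (c • g), .inl ⟨U, fun A x => hscale (hg A x)⟩⟩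
  · obtain ⟨g, hg⟩ := exists_addMonoidHom_forall_apply_eq hψ hH hU
    exact ⟨c • g, map_add (c • g), .inr ⟨U, fun A x => hscale (hg A x)⟩⟩
end
end
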